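/- Let T be a scalar Calderón–Zygmund operator on ℝ^d with modulus of continuity ω satisfying the Dini condition, let ρ ∈ (2,∞), and assume V_ρ(T_*) is bounded on L^q(ℝ^d) for some q ∈ (1,∞). Define the (global) grand maximal truncated operator M_{V_ρ(T_*)} f(x) := sup over all cubes Q ⊂ ℝ^d containing x of esssup_{ξ∈Q} V_ρ(T_*(f χ_{ℝ^d∖3Q}))(ξ). Then M_{V_ρ(T_*)} is bounded on L^p(ℝ^d) for every p ∈ (1,q] and is of weak type (1,1). -/

import Mathlib

open MeasureTheory Set Filter Classical
open scoped ENNReal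
noncomputable section

abbrev Rd (d : ℕ) := EuclideanSpace ℝ (Fin d)

/-- An axis-parallel (half-open) cube in `ℝ^d`, given by its center and side length. -/
structure Cube (d : ℕ) where
  c : Fin d → ℝ
  l : ℝ
  hl : 0 < l

/-- The underlying (half-open) set of a cube. -/
def Cube.set {d : ℕ} (Q : Cube d) : Set (Rd d) :=
  {y | ∀ i, Q.c i - Q.l / 2 ≤ y i ∧ y i < Q.c i + Q.l / 2}

/-- The (half-open) set `tQ`, the cube concentric with `Q` of side length `t·ℓ(Q)`. -/
def Cube.dilate {d : ℕ} (Q : Cube d) (t : ℝ) : Set (Rd d) :=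
  {y | ∀ i, Q.c i - t * Q.l / 2 ≤ y i ∧ y i < Q.c i + t * Q.l / 2}

/-- The volume `|Q| = ℓ(Q)^d` of a cube, as an extended nonnegative real. -/
def Cube.vol {d : ℕ} (Q : Cube d) : ℝ≥0∞ := ENNReal.ofReal (Q.l ^ d)

/-- `Q` is one of the dyadic subcubes of `Q₀` obtained by repeated subdivision of `Q₀`
into `2^d` congruent subcubes. -/
def IsDyadicSubcube {d : ℕ} (Q₀ Q : Cube d) : Prop :=
  ∃ (k : ℕ) (m : Fin d → ℕ), (∀ i, m i < 2 ^ k) ∧ Q.l = Q₀.l / 2 ^ k ∧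
    ∀ i, Q.c i = Q₀.c i - Q₀.l / 2 + ((m i : ℝ) + 1 / 2) * (Q₀.l / 2 ^ k)
/-- A scalar Calderón–Zygmund operator on `ℝ^d` with Dini modulus of continuity:
a linear operator `T` bounded on `L²(ℝ^d)` associated with a kernel `K` satisfying the
size condition and the `ω`-smoothness condition, where `ω` is increasing, subadditive,
vanishes at `0`, and satisfies the Dini condition `∫₀¹ ω(t) dt/t < ∞`. -/
structure CZO (d : ℕ) where
  K : Rd d → Rd d → ℝ
  measK : Measurable (Function.uncurry K)
  ω : ℝ → ℝ
  Cst : ℝ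
  hCst : 0 < Cst
  ω_mono : MonotoneOn ω (Set.Ici 0)
  ω_zero : ω 0 = 0
  ω_subadd : ∀ s t : ℝ, 0 ≤ s → 0 ≤ t → ω (s + t) ≤ ω s + ω t
  dini : IntegrableOn (fun t => ω t / t) (Set.Ioo (0 : ℝ) 1)
  size : ∀ x y : Rd d, x ≠ y → |K x y| ≤ Cst / dist x y ^ d
  smooth : ∀ x x' y : Rd d, x ≠ y → dist x x' ≤ dist x y / 2 →
    |K x y - K x' y| + |K y x - K y x'| ≤ Cst * ω (dist x x' / dist x y) / dist x y ^ d
  T : Lp ℝ 2 (volume : Measure (Rd d)) →L[ℝ] Lp ℝ 2 (volume : Measure (Rd d))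
  assoc : ∀ f : Lp ℝ 2 (volume : Measure (Rd d)),
    ∀ᵐ x ∂(volume : Measure (Rd d)), x ∉ tsupport (f : Rd d → ℝ) →
      (T f : Rd d → ℝ) x = ∫ y, K x y * f y

/-- The truncated singular integral `T_ε f(x) = ∫_{|x-y|>ε} K(x,y) f(y) dy`. -/
def CZO.trunc {d : ℕ} (S : CZO d) (ε : ℝ) (f : Rd d → ℝ) (x : Rd d) : ℝ :=
  ∫ y in {y : Rd d | ε < dist x y}, S.K x y * f y

/-- The variation operator `V_ρ(T_* f)(x)`, with values in `[0,∞]`: the supremum over all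
strictly decreasing positive sequences `ε_i → 0` of `(Σ_i |T_{ε_{i+1}}f(x) - T_{ε_i}f(x)|^ρ)^{1/ρ}`. -/
def CZO.var {d : ℕ} (S : CZO d) (ρ : ℝ) (f : Rd d → ℝ) (x : Rd d) : ℝ≥0∞ :=
  ⨆ (ε : ℕ → ℝ) (_ : StrictAnti ε ∧ (∀ i, 0 < ε i) ∧ Tendsto ε atTop (nhds 0)),
    (∑' i : ℕ, ENNReal.ofReal |S.trunc (ε (i + 1)) f x - S.trunc (ε i) f x| ^ ρ) ^ (1 / ρ)

/-- `V_ρ(T_*)` is bounded on `L^q(ℝ^d)`. -/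
def CZO.VarBdd {d : ℕ} (S : CZO d) (ρ q : ℝ) : Prop :=
  ∃ A : ℝ, 0 < A ∧ ∀ f : Rd d → ℝ, Measurable f →
    ∫⁻ x, S.var ρ f x ^ q ∂volume ≤ ENNReal.ofReal A * ∫⁻ x, ENNReal.ofReal |f x| ^ q ∂volume

/-- The weak `(1,1)` operator (quasi-)norm `‖V_ρ(T_*)‖_{L¹ → L^{1,∞}}`. -/
def CZO.weak11Norm {d : ℕ} (S : CZO d) (ρ : ℝ) : ℝ≥0∞ :=
  sInf {A : ℝ≥0∞ | ∀ f : Rd d → ℝ, Measurable f → ∀ t : ℝ, 0 < t →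
    ENNReal.ofReal t * volume {x | ENNReal.ofReal t < S.var ρ f x} ≤
      A * ∫⁻ x, ENNReal.ofReal |f x| ∂volume}

/-- The local grand maximal truncated operator `M_{V_ρ(T_*),Q₀}`. -/
def CZO.grandMaxLoc {d : ℕ} (S : CZO d) (ρ : ℝ) (Q₀ : Cube d) (f : Rd d → ℝ) (x : Rd d) : ℝ≥0∞ :=
  if x ∈ Q₀.set then
    ⨆ (Q : Cube d) (_ : x ∈ Q.set ∧ Q.set ⊆ Q₀.set),
      essSup (fun ξ => S.var ρ ((Q₀.dilate 3 \ Q.dilate 3).indicator f) ξ)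
        (volume.restrict Q.set)
  else 0

/-- The (global) grand maximal truncated operator `M_{V_ρ(T_*)}`. -/
def CZO.grandMax {d : ℕ} (S : CZO d) (ρ : ℝ) (f : Rd d → ℝ) (x : Rd d) : ℝ≥0∞ :=
  ⨆ (Q : Cube d) (_ : x ∈ Q.set),
    essSup (fun ξ => S.var ρ (((Q.dilate 3)ᶜ).indicator f) ξ) (volume.restrict Q.set)

/-- The Hardy–Littlewood maximal operator over cubes, with values in `[0,∞]`. -/
def maxCube {d : ℕ} (f : Rd d → ℝ) (x : Rd d) : ℝ≥0∞ :=
  ⨆ (Q : Cube d) (_ : x ∈ Q.set), Q.vol⁻¹ * ∫⁻ y in Q.set, ENNReal.ofReal |f y|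

/-- The average `⟨|f|⟩_{3Q} = (1/|3Q|) ∫_{3Q} |f|`. -/
def avg3 {d : ℕ} (Q : Cube d) (f : Rd d → ℝ) : ℝ :=
  (∫ y in Q.dilate 3, |f y|) / (3 * Q.l) ^ d
/-- The Euclidean norm of a vector in `ℝ^n`. -/
def enorm' {n : ℕ} (v : Fin n → ℝ) : ℝ := Real.sqrt (∑ i, v i ^ 2)

/-- The operator norm (with respect to Euclidean norms) of an `n × n` real matrix. -/
def matOpNorm {n : ℕ} (A : Matrix (Fin n) (Fin n) ℝ) : ℝ :=
  sSup ((fun v => enorm' (A.mulVec v)) '' {v | enorm' v ≤ 1})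

/-- The spectral power `A^s` of a symmetric matrix `A = U D Uᵗ`, defined as `U D^s Uᵗ`
(junk value `A` if `A` is not symmetric). -/
def Matrix.rpowH {n : ℕ} (A : Matrix (Fin n) (Fin n) ℝ) (s : ℝ) : Matrix (Fin n) (Fin n) ℝ :=
  if h : A.IsHermitian then
    (h.eigenvectorUnitary : Matrix (Fin n) (Fin n) ℝ) *
      Matrix.diagonal (fun i => h.eigenvalues i ^ s) *
      star (h.eigenvectorUnitary : Matrix (Fin n) (Fin n) ℝ)
  else A

/-- A matrix weight on `ℝ^d`: a measurable function with a.e. symmetric positive definite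
values whose operator norm is locally integrable. -/
structure MatrixWeight (d n : ℕ) where
  W : Rd d → Matrix (Fin n) (Fin n) ℝ
  meas : ∀ i j, Measurable fun x => W x i j
  pd : ∀ᵐ x : Rd d, (W x).PosDef
  locInt : LocallyIntegrable (fun x => matOpNorm (W x)) (volume : Measure (Rd d))

/-- The matrix `A_p` characteristic `[W]_{A_p}`. -/
def MatrixWeight.apConst {d n : ℕ} (W : MatrixWeight d n) (p : ℝ) : ℝ≥0∞ :=
  ⨆ Q : Cube d, Q.vol⁻¹ * ∫⁻ x in Q.set,
    (Q.vol⁻¹ * ∫⁻ t in Q.set,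
        ENNReal.ofReal (matOpNorm ((W.W x).rpowH (1 / p) * (W.W t).rpowH (-(1 / p))))
          ^ (p / (p - 1))) ^ (p - 1)

/-- The norm of `f` in `L^p(W)`. -/
def MatrixWeight.wNorm {d n : ℕ} (W : MatrixWeight d n) (p : ℝ)
    (f : Rd d → Fin n → ℝ) : ℝ≥0∞ :=
  (∫⁻ x, ENNReal.ofReal (enorm' (((W.W x).rpowH (1 / p)).mulVec (f x))) ^ p) ^ (1 / p)

/-- The Euclidean length `|V_ρ(T_{n,*} f⃗)(x)|` of the componentwise variation vector
(with values in `[0,∞]`). -/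
def CZO.varVecNorm {d : ℕ} (n : ℕ) (S : CZO d) (ρ : ℝ) (f : Rd d → Fin n → ℝ)
    (x : Rd d) : ℝ≥0∞ :=
  (∑ j : Fin n, S.var ρ (fun y => f y j) x ^ (2 : ℝ)) ^ ((1 : ℝ) / 2)

/-- An `η`-sparse family of cubes. -/
def IsSparse {d : ℕ} (η : ℝ) (F : Set (Cube d)) : Prop :=
  ∃ E : Cube d → Set (Rd d),
    (∀ Q ∈ F, E Q ⊆ Q.set ∧ MeasurableSet (E Q) ∧ ENNReal.ofReal η * Q.vol ≤ volume (E Q)) ∧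
    F.PairwiseDisjoint E

/-- The convex body average `⟨⟨f⃗⟩⟩_{tQ}` of a vector-valued function over the cube `tQ`. -/
def convexBodyAvg {d n : ℕ} (f : Rd d → Fin n → ℝ) (Q : Cube d) (t : ℝ) :
    Set (Fin n → ℝ) :=
  {v | ∃ φ : Rd d → ℝ, Measurable φ ∧ (∀ y, |φ y| ≤ 1) ∧
    ∀ j, v j = (∫ y in Q.dilate t, φ y * f y j) / (t * Q.l) ^ d}

namespace GM

theorem volume_box {d : ℕ} (a : Fin d → ℝ) (s : ℝ) (hs : 0 ≤ s) :
    volume {y : Rd d | ∀ i, a i ≤ y i ∧ y i < a i + s} = ENNReal.ofReal (s ^ d) := by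
  have h := (EuclideanSpace.volume_preserving_symm_measurableEquiv_toLp (Fin d)).symm
  have h2 : {y : Rd d | ∀ i, a i ≤ y i ∧ y i < a i + s} =
      (MeasurableEquiv.toLp 2 (Fin d → ℝ)).symm ⁻¹'
        (Set.pi univ fun i => Ico (a i) (a i + s)) := by
    ext y
    simp [Set.mem_pi]
  rw [h2, (EuclideanSpace.volume_preserving_symm_measurableEquiv_toLp (Fin d)).measure_preimage
    (MeasurableSet.univ_pi fun i => measurableSet_Ico).nullMeasurableSet, volume_pi_pi]
  simp [Real.volume_Ico, ENNReal.ofReal_pow hs]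

theorem measurableSet_box {d : ℕ} (a b : Fin d → ℝ) :
    MeasurableSet {y : Rd d | ∀ i, a i ≤ y i ∧ y i < b i} := by
  simp only [ofPred_forall]
  refine MeasurableSet.iInter fun i => ?_
  have : Measurable (fun y : Rd d => y i) := by fun_prop
  exact (measurableSet_le measurable_const this).inter (measurableSet_lt this measurable_const)

theorem cube_meas {d : ℕ} (Q : Cube d) : MeasurableSet Q.set := measurableSet_box _ _
theorem dil_meas {d : ℕ} (Q : Cube d) (t : ℝ) : MeasurableSet (Q.dilate t) := measurableSet_box _ _

theorem cube_vol {d : ℕ} (Q : Cube d) : volume Q.set = ENNReal.ofReal (Q.l ^ d) := by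
  rw [← volume_box (fun i => Q.c i - Q.l / 2) Q.l Q.hl.le]
  congr 1; ext y
  simp only [Cube.set, mem_ofPred_eq]
  refine forall_congr' fun i => ?_
  rw [show Q.c i - Q.l / 2 + Q.l = Q.c i + Q.l / 2 by ring]

theorem dil_vol {d : ℕ} (Q : Cube d) : volume (Q.dilate 3) = ENNReal.ofReal ((3 * Q.l) ^ d) := by
  rw [← volume_box (fun i => Q.c i - 3 * Q.l / 2) (3 * Q.l) (by linarith [Q.hl])]
  congr 1; ext y
  simp only [Cube.dilate, mem_ofPred_eq]
  refine forall_congr' fun i => ?_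
  rw [show Q.c i - 3 * Q.l / 2 + 3 * Q.l = Q.c i + 3 * Q.l / 2 by ring]

theorem dist_le_of_coord {d : ℕ} (x y : Rd d) (s : ℝ) (hs : 0 ≤ s) (h : ∀ i, |x i - y i| ≤ s) :
    dist x y ≤ Real.sqrt d * s := by
  rw [EuclideanSpace.dist_eq]
  have : ∑ i, dist (x i) (y i) ^ 2 ≤ d * s ^ 2 := by
    calc ∑ i, dist (x i) (y i) ^ 2 ≤ ∑ _i : Fin d, s ^ 2 :=
          Finset.sum_le_sum fun i _ => by
            rw [Real.dist_eq]; exact pow_le_pow_left₀ (abs_nonneg _) (h i) 2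
      _ = d * s ^ 2 := by simp
  calc Real.sqrt (∑ i, dist (x i) (y i) ^ 2) ≤ Real.sqrt (d * s ^ 2) := Real.sqrt_le_sqrt this
    _ = Real.sqrt d * s := by
      rw [Real.sqrt_mul (Nat.cast_nonneg d), Real.sqrt_sq hs]

theorem coord_le_dist {d : ℕ} (x y : Rd d) (i : Fin d) : |x i - y i| ≤ dist x y := by
  have := PiLp.norm_apply_le (x - y) i
  rw [dist_eq_norm]; simpa using this

theorem cube_dist {d : ℕ} (Q : Cube d) {x y : Rd d} (hx : x ∈ Q.set) (hy : y ∈ Q.set) :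
    dist x y ≤ Real.sqrt d * Q.l := by
  refine dist_le_of_coord x y _ Q.hl.le fun i => ?_
  have h1 := hx i; have h2 := hy i
  rw [abs_le]; constructor <;> linarith

theorem dil_dist {d : ℕ} (Q : Cube d) {x y : Rd d} (hx : x ∈ Q.set) (hy : y ∈ Q.dilate 3) :
    dist x y ≤ Real.sqrt d * (2 * Q.l) := by
  refine dist_le_of_coord x y _ (by linarith [Q.hl]) fun i => ?_
  have h1 := hx i; have h2 := hy i
  rw [abs_le]; constructor <;> linarith

theorem far_dist {d : ℕ} (Q : Cube d) {x y : Rd d} (hx : x ∈ Q.set) (hy : y ∉ Q.dilate 3) :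
    Q.l ≤ dist x y := by
  simp only [Cube.dilate, mem_ofPred_eq, not_forall] at hy
  obtain ⟨i, hi⟩ := hy
  refine le_trans ?_ (coord_le_dist x y i)
  have h1 := hx i
  rw [not_and_or, not_le, not_lt] at hi
  rcases hi with h | h
  · rw [le_abs]; left; linarith
  · rw [le_abs]; right; linarith

theorem lintegral_radial {d : ℕ} (hd : 0 < d) (F : ℝ → ℝ≥0∞) (hF : Measurable F) :
    ∫⁻ z : Rd d, F ‖z‖ = (d * volume (Metric.ball (0 : Rd d) 1)) *
      ∫⁻ r in Ioi (0 : ℝ), ENNReal.ofReal (r ^ (d - 1)) * F r := by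
  have : Nonempty (Fin d) := ⟨⟨0, hd⟩⟩
  have : Nontrivial (Rd d) := by infer_instance
  have hdim : Module.finrank ℝ (Rd d) = d := by simp
  calc ∫⁻ z : Rd d, F ‖z‖
      = ∫⁻ z : ({(0 : Rd d)}ᶜ : Set (Rd d)), F ‖z.1‖ ∂((volume : Measure (Rd d)).comap Subtype.val) := by
        rw [lintegral_subtype_comap (measurableSet_singleton _).compl (fun z : Rd d => F ‖z‖),
          restrict_compl_singleton]
    _ = ∫⁻ z, F z.2 ∂(volume : Measure (Rd d)).toSphere.prod
          (.volumeIoiPow (Module.finrank ℝ (Rd d) - 1)) := by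
        simpa using (volume : Measure (Rd d)).measurePreserving_homeomorphUnitSphereProd.lintegral_comp_emb
          (Homeomorph.measurableEmbedding _) (F ∘ Subtype.val ∘ Prod.snd)
    _ = _ := by
        rw [lintegral_prod _ (by fun_prop)]
        simp only [lintegral_const]
        rw [Measure.toSphere_apply_univ, hdim, mul_comm]
        congr 1
        rw [Measure.volumeIoiPow, lintegral_withDensity_eq_lintegral_mul _ (by fun_prop) (by fun_prop)]
        simp only [Pi.mul_apply]
        rw [lintegral_subtype_comap measurableSet_Ioi
          (fun r : ℝ => ENNReal.ofReal (r ^ (d - 1)) * F r)]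

theorem lintegral_radial_dist {d : ℕ} (hd : 0 < d) (c : Rd d) (F : ℝ → ℝ≥0∞) (hF : Measurable F) :
    ∫⁻ z : Rd d, F (dist c z) = (d * volume (Metric.ball (0 : Rd d) 1)) *
      ∫⁻ r in Ioi (0 : ℝ), ENNReal.ofReal (r ^ (d - 1)) * F r := by
  rw [← lintegral_radial hd F hF, ← lintegral_sub_right_eq_self (fun z : Rd d => F ‖z‖) c]
  simp only [dist_eq_norm, norm_sub_rev]

/-- one dimensional singular integral -/
theorem oneD_sing (R : ℝ) (hR : 0 < R) :
    ∫⁻ r in Ioo (0 : ℝ) (2 * R), (ENNReal.ofReal |r - R|) ^ (-(1/2) : ℝ) ≤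
      4 * ENNReal.ofReal (R ^ (1/2 : ℝ)) := by
  have key : ∫⁻ s in Ioc (0 : ℝ) R, (ENNReal.ofReal s) ^ (-(1/2) : ℝ) = 2 * ENNReal.ofReal (R ^ (1/2 : ℝ)) := by
    have h1 : ∫⁻ s in Ioc (0 : ℝ) R, (ENNReal.ofReal s) ^ (-(1/2) : ℝ) =
        ∫⁻ s in Ioc (0 : ℝ) R, ENNReal.ofReal (s ^ (-(1/2) : ℝ)) := by
      refine setLIntegral_congr_fun measurableSet_Ioc fun s hs => ?_
      exact ENNReal.ofReal_rpow_of_pos hs.1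
    rw [h1, ← ofReal_integral_eq_lintegral_ofReal]
    · rw [← intervalIntegral.integral_of_le hR.le, integral_rpow (by left; norm_num)]
      norm_num
      rw [div_eq_mul_inv, ENNReal.ofReal_mul (by positivity), mul_comm]; simp
    · exact (intervalIntegral.intervalIntegrable_rpow' (by norm_num)).1
    · filter_upwards [ae_restrict_mem measurableSet_Ioc] with s hs
      exact Real.rpow_nonneg hs.1.le _
  have hsub : Ioo (0 : ℝ) (2 * R) ⊆ Ioc R (2 * R) ∪ Ico 0 R ∪ {R} := by
    intro r hr
    rcases lt_trichotomy r R with h | h | h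
    · left; right; exact ⟨hr.1.le, h⟩
    · right; exact h
    · left; left; exact ⟨h, hr.2.le⟩
  have hA : ∫⁻ r in Ioc R (2 * R), (ENNReal.ofReal |r - R|) ^ (-(1/2) : ℝ) =
      2 * ENNReal.ofReal (R ^ (1/2 : ℝ)) := by
    rw [← key, ← lintegral_indicator measurableSet_Ioc, ← lintegral_indicator measurableSet_Ioc,
      ← lintegral_sub_right_eq_self ((Ioc 0 R).indicator fun s : ℝ => (ENNReal.ofReal s) ^ (-(1/2) : ℝ)) R]
    congr 1; ext r
    by_cases h : r ∈ Ioc R (2 * R)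
    · rw [indicator_of_mem h, indicator_of_mem (by constructor <;> linarith [h.1, h.2]),
        abs_of_pos (by linarith [h.1])]
    · rw [indicator_of_notMem h, indicator_of_notMem]
      intro h'; exact h ⟨by linarith [h'.1], by linarith [h'.2]⟩
  have hB : ∫⁻ r in Ico 0 R, (ENNReal.ofReal |r - R|) ^ (-(1/2) : ℝ) =
      2 * ENNReal.ofReal (R ^ (1/2 : ℝ)) := by
    rw [← key, ← lintegral_indicator measurableSet_Ico, ← lintegral_indicator measurableSet_Ioc,
      ← lintegral_sub_left_eq_self ((Ioc 0 R).indicator fun s : ℝ => (ENNReal.ofReal s) ^ (-(1/2) : ℝ)) R]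
    congr 1; ext r
    by_cases h : r ∈ Ico 0 R
    · rw [indicator_of_mem h, indicator_of_mem (by constructor <;> linarith [h.1, h.2]),
        abs_of_neg (by linarith [h.2])]; simp
    · rw [indicator_of_notMem h, indicator_of_notMem]
      intro h'; exact h ⟨by linarith [h'.2], by linarith [h'.1]⟩
  calc _ ≤ ∫⁻ r in Ioc R (2 * R) ∪ Ico 0 R ∪ {R}, (ENNReal.ofReal |r - R|) ^ (-(1/2) : ℝ) :=
        lintegral_mono_set hsub
    _ ≤ _ := lintegral_union_le _ _ _
    _ ≤ _ := add_le_add (lintegral_union_le _ _ _) le_rfl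
    _ = 4 * ENNReal.ofReal (R ^ (1/2 : ℝ)) := by
        rw [hA, hB]; simp
        ring

theorem shell (d : ℕ) (hd : 0 < d) : ∃ C : ℝ≥0∞, C ≠ ∞ ∧ ∀ (R : ℝ), 0 < R → ∀ ξ : Rd d,
    ∫⁻ y in {y : Rd d | dist ξ y < 2 * R}, (ENNReal.ofReal |dist ξ y - R|) ^ (-(1/2) : ℝ) ≤
      C * ENNReal.ofReal (R ^ ((d : ℝ) - 1/2)) := by
  refine ⟨(d * volume (Metric.ball (0 : Rd d) 1)) * (ENNReal.ofReal (2 ^ (d - 1)) * 4), ?_, ?_⟩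
  · refine ENNReal.mul_ne_top (ENNReal.mul_ne_top (by simp) measure_ball_lt_top.ne)
      (ENNReal.mul_ne_top (by simp) (by simp))
  intro R hR ξ
  have hm : MeasurableSet {y : Rd d | dist ξ y < 2 * R} :=
    measurableSet_lt (by fun_prop) measurable_const
  rw [← lintegral_indicator hm]
  have h1 : ∀ y : Rd d, ({y : Rd d | dist ξ y < 2 * R}.indicator
      (fun y => (ENNReal.ofReal |dist ξ y - R|) ^ (-(1/2) : ℝ))) y =
      ((Iio (2 * R)).indicator fun r => (ENNReal.ofReal |r - R|) ^ (-(1/2) : ℝ)) (dist ξ y) := by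
    intro y; simp [indicator]
  simp_rw [h1]
  have hmeas : Measurable fun r : ℝ => (ENNReal.ofReal |r - R|) ^ (-(1/2) : ℝ) := by fun_prop
  rw [lintegral_radial_dist hd ξ _ (hmeas.indicator measurableSet_Iio), mul_assoc (↑d * volume (Metric.ball (0 : Rd d) 1))]
  refine mul_le_mul' le_rfl ?_
  calc ∫⁻ r in Ioi (0 : ℝ), ENNReal.ofReal (r ^ (d - 1)) *
        ((Iio (2 * R)).indicator fun r => (ENNReal.ofReal |r - R|) ^ (-(1/2) : ℝ)) r
      ≤ ∫⁻ r in Ioi (0 : ℝ), ENNReal.ofReal ((2 * R) ^ (d - 1)) *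
        ((Iio (2 * R)).indicator fun r => (ENNReal.ofReal |r - R|) ^ (-(1/2) : ℝ)) r := by
        refine setLIntegral_mono' measurableSet_Ioi fun r hr => ?_
        by_cases h : r ∈ Iio (2 * R)
        · gcongr
          · exact le_of_lt hr
          · exact le_of_lt h
        · rw [indicator_of_notMem h]; simp
    _ = ENNReal.ofReal ((2 * R) ^ (d - 1)) *
        ∫⁻ r in Ioo (0 : ℝ) (2 * R), (ENNReal.ofReal |r - R|) ^ (-(1/2) : ℝ) := by
        rw [lintegral_const_mul _ (hmeas.indicator measurableSet_Iio),
          setLIntegral_indicator measurableSet_Iio, inter_comm, Ioi_inter_Iio]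
    _ ≤ ENNReal.ofReal ((2 * R) ^ (d - 1)) * (4 * ENNReal.ofReal (R ^ (1/2 : ℝ))) := by
        gcongr; exact oneD_sing R hR
    _ = _ := by
        have : (R : ℝ) ^ ((d : ℝ) - 1/2) = R ^ (d - 1) * R ^ (1/2 : ℝ) := by
          rw [← Real.rpow_natCast R (d-1), ← Real.rpow_add hR, Nat.cast_sub hd]
          congr 1; push_cast; ring
        rw [this, mul_pow, ENNReal.ofReal_mul (by positivity), ENNReal.ofReal_mul (by positivity)]
        ring

theorem dini_radial (d : ℕ) (hd : 0 < d) (φ : ℝ → ℝ) (hφ : Measurable φ) (c : Rd d) (r : ℝ)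
    (hr : 0 < r) :
    ∫⁻ y in {y : Rd d | r < dist c y}, ENNReal.ofReal (φ (r / dist c y) / dist c y ^ d) ≤
      (d * volume (Metric.ball (0 : Rd d) 1)) *
        ∫⁻ t in Ioo (0 : ℝ) 1, ENNReal.ofReal (φ t / t) := by
  have hm : MeasurableSet {y : Rd d | r < dist c y} :=
    measurableSet_lt measurable_const (by fun_prop)
  rw [← lintegral_indicator hm]
  have h1 : ∀ y : Rd d, ({y : Rd d | r < dist c y}.indicator
      (fun y => ENNReal.ofReal (φ (r / dist c y) / dist c y ^ d))) y =
      ((Ioi r).indicator fun s => ENNReal.ofReal (φ (r / s) / s ^ d)) (dist c y) := by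
    intro y; simp [indicator]
  simp_rw [h1]
  have hmeas : Measurable fun s : ℝ => ENNReal.ofReal (φ (r / s) / s ^ d) := by fun_prop
  rw [lintegral_radial_dist hd c _ (hmeas.indicator measurableSet_Ioi)]
  refine mul_le_mul' le_rfl ?_
  have h2 : Ioo (0 : ℝ) 1 = (fun s => r / s) '' (Ioi r) := by
    ext t
    constructor
    · intro ht
      refine ⟨r / t, ?_, ?_⟩
      · simp only [mem_Ioi]; rw [lt_div_iff₀ ht.1]; nlinarith [ht.2]
      · have := ht.1; field_simp
    · rintro ⟨s, hs, rfl⟩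
      have : 0 < s := hr.trans hs
      exact ⟨by positivity, by rw [div_lt_one this]; exact hs⟩
  have hder : ∀ s ∈ Ioi r, HasDerivWithinAt (fun s => r / s) (-(r / s ^ 2)) (Ioi r) s := by
    intro s hs
    have hs0 : s ≠ 0 := (hr.trans hs).ne'
    have := ((hasDerivAt_inv hs0).const_mul r).hasDerivWithinAt (s := Ioi r)
    refine this.congr_deriv ?_
    field_simp
  have hinj : InjOn (fun s => r / s) (Ioi r) := by
    intro a ha b hb hab
    have ha0 : a ≠ 0 := (hr.trans ha).ne'
    have hb0 : b ≠ 0 := (hr.trans hb).ne'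
    simp only at hab
    rw [div_eq_div_iff ha0 hb0] at hab
    exact (mul_left_cancel₀ hr.ne' hab).symm
  rw [h2, lintegral_image_eq_lintegral_abs_deriv_mul measurableSet_Ioi hder hinj]
  have h3 : ∀ s : ℝ, ENNReal.ofReal (s ^ (d - 1)) *
      (Ioi r).indicator (fun s => ENNReal.ofReal (φ (r / s) / s ^ d)) s =
      (Ioi r).indicator (fun s => ENNReal.ofReal (s ^ (d - 1)) *
        ENNReal.ofReal (φ (r / s) / s ^ d)) s := by
    intro s; simp only [indicator]; split_ifs <;> simp
  simp_rw [h3]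
  rw [setLIntegral_indicator measurableSet_Ioi]
  have h4 : Ioi r ∩ Ioi 0 = Ioi r := by
    rw [inter_eq_left]; exact Ioi_subset_Ioi hr.le
  rw [h4]
  refine setLIntegral_mono' measurableSet_Ioi fun s hs => ?_
  have hs0 : 0 < s := hr.trans hs
  rw [← ENNReal.ofReal_mul (by positivity), ← ENNReal.ofReal_mul (by positivity)]
  apply ENNReal.ofReal_le_ofReal
  apply le_of_eq
  rw [abs_neg, abs_of_pos (by positivity)]
  obtain ⟨k, rfl⟩ : ∃ k, d = k + 1 := ⟨d - 1, by omega⟩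
  simp only [Nat.add_sub_cancel]
  field_simp
  ring

end GM

namespace GM

/-- dyadic cube of generation n containing y -/
def Dy {d : ℕ} (n : ℤ) (k : Fin d → ℤ) : Set (Rd d) := {z | ∀ i, ⌊z i * (2:ℝ) ^ n⌋ = k i}

def fl {d : ℕ} (n : ℤ) (y : Rd d) : Fin d → ℤ := fun i => ⌊y i * (2:ℝ) ^ n⌋

theorem Dy_eq {d : ℕ} (n : ℤ) (k : Fin d → ℤ) : Dy n k =
    {y : Rd d | ∀ i, (k i * (2:ℝ) ^ (-n)) ≤ y i ∧ y i < k i * (2:ℝ) ^ (-n) + (2:ℝ) ^ (-n)} := by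
  ext y
  simp only [Dy, mem_ofPred_eq, Int.floor_eq_iff]
  refine forall_congr' fun i => ?_
  have h2 : (0:ℝ) < 2 ^ n := by positivity
  rw [zpow_neg]
  constructor
  · rintro ⟨h, h'⟩
    constructor
    · rw [← div_eq_mul_inv, div_le_iff₀ h2]; exact h
    · have : (k i : ℝ) * (2 ^ n)⁻¹ + (2 ^ n)⁻¹ = (k i + 1) / 2 ^ n := by field_simp
      rw [this, lt_div_iff₀ h2]; exact h'
  · rintro ⟨h, h'⟩
    constructor
    · rwa [← div_eq_mul_inv, div_le_iff₀ h2] at h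
    · have : (k i : ℝ) * (2 ^ n)⁻¹ + (2 ^ n)⁻¹ = (k i + 1) / 2 ^ n := by field_simp
      rwa [this, lt_div_iff₀ h2] at h'

theorem Dy_meas {d : ℕ} (n : ℤ) (k : Fin d → ℤ) : MeasurableSet (Dy n k) := by
  rw [Dy_eq]; exact measurableSet_box _ _

theorem Dy_vol {d : ℕ} (n : ℤ) (k : Fin d → ℤ) :
    volume (Dy n k) = ENNReal.ofReal (((2:ℝ) ^ (-n)) ^ d) := by
  rw [Dy_eq, volume_box (fun i => k i * (2:ℝ) ^ (-n)) _ (by positivity)]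

theorem mem_Dy_fl {d : ℕ} (n : ℤ) (y : Rd d) : y ∈ Dy n (fl n y) := fun _ => rfl

theorem Dy_dist {d : ℕ} {n : ℤ} {k : Fin d → ℤ} {x y : Rd d} (hx : x ∈ Dy n k) (hy : y ∈ Dy n k) :
    dist x y ≤ Real.sqrt d * (2:ℝ) ^ (-n) := by
  rw [Dy_eq] at hx hy
  refine dist_le_of_coord x y _ (by positivity) fun i => ?_
  have h1 := hx i; have h2 := hy i
  rw [abs_le]; constructor <;> linarith

theorem fl_coarse {d : ℕ} {m n : ℤ} (hmn : m ≤ n) {x y : Rd d} (h : fl n x = fl n y) :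
    fl m x = fl m y := by
  obtain ⟨j, rfl⟩ : ∃ j : ℕ, n = m + j := ⟨(n - m).toNat, by omega⟩
  funext i
  have key : ∀ z : Rd d, fl m z i = fl (m + j) z i / ((2 ^ j : ℕ) : ℤ) := by
    intro z
    simp only [fl]
    rw [← Int.floor_div_natCast]
    congr 1
    rw [zpow_add₀ (by norm_num)]
    push_cast
    rw [zpow_natCast]
    field_simp
  rw [key, key, h]

theorem mem_Dy_iff {d : ℕ} {n : ℤ} {k : Fin d → ℤ} {y : Rd d} : y ∈ Dy n k ↔ fl n y = k := by
  constructor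
  · intro h; funext i; exact h i
  · rintro rfl; exact mem_Dy_fl n y

theorem Dy_vol_pos {d : ℕ} (n : ℤ) (k : Fin d → ℤ) : 0 < volume (Dy n k) := by
  rw [Dy_vol]; simp only [ENNReal.ofReal_pos]; positivity

theorem Dy_vol_top {d : ℕ} (n : ℤ) (k : Fin d → ℤ) : volume (Dy n k) ≠ ∞ := by
  rw [Dy_vol]; exact ENNReal.ofReal_ne_top

/-- differentiation along dyadic cubes -/
theorem dyadic_diff {d : ℕ} (f : Rd d → ℝ) (hfi : Integrable f)
    (lam : ℝ) : ∀ᵐ y : Rd d, (∀ n : ℤ, ∫⁻ z in Dy n (fl n y), ‖f z‖ₑ ≤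
      ENNReal.ofReal lam * volume (Dy n (fl n y))) → ‖f y‖ₑ ≤ ENNReal.ofReal lam := by
  have h := (IsUnifLocDoublingMeasure.vitaliFamily (volume : Measure (Rd d)) 1).ae_tendsto_lintegral_enorm_sub_div
    hfi.locallyIntegrable
  filter_upwards [h] with y hy hall
  set B := volume (Metric.ball (0 : Rd d) 1)
  have hr : Tendsto (fun n : ℕ => (Real.sqrt d + 1) * (2:ℝ) ^ (-(n:ℤ))) atTop (nhdsWithin 0 (Ioi 0)) := by
    rw [tendsto_nhdsWithin_iff]
    constructor
    · have := (tendsto_pow_atTop_nhds_zero_of_lt_one (r := (1/2:ℝ)) (by norm_num) (by norm_num)).const_mul (Real.sqrt d + 1)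
      rw [mul_zero] at this
      refine this.congr fun n => ?_
      simp
    · refine Eventually.of_forall fun n => ?_
      simp only [mem_Ioi]; positivity
  have ht := IsUnifLocDoublingMeasure.tendsto_closedBall_filterAt (μ := (volume : Measure (Rd d))) (K := 1)
    (x := y) (w := fun _ : ℕ => y) (δ := fun n : ℕ => (Real.sqrt d + 1) * (2:ℝ) ^ (-(n:ℤ))) hr
    (Eventually.of_forall fun n => by
      simp only [one_mul]; exact Metric.mem_closedBall_self (by positivity))
  have h2 := hy.comp ht
  have hC : ENNReal.ofReal ((Real.sqrt d + 1) ^ d) * B ≠ ∞ :=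
    ENNReal.mul_ne_top ENNReal.ofReal_ne_top measure_ball_lt_top.ne
  have h3 := ENNReal.Tendsto.mul_const h2 (b := ENNReal.ofReal ((Real.sqrt d + 1) ^ d) * B) (Or.inr hC)
  rw [zero_mul] at h3
  have h4 := h3.const_add (ENNReal.ofReal lam)
  rw [add_zero] at h4
  refine ge_of_tendsto h4 (Eventually.of_forall fun n => ?_)
  simp only [Function.comp]
  set δ := (Real.sqrt d + 1) * (2:ℝ) ^ (-(n:ℤ))
  have hδ : 0 < δ := by positivity
  set D := Dy (n:ℤ) (fl (n:ℤ) y)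
  have hV : volume (Metric.closedBall y δ) = volume D * (ENNReal.ofReal ((Real.sqrt d + 1) ^ d) * B) := by
    rw [Measure.addHaar_closedBall _ _ hδ.le, Dy_vol]
    simp only [finrank_euclideanSpace, Fintype.card_fin, δ, mul_pow]
    rw [ENNReal.ofReal_mul (by positivity)]; ring
  set W := ENNReal.ofReal ((Real.sqrt d + 1) ^ d) * B
  have hW0 : W ≠ 0 := by
    refine mul_ne_zero ?_ (Metric.measure_ball_pos _ _ one_pos).ne'
    simp only [ne_eq, ENNReal.ofReal_eq_zero, not_le]; positivity
  have hsub : D ⊆ Metric.closedBall y δ := by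
    intro z hz
    rw [Metric.mem_closedBall]
    refine (Dy_dist hz (mem_Dy_fl _ _)).trans ?_
    simp only [δ]
    have : (0:ℝ) < 2 ^ (-(n:ℤ)) := by positivity
    nlinarith
  have hD0 := (Dy_vol_pos (n:ℤ) (fl (n:ℤ) y)).ne'
  have hDt := Dy_vol_top (n:ℤ) (fl (n:ℤ) y)
  have e1 : ‖f y‖ₑ * volume D ≤ ENNReal.ofReal lam * volume D +
      ∫⁻ z in Metric.closedBall y δ, ‖f z - f y‖ₑ := by
    have hm : AEMeasurable (fun z => ‖f z‖ₑ) (volume.restrict D) := hfi.1.enorm.restrict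
    calc ‖f y‖ₑ * volume D = ∫⁻ z in D, ‖f y‖ₑ := by simp
      _ ≤ ∫⁻ z in D, (‖f z‖ₑ + ‖f z - f y‖ₑ) := by
          refine lintegral_mono fun z => ?_
          calc ‖f y‖ₑ = ‖f z - (f z - f y)‖ₑ := by congr 1; ring
            _ ≤ _ := enorm_sub_le
      _ = (∫⁻ z in D, ‖f z‖ₑ) + ∫⁻ z in D, ‖f z - f y‖ₑ := lintegral_add_left' hm _
      _ ≤ _ := add_le_add (hall n) (lintegral_mono_set hsub)
  have e2 : ‖f y‖ₑ ≤ (ENNReal.ofReal lam * volume D +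
      ∫⁻ z in Metric.closedBall y δ, ‖f z - f y‖ₑ) / volume D := by
    rw [ENNReal.le_div_iff_mul_le (Or.inl hD0) (Or.inl hDt)]; exact e1
  refine e2.trans_eq ?_
  rw [ENNReal.add_div, ENNReal.mul_div_cancel_right hD0 hDt, hV]
  congr 1
  rw [div_eq_mul_inv, div_eq_mul_inv, ENNReal.mul_inv (Or.inl hD0) (Or.inl hDt), mul_assoc, mul_assoc,
    ENNReal.inv_mul_cancel hW0 hC, mul_one]

structure CZD {d : ℕ} (C0 : ℝ) (f : Rd d → ℝ) (lam : ℝ) where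
  ι : Type
  cnt : Countable ι
  Q : ι → Set (Rd d)
  c : ι → Rd d
  r : ι → ℝ
  rpos : ∀ j, 0 < r j
  meas : ∀ j, MeasurableSet (Q j)
  disj : Pairwise (Function.onFun Disjoint Q)
  sub : ∀ j, Q j ⊆ Metric.closedBall (c j) (r j)
  vol : ∀ j, ENNReal.ofReal (r j ^ d) ≤ ENNReal.ofReal C0 * volume (Q j)
  lower : ∀ j, ENNReal.ofReal lam * volume (Q j) ≤ ∫⁻ y in Q j, ‖f y‖ₑ
  upper : ∀ j, ∫⁻ y in Q j, ‖f y‖ₑ ≤ ENNReal.ofReal (C0 * lam) * volume (Q j)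
  off : ∀ᵐ y : Rd d, (∀ j, y ∉ Q j) → ‖f y‖ₑ ≤ ENNReal.ofReal lam

theorem CZ_exists (d : ℕ) (hd : 0 < d) : ∃ C0 : ℝ, 1 ≤ C0 ∧ ∀ f : Rd d → ℝ, Measurable f →
    ∫⁻ y, ‖f y‖ₑ ≠ ∞ → ∀ lam : ℝ, 0 < lam → Nonempty (CZD C0 f lam) := by
  have hsq : (1:ℝ) ≤ Real.sqrt d := by
    rw [Real.one_le_sqrt]; exact_mod_cast hd
  refine ⟨Real.sqrt d ^ d + 2 ^ d, by nlinarith [one_le_pow₀ hsq (n := d), one_le_pow₀ (one_le_two (α := ℝ)) (n := d)], ?_⟩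
  intro f hf hfin lam hlam
  have hfi : Integrable f := ⟨hf.aestronglyMeasurable, lt_of_le_of_ne le_top hfin⟩
  let big : ℤ → (Fin d → ℤ) → Prop := fun n k =>
    ENNReal.ofReal lam * volume (Dy n k) < ∫⁻ y in Dy n k, ‖f y‖ₑ
  let Sel : ℤ × (Fin d → ℤ) → Prop := fun p =>
    big p.1 p.2 ∧ ∀ y ∈ Dy p.1 p.2, ∀ m < p.1, ¬ big m (fl m y)
  -- bounded below
  have hbd : ∃ b : ℤ, ∀ n k, big n k → b ≤ n := by
    set I := ∫⁻ y, ‖f y‖ₑ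
    obtain ⟨N, hN⟩ := pow_unbounded_of_one_lt (I.toReal / lam) (one_lt_two (α := ℝ))
    refine ⟨-(N:ℤ), fun n k hb => ?_⟩
    by_contra! hn
    have h1 : ENNReal.ofReal lam * volume (Dy n k) < I := lt_of_lt_of_le hb (setLIntegral_le_lintegral _ _)
    rw [Dy_vol, ← ENNReal.ofReal_mul hlam.le, ENNReal.ofReal_lt_iff_lt_toReal (by positivity) hfin] at h1
    have h2 : (2:ℝ) ^ N ≤ ((2:ℝ) ^ (-n)) ^ d := by
      calc (2:ℝ) ^ N = 2 ^ (N:ℤ) := by simp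
        _ ≤ 2 ^ (-n) := zpow_le_zpow_right₀ (by norm_num) (by omega)
        _ ≤ _ := le_self_pow₀ (one_le_zpow₀ (by norm_num) (by omega)) hd.ne'
    rw [div_lt_iff₀ hlam] at hN
    nlinarith
  obtain ⟨b, hb⟩ := hbd
  have hcover : ∀ y n, big n (fl n y) → ∃ p, Sel p ∧ y ∈ Dy p.1 p.2 := by
    intro y n hn
    obtain ⟨m, hm, hmin⟩ := Int.exists_least_of_bdd (P := fun n => big n (fl n y))
      ⟨b, fun z hz => hb z _ hz⟩ ⟨n, hn⟩
    refine ⟨(m, fl m y), ⟨hm, ?_⟩, mem_Dy_fl m y⟩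
    intro z hz m' hm' hbig
    have : fl m' z = fl m' y := fl_coarse hm'.le (mem_Dy_iff.1 hz)
    rw [this] at hbig
    exact absurd (hmin m' hbig) (not_le.2 hm')
  refine ⟨{
    ι := {p // Sel p}
    cnt := inferInstance
    Q := fun p => Dy p.1.1 p.1.2
    c := fun p => (MeasurableEquiv.toLp 2 (Fin d → ℝ)) fun i => p.1.2 i * (2:ℝ) ^ (-p.1.1)
    r := fun p => Real.sqrt d * 2 ^ (-p.1.1)
    rpos := fun p => by positivity
    meas := fun p => Dy_meas _ _
    disj := ?_
    sub := ?_
    vol := ?_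
    lower := fun p => p.2.1.le
    upper := ?_
    off := ?_ }⟩
  · rintro ⟨⟨n, k⟩, hp⟩ ⟨⟨n', k'⟩, hp'⟩ hne
    simp only [Function.onFun]
    rw [Set.disjoint_left]
    intro y hy hy'
    change y ∈ Dy n k at hy
    change y ∈ Dy n' k' at hy'
    rcases lt_trichotomy n n' with h | h | h
    · have := hp'.2 y hy' n h
      rw [mem_Dy_iff.1 hy] at this; exact this hp.1
    · subst h
      have : k = k' := by rw [← mem_Dy_iff.1 hy, ← mem_Dy_iff.1 hy']
      subst this; exact hne rfl
    · have := hp.2 y hy n' h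
      rw [mem_Dy_iff.1 hy'] at this; exact this hp'.1
  · rintro ⟨⟨n, k⟩, hp⟩ y hy
    rw [Metric.mem_closedBall]
    refine Dy_dist (k := k) hy ?_
    rw [Dy_eq]
    intro i
    have : (0:ℝ) < 2 ^ n := by positivity
    simpa using this
  · rintro ⟨⟨n, k⟩, hp⟩
    simp only
    rw [Dy_vol, ← ENNReal.ofReal_mul (by positivity), mul_pow]
    refine ENNReal.ofReal_le_ofReal ?_
    have : (0:ℝ) < (2 ^ (-n)) ^ d := by positivity
    have : (0:ℝ) < 2 ^ d := by positivity
    nlinarith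
  · rintro ⟨⟨n, k⟩, hp⟩
    simp only
    obtain ⟨y, hy⟩ : (Dy n k).Nonempty := nonempty_of_measure_ne_zero (Dy_vol_pos n k).ne'
    have h1 := hp.2 y hy (n-1) (by simp)
    simp only [big, not_lt] at h1
    have hs : Dy n k ⊆ Dy (n-1) (fl (n-1) y) := by
      intro z hz
      rw [mem_Dy_iff]
      exact fl_coarse (by omega) ((mem_Dy_iff.1 hz).trans (mem_Dy_iff.1 hy).symm)
    refine (lintegral_mono_set hs).trans (h1.trans ?_)
    rw [Dy_vol, Dy_vol, ← ENNReal.ofReal_mul hlam.le, ← ENNReal.ofReal_mul (by positivity)]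
    refine ENNReal.ofReal_le_ofReal ?_
    have e : (2:ℝ) ^ (-(n-1)) = 2 * 2 ^ (-n) := by
      rw [show -(n-1) = 1 + -n by ring, zpow_add₀ (by norm_num)]; simp
    rw [e, mul_pow]
    have h1 : (0:ℝ) < (2 ^ (-n)) ^ d := by positivity
    have h2 : (0:ℝ) ≤ Real.sqrt d ^ d := by positivity
    have : 0 ≤ lam * (2 ^ (-n)) ^ d * Real.sqrt d ^ d := by positivity
    nlinarith
  · filter_upwards [dyadic_diff f hfi lam] with y hy hnot
    refine hy fun n => ?_
    by_contra! h
    obtain ⟨p, hp, hyp⟩ := hcover y n h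
    exact hnot ⟨p, hp⟩ hyp

end GM

namespace GM

def nrm (ρ : ℝ) (u : ℕ → ℝ≥0∞) : ℝ≥0∞ := (∑' i, u i ^ ρ) ^ (1 / ρ)

theorem nrm_mono {ρ : ℝ} (hρ : 0 < ρ) {u v : ℕ → ℝ≥0∞} (h : ∀ i, u i ≤ v i) : nrm ρ u ≤ nrm ρ v :=
  ENNReal.rpow_le_rpow (ENNReal.tsum_le_tsum fun i => ENNReal.rpow_le_rpow (h i) hρ.le) (by positivity)

theorem nrm_add {ρ : ℝ} (hρ : 1 ≤ ρ) (u v : ℕ → ℝ≥0∞) :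
    nrm ρ (fun i => u i + v i) ≤ nrm ρ u + nrm ρ v := by
  have := ENNReal.lintegral_Lp_add_le (μ := Measure.count) (f := u) (g := v)
    (measurable_of_countable u).aemeasurable (measurable_of_countable v).aemeasurable hρ
  simpa [nrm, lintegral_count] using this

theorem nrm_le {s ρ : ℝ} (hs : 0 < s) (hsρ : s ≤ ρ) (c : ℕ → ℝ≥0∞) : nrm ρ c ≤ nrm s c := by
  have hρ : 0 < ρ := hs.trans_le hsρ
  by_cases htop : nrm s c = ∞
  · rw [htop]; exact le_top
  set N := nrm s c
  have hNs : N ^ s = ∑' i, c i ^ s := by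
    simp only [N, nrm]; rw [← ENNReal.rpow_mul]; simp [hs.ne']
  have hc : ∀ i, c i ≤ N := by
    intro i
    have : c i ^ s ≤ N ^ s := by rw [hNs]; exact ENNReal.le_tsum i
    exact (ENNReal.rpow_le_rpow_iff hs).1 this
  have : ∑' i, c i ^ ρ ≤ N ^ ρ := by
    calc ∑' i, c i ^ ρ ≤ ∑' i, c i ^ s * N ^ (ρ - s) := by
          refine ENNReal.tsum_le_tsum fun i => ?_
          rw [show ρ = s + (ρ - s) by ring, ENNReal.rpow_add_of_nonneg _ _ hs.le (by linarith)]
          rw [show s + (ρ - s) - s = ρ - s by ring]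
          exact mul_le_mul' le_rfl (ENNReal.rpow_le_rpow (hc i) (by linarith))
      _ = N ^ ρ := by
          rw [ENNReal.tsum_mul_right, ← hNs, ← ENNReal.rpow_add_of_nonneg _ _ hs.le (by linarith)]
          congr 1; ring
  calc nrm ρ c ≤ (N ^ ρ) ^ (1 / ρ) := ENNReal.rpow_le_rpow this (by positivity)
    _ = N := by rw [← ENNReal.rpow_mul]; simp [hρ.ne']

theorem nrm_split {ρ : ℝ} (hρ : 2 < ρ) (u v a c c' : ℕ → ℝ≥0∞)
    (h : ∀ i, u i ≤ v i + (a i + (c i + c' i))) {X Y Y' : ℝ≥0∞} (ha : ∑' i, a i ≤ X)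
    (hc : ∑' i, c i ^ 2 ≤ Y ^ 2) (hc' : ∑' i, c' i ^ 2 ≤ Y' ^ 2) :
    nrm ρ u ≤ nrm ρ v + (X + (Y + Y')) := by
  have h2 : ∀ (c : ℕ → ℝ≥0∞) (Y : ℝ≥0∞), ∑' i, c i ^ 2 ≤ Y ^ 2 → nrm ρ c ≤ Y := by
    intro c Y hc
    refine (nrm_le (s := 2) (by norm_num) hρ.le c).trans ?_
    simp only [nrm, ENNReal.rpow_two]
    refine (ENNReal.rpow_le_rpow hc (by norm_num)).trans_eq ?_
    rw [← ENNReal.rpow_two, ← ENNReal.rpow_mul]; norm_num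
  have h1 : nrm ρ a ≤ X := by
    refine (nrm_le (s := 1) one_pos (by linarith) a).trans ?_
    simpa [nrm] using ha
  refine (nrm_mono (by linarith) h).trans ((nrm_add (by linarith) _ _).trans ?_)
  refine add_le_add le_rfl ((nrm_add (by linarith) _ _).trans (add_le_add h1 ?_))
  exact (nrm_add (by linarith) _ _).trans (add_le_add (h2 _ _ hc) (h2 _ _ hc'))

theorem cs {α : Type*} [MeasurableSpace α] {μ : Measure α} {u a b : α → ℝ≥0∞} (ha : AEMeasurable a μ)
    (hb : AEMeasurable b μ) (h : ∀ x, u x ^ 2 ≤ a x * b x) :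
    (∫⁻ x, u x ∂μ) ^ 2 ≤ (∫⁻ x, a x ∂μ) * ∫⁻ x, b x ∂μ := by
  have e : ∀ x, u x ≤ (a x) ^ (1/2:ℝ) * (b x) ^ (1/2:ℝ) := by
    intro x
    rw [← ENNReal.mul_rpow_of_nonneg _ _ (by norm_num)]
    have := ENNReal.rpow_le_rpow (h x) (z := 1/2) (by norm_num)
    rwa [← ENNReal.rpow_two, ← ENNReal.rpow_mul, show (2:ℝ) * (1/2) = 1 by norm_num, ENNReal.rpow_one] at this
  have h2 := ENNReal.lintegral_mul_le_Lp_mul_Lq μ (Real.HolderConjugate.two_two)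
    (ha.pow_const (1/2:ℝ)) (hb.pow_const (1/2:ℝ))
  have h3 : ∫⁻ x, u x ∂μ ≤ (∫⁻ x, a x ∂μ) ^ (1/2:ℝ) * (∫⁻ x, b x ∂μ) ^ (1/2:ℝ) := by
    refine (lintegral_mono e).trans (h2.trans_eq ?_)
    simp only [← ENNReal.rpow_mul]; norm_num
  calc (∫⁻ x, u x ∂μ) ^ 2 ≤ ((∫⁻ x, a x ∂μ) ^ (1/2:ℝ) * (∫⁻ x, b x ∂μ) ^ (1/2:ℝ)) ^ 2 := by
        gcongr
    _ = _ := by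
        rw [mul_pow, ← ENNReal.rpow_two, ← ENNReal.rpow_two, ← ENNReal.rpow_mul, ← ENNReal.rpow_mul]
        norm_num

theorem cs_sum {ι : Type*} {u a b : ι → ℝ≥0∞} (h : ∀ x, u x ^ 2 ≤ a x * b x) :
    (∑' x, u x) ^ 2 ≤ (∑' x, a x) * ∑' x, b x := by
  letI : MeasurableSpace ι := ⊤
  have := cs (μ := Measure.count) (u := u) (a := a) (b := b) (measurable_from_top.aemeasurable)
    (measurable_from_top.aemeasurable) h
  have e : ∀ f : ι → ℝ≥0∞, ∫⁻ x, f x ∂Measure.count = ∑' x, f x := fun f => lintegral_count f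
  simpa [e] using this

/-! the modulus -/
section
variable {d : ℕ} (S : CZO d)

def th (t : ℝ) : ℝ := S.ω (max t 0) + Real.sqrt t

theorem ω_nonneg {t : ℝ} (ht : 0 ≤ t) : 0 ≤ S.ω t := by
  have := S.ω_mono (mem_Ici.2 le_rfl) (mem_Ici.2 ht) ht
  rwa [S.ω_zero] at this

theorem th_mono : Monotone (th S) := by
  intro s t h
  refine add_le_add (S.ω_mono (mem_Ici.2 (le_max_right _ _)) (mem_Ici.2 (le_max_right _ _))
    (max_le_max_right 0 h)) (Real.sqrt_le_sqrt h)

theorem th_nonneg (t : ℝ) : 0 ≤ th S t := add_nonneg (ω_nonneg S (le_max_right _ _)) (Real.sqrt_nonneg _)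

theorem ω_le_th {t : ℝ} (ht : 0 ≤ t) : S.ω t ≤ th S t := by
  unfold th; rw [max_eq_left ht]; linarith [Real.sqrt_nonneg t]

theorem sqrt_le_th (t : ℝ) : Real.sqrt t ≤ th S t := by
  unfold th; linarith [ω_nonneg S (le_max_right t 0)]

theorem th_nmul (n : ℕ) {t : ℝ} (ht : 0 ≤ t) : th S (n * t) ≤ n * th S t := by
  have h1 : S.ω (n * t) ≤ n * S.ω t := by
    induction n with
    | zero => simp [S.ω_zero]
    | succ k ih =>
      push_cast
      rw [add_mul, add_mul, one_mul, one_mul]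
      exact (S.ω_subadd _ _ (by positivity) ht).trans (by linarith)
  have h2 : Real.sqrt (n * t) ≤ n * Real.sqrt t := by
    rw [Real.sqrt_mul (Nat.cast_nonneg n)]
    refine mul_le_mul_of_nonneg_right ?_ (Real.sqrt_nonneg _)
    rw [Real.sqrt_le_left (Nat.cast_nonneg n)]
    exact_mod_cast Nat.le_self_pow (by norm_num) n
  unfold th
  rw [max_eq_left ht, max_eq_left (by positivity)]
  linarith

theorem th_mul {D : ℝ} {t : ℝ} (ht : 0 ≤ t) : th S (D * t) ≤ ⌈D⌉₊ * th S t :=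
  (th_mono S (mul_le_mul_of_nonneg_right (Nat.le_ceil D) ht)).trans (th_nmul S _ ht)

theorem th_dini : ∫⁻ t in Ioo (0:ℝ) 1, ENNReal.ofReal (th S t / t) ≠ ∞ := by
  have h1 : IntegrableOn (fun t : ℝ => th S t / t) (Ioo 0 1) := by
    have h2 : IntegrableOn (fun t : ℝ => t ^ (-(1/2):ℝ)) (Ioo 0 1) :=
      (intervalIntegral.integrableOn_Ioo_rpow_iff one_pos).2 (by norm_num)
    refine (S.dini.add h2).congr_fun ?_ measurableSet_Ioo
    intro t ht
    simp only [Pi.add_apply, th]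
    rw [max_eq_left ht.1.le, add_div]
    congr 1
    rw [Real.sqrt_eq_rpow, Real.rpow_neg ht.1.le, eq_div_iff ht.1.ne', inv_mul_eq_iff_eq_mul₀ (by have := ht.1; positivity),
      ← Real.rpow_add ht.1]
    norm_num
  have := h1.2
  refine ne_top_of_le_ne_top this.ne (lintegral_mono fun t => ?_)
  exact Real.ofReal_le_enorm _

theorem ω_tendsto {δ : ℝ} (hδ : 0 < δ) : ∃ η > 0, ∀ t, 0 ≤ t → t < η → S.ω t ≤ δ := by
  by_contra! hcon
  have hge : ∀ t, 0 < t → δ ≤ S.ω t := by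
    intro t ht
    obtain ⟨s, hs0, hst, hs⟩ := hcon t ht
    exact hs.le.trans (S.ω_mono hs0 ht.le hst.le)
  have : IntegrableOn (fun t : ℝ => t ^ (-1:ℝ)) (Ioo 0 1) := by
    have h2 := S.dini.div_const δ
    refine Integrable.mono' h2 (by fun_prop) ?_
    filter_upwards [ae_restrict_mem measurableSet_Ioo] with t ht
    have ht0 := ht.1
    rw [Real.rpow_neg_one, Real.norm_of_nonneg (by positivity), div_div, inv_eq_one_div, div_le_div_iff₀ ht0 (by positivity)]
    nlinarith [hge t ht0]
  rw [intervalIntegral.integrableOn_Ioo_rpow_iff one_pos] at this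
  norm_num at this

theorem K1 {x x' y : Rd d} (h : x ≠ y) (h' : dist x x' ≤ dist x y / 2) :
    |S.K x y - S.K x' y| ≤ S.Cst * th S (dist x x' / dist x y) / dist x y ^ d := by
  have := S.smooth x x' y h h'
  have h3 := ω_le_th S (t := dist x x' / dist x y) (by positivity)
  have hc := S.hCst
  calc _ ≤ _ := le_trans (by linarith [abs_nonneg (S.K y x - S.K y x')]) this
    _ ≤ _ := by gcongr

theorem K2 {x x' y : Rd d} (h : x ≠ y) (h' : dist x x' ≤ dist x y / 2) :
    |S.K y x - S.K y x'| ≤ S.Cst * th S (dist x x' / dist x y) / dist x y ^ d := by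
  have := S.smooth x x' y h h'
  have h3 := ω_le_th S (t := dist x x' / dist x y) (by positivity)
  have hc := S.hCst
  calc _ ≤ _ := le_trans (by linarith [abs_nonneg (S.K x y - S.K x' y)]) this
    _ ≤ _ := by gcongr

theorem Kmeas (x : Rd d) : Measurable (S.K x) := S.measK.of_uncurry_left

theorem Kmeas' (y : Rd d) : Measurable (fun x => S.K x y) := S.measK.of_uncurry_right
end

end GM

namespace GM
section
variable {d : ℕ} (S : CZO d)

def far (x : Rd d) (ε : ℝ) : Set (Rd d) := {y | ε < dist x y}

theorem far_meas (x : Rd d) (ε : ℝ) : MeasurableSet (far x ε) :=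
  measurableSet_lt measurable_const (by fun_prop)

def kd (x y : Rd d) : ℝ≥0∞ := ENNReal.ofReal ((dist x y ^ d)⁻¹)

theorem kd_meas (x : Rd d) : Measurable (kd x) := by unfold kd; fun_prop

theorem K_le {x y : Rd d} (h : x ≠ y) : ‖S.K x y‖ₑ ≤ ENNReal.ofReal S.Cst * kd x y := by
  rw [Real.enorm_eq_ofReal_abs, kd, ← ENNReal.ofReal_mul S.hCst.le]
  exact ENNReal.ofReal_le_ofReal (S.size x y h)

theorem ekm {h : Rd d → ℝ} (hm : Measurable h) (x : Rd d) : Measurable (fun y => ‖h y‖ₑ * kd x y) :=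
  hm.enorm.mul (kd_meas x)

structure Good (h : Rd d → ℝ) : Prop where
  meas : Measurable h
  fin : ∀ x : Rd d, ∀ ε : ℝ, 0 < ε → ∫⁻ y in far x ε, ‖h y‖ₑ * kd x y ≠ ∞

theorem Good.mono {h g : Rd d → ℝ} (hh : Good h) (hg : Measurable g) (hle : ∀ y, ‖g y‖ₑ ≤ ‖h y‖ₑ) :
    Good g := ⟨hg, fun x ε hε => ne_top_of_le_ne_top (hh.fin x ε hε)
      (lintegral_mono fun y => mul_le_mul' (hle y) le_rfl)⟩

theorem Good.ind {h : Rd d → ℝ} (hh : Good h) {A : Set (Rd d)} (hA : MeasurableSet A) :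
    Good (A.indicator h) :=
  hh.mono (hh.meas.indicator hA) fun y => enorm_indicator_le_enorm_self _ _

theorem Good.sub {h g : Rd d → ℝ} (hh : Good h) (hg : Good g) : Good (fun y => h y - g y) := by
  refine ⟨hh.meas.sub hg.meas, fun x ε hε => ?_⟩
  refine ne_top_of_le_ne_top (ENNReal.add_ne_top.2 ⟨hh.fin x ε hε, hg.fin x ε hε⟩) ?_
  rw [← lintegral_add_left (ekm hh.meas x)]
  refine lintegral_mono fun y => ?_
  rw [← add_mul]
  exact mul_le_mul' enorm_sub_le le_rfl

theorem Good.neg {h : Rd d → ℝ} (hh : Good h) : Good (fun y => - h y) :=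
  hh.mono hh.meas.neg fun y => by simp

theorem Good.add {h g : Rd d → ℝ} (hh : Good h) (hg : Good g) : Good (fun y => h y + g y) := by
  simpa using hh.sub hg.neg

theorem Good.integrableOn {h : Rd d → ℝ} (hh : Good h) (x : Rd d) {ε : ℝ} (hε : 0 < ε) :
    IntegrableOn (fun y => S.K x y * h y) (far x ε) := by
  refine ⟨((Kmeas S x).mul hh.meas).aestronglyMeasurable, ?_⟩
  refine lt_of_le_of_lt ?_ (lt_of_le_of_ne le_top (ENNReal.mul_ne_top (a := ENNReal.ofReal S.Cst) ENNReal.ofReal_ne_top (hh.fin x ε hε)))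
  rw [← lintegral_const_mul _ (ekm hh.meas x)]
  refine setLIntegral_mono' (far_meas x ε) fun y hy => ?_
  rw [enorm_mul]
  have : x ≠ y := by
    intro e; simp only [far, mem_ofPred_eq, e, dist_self] at hy; linarith
  calc _ ≤ (ENNReal.ofReal S.Cst * kd x y) * ‖h y‖ₑ := mul_le_mul' (K_le S this) le_rfl
    _ = _ := by ring

theorem good_of_L1 {h : Rd d → ℝ} (hm : Measurable h) (h1 : ∫⁻ y, ‖h y‖ₑ ≠ ∞) : Good h := by
  refine ⟨hm, fun x ε hε => ?_⟩
  have : ∫⁻ y in far x ε, ‖h y‖ₑ * kd x y ≤ ∫⁻ y, ‖h y‖ₑ * ENNReal.ofReal ((ε ^ d)⁻¹) := by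
    refine (setLIntegral_mono' (far_meas x ε) (g := fun y => ‖h y‖ₑ * ENNReal.ofReal ((ε ^ d)⁻¹)) fun y hy => ?_).trans (setLIntegral_le_lintegral _ _)
    refine mul_le_mul' le_rfl (ENNReal.ofReal_le_ofReal ?_)
    have : ε < dist x y := hy
    gcongr
  refine ne_top_of_le_ne_top ?_ this
  rw [lintegral_mul_const _ hm.enorm]
  exact ENNReal.mul_ne_top h1 ENNReal.ofReal_ne_top

theorem good_of_Lp (hd : 0 < d) {p : ℝ} (hp : 1 < p) {h : Rd d → ℝ} (hm : Measurable h)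
    (h1 : ∫⁻ y, ‖h y‖ₑ ^ p ≠ ∞) : Good h := by
  refine ⟨hm, fun x ε hε => ?_⟩
  obtain ⟨q, hpq⟩ : ∃ q, p.HolderConjugate q := ⟨_, Real.HolderConjugate.conjExponent hp⟩
  have hy : ∫⁻ y in far x ε, ‖h y‖ₑ * kd x y ≤ ∫⁻ y in far x ε, (‖h y‖ₑ ^ p / ENNReal.ofReal p + kd x y ^ q / ENNReal.ofReal q) :=
    lintegral_mono fun y => ENNReal.young_inequality _ _ hpq
  refine ne_top_of_le_ne_top ?_ hy
  rw [lintegral_add_left (by fun_prop)]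
  refine ENNReal.add_ne_top.2 ⟨?_, ?_⟩
  · simp only [div_eq_mul_inv]
    rw [lintegral_mul_const _ (by fun_prop)]
    refine ENNReal.mul_ne_top (ne_top_of_le_ne_top h1 (setLIntegral_le_lintegral _ _)) ?_
    simp [hpq.pos]
  · have hkm := kd_meas x
    simp only [div_eq_mul_inv]
    rw [lintegral_mul_const _ (by fun_prop)]
    refine ENNReal.mul_ne_top ?_ (by simp [hpq.symm.pos])
    have hs : 0 < (d:ℝ) * (q - 1) := by
      have := hpq.symm.lt
      have : (0:ℝ) < d := by exact_mod_cast hd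
      nlinarith
    set s := (d:ℝ) * (q - 1)
    have key := dini_radial d hd (fun t => (t / ε) ^ s) (by fun_prop) x ε hε
    have e : ∫⁻ y in far x ε, kd x y ^ q ≤ ∫⁻ y in {y | ε < dist x y},
        ENNReal.ofReal ((ε / dist x y / ε) ^ s / dist x y ^ d) := by
      refine setLIntegral_mono' (far_meas x ε) fun y hy => ?_
      have hy' : 0 < dist x y := hε.trans hy
      rw [kd, ENNReal.ofReal_rpow_of_pos (by positivity)]
      refine ENNReal.ofReal_le_ofReal (le_of_eq ?_)
      rw [show ε / dist x y / ε = (dist x y)⁻¹ by field_simp]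
      rw [Real.inv_rpow hy'.le, Real.inv_rpow (by positivity), ← Real.rpow_natCast, ← Real.rpow_mul hy'.le,
        div_eq_mul_inv, ← mul_inv, ← Real.rpow_add hy']
      congr 2; simp only [s]; ring
    refine ne_top_of_le_ne_top ?_ (e.trans key)
    refine ENNReal.mul_ne_top (ENNReal.mul_ne_top (by simp) measure_ball_lt_top.ne) ?_
    have hi : IntegrableOn (fun t : ℝ => t ^ (s - 1) * (ε ^ s)⁻¹) (Ioo 0 1) :=
      ((intervalIntegral.integrableOn_Ioo_rpow_iff one_pos).2 (by linarith)).mul_const _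
    refine ne_top_of_le_ne_top hi.2.ne (setLIntegral_mono' measurableSet_Ioo fun t ht => ?_)
    refine le_trans (ENNReal.ofReal_le_ofReal (le_of_eq ?_)) (Real.ofReal_le_enorm _)
    have ht0 := ht.1
    simp only
    rw [Real.div_rpow ht0.le hε.le, Real.rpow_sub ht0, Real.rpow_one]
    field_simp

/-! truncation increments -/
def ann (x : Rd d) (ε : ℕ → ℝ) (i : ℕ) : Set (Rd d) := far x (ε (i+1)) \ far x (ε i)

theorem ann_meas (x : Rd d) (ε : ℕ → ℝ) (i : ℕ) : MeasurableSet (ann x ε i) :=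
  (far_meas _ _).diff (far_meas _ _)

theorem mem_ann {x y : Rd d} {ε : ℕ → ℝ} {i : ℕ} : y ∈ ann x ε i ↔ ε (i+1) < dist x y ∧ dist x y ≤ ε i := by
  simp [ann, far]

theorem ann_disj (x : Rd d) {ε : ℕ → ℝ} (hε : Antitone ε) : Pairwise (Function.onFun Disjoint (ann x ε)) := by
  have key : ∀ i j, i < j → Disjoint (ann x ε i) (ann x ε j) := by
    intro i j hij
    rw [Set.disjoint_left]
    intro y hy hy'
    rw [mem_ann] at hy hy'
    have := hε (show i + 1 ≤ j from hij)
    linarith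
  intro i j hij
  rcases lt_or_gt_of_ne hij with h | h
  · exact key _ _ h
  · exact (key _ _ h).symm

theorem incr {h : Rd d → ℝ} (hh : Good h) (x : Rd d) {ε : ℕ → ℝ} (hε : Antitone ε) (hp : ∀ i, 0 < ε i) (i : ℕ) :
    S.trunc (ε (i+1)) h x - S.trunc (ε i) h x = ∫ y in ann x ε i, S.K x y * h y := by
  have hsub : far x (ε i) ⊆ far x (ε (i+1)) := fun y hy => lt_of_le_of_lt (hε (Nat.le_succ i)) hy
  have := setIntegral_sdiff (far_meas x (ε i)) (hh.integrableOn S x (hp (i+1))) hsub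
  exact this.symm

def adm (ε : ℕ → ℝ) : Prop := StrictAnti ε ∧ (∀ i, 0 < ε i) ∧ Tendsto ε atTop (nhds 0)

def inc (h : Rd d → ℝ) (x : Rd d) (ε : ℕ → ℝ) (i : ℕ) : ℝ≥0∞ :=
  ‖S.trunc (ε (i+1)) h x - S.trunc (ε i) h x‖ₑ

theorem var_eq (ρ : ℝ) (h : Rd d → ℝ) (x : Rd d) :
    S.var ρ h x = ⨆ (ε : ℕ → ℝ) (_ : adm ε), nrm ρ (inc S h x ε) := by
  simp only [CZO.var, nrm, inc, Real.enorm_eq_ofReal_abs, adm]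

theorem nrm_le_var {ρ : ℝ} {h : Rd d → ℝ} {x : Rd d} {ε : ℕ → ℝ} (hε : adm ε) :
    nrm ρ (inc S h x ε) ≤ S.var ρ h x := by
  rw [var_eq]; exact le_iSup₂ (f := fun (ε : ℕ → ℝ) (_ : adm ε) => nrm ρ (inc S h x ε)) ε hε

theorem var_le {ρ : ℝ} {h : Rd d → ℝ} {x : Rd d} {B : ℝ≥0∞} (H : ∀ ε, adm ε → nrm ρ (inc S h x ε) ≤ B) :
    S.var ρ h x ≤ B := by
  rw [var_eq]; exact iSup₂_le H

theorem trunc_sub {h g : Rd d → ℝ} (hh : Good h) (hg : Good g) (x : Rd d) {ε : ℝ} (hε : 0 < ε) :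
    S.trunc ε (fun y => h y - g y) x = S.trunc ε h x - S.trunc ε g x := by
  unfold CZO.trunc
  have := integral_sub (hh.integrableOn S x hε) (hg.integrableOn S x hε)
  simp only [far] at this
  rw [← this]
  simp only [mul_sub]

theorem var_sub {ρ : ℝ} (hρ : 1 ≤ ρ) {h g : Rd d → ℝ} (hh : Good h) (hg : Good g) (x : Rd d) :
    S.var ρ (fun y => h y - g y) x ≤ S.var ρ h x + S.var ρ g x := by
  refine var_le S fun ε hε => ?_
  refine (nrm_mono (by linarith) (v := fun i => inc S h x ε i + inc S g x ε i) fun i => ?_).trans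
    ((nrm_add hρ _ _).trans (add_le_add (nrm_le_var S hε) (nrm_le_var S hε)))
  simp only [inc]
  rw [trunc_sub S hh hg x (hε.2.1 _), trunc_sub S hh hg x (hε.2.1 _)]
  refine le_trans (le_of_eq ?_) enorm_sub_le
  congr 1; ring

theorem trunc_neg (h : Rd d → ℝ) (x : Rd d) (ε : ℝ) :
    S.trunc ε (fun y => - h y) x = - S.trunc ε h x := by
  unfold CZO.trunc
  simp only [mul_neg, integral_neg]

theorem var_neg {ρ : ℝ} (h : Rd d → ℝ) (x : Rd d) :
    S.var ρ (fun y => - h y) x = S.var ρ h x := by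
  have e : ∀ ε, inc S (fun y => - h y) x ε = inc S h x ε := by
    intro ε
    funext i
    unfold inc
    rw [trunc_neg S h x, trunc_neg S h x, ← enorm_neg]; congr 1; ring
  rw [var_eq, var_eq]
  simp only [e]

theorem var_add {ρ : ℝ} (hρ : 1 ≤ ρ) {h g : Rd d → ℝ} (hh : Good h) (hg : Good g) (x : Rd d) :
    S.var ρ (fun y => h y + g y) x ≤ S.var ρ h x + S.var ρ g x := by
  have := var_sub S hρ hh hg.neg x
  rw [var_neg] at this
  simpa using this

theorem K_cont {x0 y : Rd d} (h : x0 ≠ y) : ContinuousAt (fun x => S.K x y) x0 := by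
  rw [Metric.continuousAt_iff]
  intro e he
  have hd0 : 0 < dist x0 y := dist_pos.2 h
  have hC := S.hCst
  obtain ⟨η, hη, hω⟩ := ω_tendsto S (δ := e / 2 * dist x0 y ^ d / S.Cst) (by positivity)
  refine ⟨min (dist x0 y / 2) (η * dist x0 y), by positivity, fun x hx => ?_⟩
  rw [lt_min_iff] at hx
  have h1 := S.smooth x0 x y h (by rw [dist_comm]; exact hx.1.le)
  have h2 := hω (dist x0 x / dist x0 y) (by positivity) (by rw [div_lt_iff₀ hd0, dist_comm]; exact hx.2)
  rw [dist_comm, Real.dist_eq]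
  have h3 : S.Cst * S.ω (dist x0 x / dist x0 y) / dist x0 y ^ d ≤ e / 2 := by
    rw [div_le_iff₀ (by positivity)]
    rw [le_div_iff₀ hC] at h2
    linarith
  linarith [abs_nonneg (S.K y x0 - S.K y x)]

theorem sphere_ae (hd : 0 < d) (x : Rd d) (r : ℝ) (hr : 0 < r) : ∀ᵐ y : Rd d, dist x y ≠ r := by
  have := Measure.addHaar_sphere_of_ne_zero (volume : Measure (Rd d)) x hr.ne'
  rw [ae_iff]
  convert this using 2
  ext y
  rw [Metric.mem_sphere, dist_comm y x]; simp

theorem trunc_cont (hd : 0 < d) {h : Rd d → ℝ} (hh : Good h) {ε : ℝ} (hε : 0 < ε) :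
    Continuous (S.trunc ε h) := by
  rw [continuous_iff_continuousAt]
  intro x0
  have e : S.trunc ε h = fun x => ∫ y, (far x ε).indicator (fun y => S.K x y * h y) y := by
    funext x
    rw [integral_indicator (far_meas x ε)]; rfl
  rw [e]
  have hC := S.hCst
  have hbI : Integrable (fun y => (far x0 (ε/2)).indicator (fun y => S.Cst * 2 ^ d * (dist x0 y ^ d)⁻¹ * |h y|) y) := by
    rw [integrable_indicator_iff (far_meas _ _)]
    refine ⟨by have := hh.meas; fun_prop, ?_⟩
    refine lt_of_le_of_lt ?_ (lt_of_le_of_ne le_top (ENNReal.mul_ne_top (a := ENNReal.ofReal (S.Cst * 2 ^ d)) ENNReal.ofReal_ne_top (hh.fin x0 (ε/2) (by positivity))))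
    rw [← lintegral_const_mul _ (ekm hh.meas x0)]
    refine lintegral_mono fun y => le_of_eq ?_
    rw [enorm_mul, enorm_mul, Real.enorm_of_nonneg (by positivity), Real.enorm_of_nonneg (r := (dist x0 y ^ d)⁻¹) (by positivity), Real.enorm_eq_ofReal_abs |h y|, abs_abs, ← Real.enorm_eq_ofReal_abs, kd]
    ring
  refine continuousAt_of_dominated (Eventually.of_forall fun x => ?_) ?_ hbI ?_
  · exact (((Kmeas S x).mul hh.meas).indicator (far_meas x ε)).aestronglyMeasurable
  · filter_upwards [Metric.ball_mem_nhds x0 (show 0 < ε / 2 by positivity)] with x hx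
    refine Eventually.of_forall fun y => ?_
    by_cases hy : y ∈ far x ε
    · have hy1 : ε < dist x y := hy
      have hx1 : dist x x0 < ε / 2 := hx
      have t1 := dist_triangle x x0 y
      have t2 := dist_triangle x0 x y
      rw [dist_comm x0 x] at t2
      have hy2 : y ∈ far x0 (ε/2) := by simp only [far, mem_ofPred_eq]; linarith
      rw [indicator_of_mem hy, indicator_of_mem hy2, norm_mul, Real.norm_eq_abs, Real.norm_eq_abs]
      refine mul_le_mul_of_nonneg_right ?_ (abs_nonneg _)
      have hne : x ≠ y := dist_pos.1 (by linarith)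
      refine (S.size x y hne).trans ?_
      have hxy0 : 0 < dist x0 y := by linarith
      have hxy : 0 < dist x y := by linarith
      rw [mul_assoc, div_eq_mul_inv]
      refine mul_le_mul_of_nonneg_left ?_ hC.le
      rw [← div_eq_mul_inv, inv_eq_one_div, div_le_div_iff₀ (by positivity) (by positivity), one_mul, ← mul_pow]
      exact pow_le_pow_left₀ hxy0.le (by linarith) d
    · rw [indicator_of_notMem hy]; simp only [norm_zero]
      exact indicator_nonneg (fun y _ => by positivity) y
  · filter_upwards [sphere_ae hd x0 ε hε] with y hy
    rcases lt_or_gt_of_ne hy with h1 | h1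
    · have : (fun x => (far x ε).indicator (fun y => S.K x y * h y) y) =ᶠ[nhds x0] fun _ => 0 := by
        have hc : ∀ᶠ x in nhds x0, dist x y < ε :=
          (continuous_id.dist continuous_const).continuousAt.eventually_lt continuousAt_const h1
        filter_upwards [hc] with x hx
        exact indicator_of_notMem (by simp only [far, mem_ofPred_eq, not_lt]; exact hx.le) _
      exact continuousAt_const.congr this.symm
    · have : (fun x => (far x ε).indicator (fun y => S.K x y * h y) y) =ᶠ[nhds x0] fun x => S.K x y * h y := by
        have hc : ∀ᶠ x in nhds x0, ε < dist x y :=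
          continuousAt_const.eventually_lt (continuous_id.dist continuous_const).continuousAt h1
        filter_upwards [hc] with x hx
        exact indicator_of_mem (show y ∈ far x ε from hx) _
      refine ContinuousAt.congr ?_ this.symm
      exact (K_cont S (dist_pos.1 (hε.trans h1))).mul continuousAt_const

theorem var_meas (hd : 0 < d) {ρ : ℝ} (hρ : 0 < ρ) {h : Rd d → ℝ} (hh : Good h) : Measurable (S.var ρ h) := by
  have : LowerSemicontinuous (S.var ρ h) := by
    have e : S.var ρ h = fun x => ⨆ (ε : ℕ → ℝ) (_ : adm ε), nrm ρ (inc S h x ε) := by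
      funext x; exact var_eq S ρ h x
    rw [e]
    refine lowerSemicontinuous_biSup fun ε hε => ?_
    simp only [nrm]
    refine Continuous.comp_lowerSemicontinuous (g := fun t : ℝ≥0∞ => t ^ (1/ρ)) (ENNReal.continuous_rpow_const) (lowerSemicontinuous_tsum fun i => ?_)
      (fun a b hab => ENNReal.rpow_le_rpow hab (by positivity))
    refine Continuous.lowerSemicontinuous ?_
    refine (ENNReal.continuous_rpow_const).comp ?_
    exact ((trunc_cont S hd hh (hε.2.1 _)).sub (trunc_cont S hd hh (hε.2.1 _))).enorm
  exact this.measurable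
end
end GM

namespace GM

theorem shell_pt (d : ℕ) {κ t s R : ℝ} (hd : 0 < d) (hκ : 1 ≤ κ) (ht : 0 < t) (hs : 0 < s) (hR : 0 < R)
    (h1 : |t - R| ≤ κ * s) (h2 : R ≤ κ * t) :
    ENNReal.ofReal (Real.sqrt (t / s) / t ^ d) ≤ ENNReal.ofReal (κ ^ d * R ^ (1/2 - (d:ℝ))) *
      (ENNReal.ofReal |t - R|) ^ (-(1/2) : ℝ) := by
  have hκ0 : 0 < κ := by linarith
  rcases (abs_nonneg (t - R)).eq_or_lt with h | hu
  · rw [← h, ENNReal.ofReal_zero, ENNReal.zero_rpow_of_neg (by norm_num), ENNReal.mul_top]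
    · exact le_top
    · simp only [ne_eq, ENNReal.ofReal_eq_zero, not_le]; positivity
  rw [ENNReal.ofReal_rpow_of_pos hu, ← ENNReal.ofReal_mul (by positivity)]
  refine ENNReal.ofReal_le_ofReal ?_
  set u := |t - R|
  have e1 : Real.sqrt (t / s) / t ^ d = t ^ (1/2 - (d:ℝ)) * s ^ (-(1/2) : ℝ) := by
    rw [Real.sqrt_eq_rpow, Real.div_rpow ht.le hs.le, Real.rpow_sub ht, Real.rpow_neg hs.le, Real.rpow_natCast]
    field_simp
  have e2 : s ^ (-(1/2) : ℝ) ≤ κ ^ (1/2:ℝ) * u ^ (-(1/2) : ℝ) := by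
    have : (κ * s) ^ (-(1/2) : ℝ) ≤ u ^ (-(1/2) : ℝ) := Real.rpow_le_rpow_of_nonpos hu h1 (by norm_num)
    rw [Real.mul_rpow hκ0.le hs.le] at this
    calc s ^ (-(1/2) : ℝ) = κ ^ (1/2:ℝ) * (κ ^ (-(1/2) : ℝ) * s ^ (-(1/2) : ℝ)) := by
          rw [← mul_assoc, ← Real.rpow_add hκ0]; norm_num
      _ ≤ _ := by gcongr
  have hd1 : (1:ℝ) ≤ d := by exact_mod_cast hd
  have e3 : t ^ (1/2 - (d:ℝ)) ≤ κ ^ ((d:ℝ) - 1/2) * R ^ (1/2 - (d:ℝ)) := by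
    have : (κ * t) ^ (1/2 - (d:ℝ)) ≤ R ^ (1/2 - (d:ℝ)) := Real.rpow_le_rpow_of_nonpos hR h2 (by linarith)
    rw [Real.mul_rpow hκ0.le ht.le] at this
    calc t ^ (1/2 - (d:ℝ)) = κ ^ ((d:ℝ) - 1/2) * (κ ^ (1/2 - (d:ℝ)) * t ^ (1/2 - (d:ℝ))) := by
          rw [← mul_assoc, ← Real.rpow_add hκ0]; norm_num
      _ ≤ _ := by gcongr
  rw [e1]
  calc _ ≤ (κ ^ ((d:ℝ) - 1/2) * R ^ (1/2 - (d:ℝ))) * (κ ^ (1/2:ℝ) * u ^ (-(1/2) : ℝ)) := by gcongr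
    _ = (κ ^ ((d:ℝ) - 1/2) * κ ^ (1/2:ℝ)) * R ^ (1/2 - (d:ℝ)) * u ^ (-(1/2) : ℝ) := by ring
    _ = _ := by
      rw [← Real.rpow_add hκ0, ← Real.rpow_natCast]; congr 3; ring

theorem shell_sum (d : ℕ) (hd : 0 < d) {κ : ℝ} (hκ : 1 ≤ κ) : ∃ C : ℝ≥0∞, C ≠ ∞ ∧
    ∀ (z : Rd d) (R : ℝ), 0 < R → ∀ (ι : Type) [Countable ι] (E : ι → Set (Rd d)) (s : ι → ℝ),
    (∀ j, MeasurableSet (E j)) → Pairwise (Function.onFun Disjoint E) → (∀ j, 0 < s j) →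
    (∀ j, ∀ y ∈ E j, 0 < dist z y ∧ dist z y < 2 * R ∧ |dist z y - R| ≤ κ * s j ∧ R ≤ κ * dist z y) →
    ∑' j, ∫⁻ y in E j, ENNReal.ofReal (Real.sqrt (dist z y / s j) / dist z y ^ d) ≤ C := by
  obtain ⟨C, hC, H⟩ := shell d hd
  have hκ0 : 0 < κ := by linarith
  refine ⟨ENNReal.ofReal (κ ^ d) * C, ENNReal.mul_ne_top ENNReal.ofReal_ne_top hC, ?_⟩
  intro z R hR ι _ E s hE hdis hs hy
  set M := ENNReal.ofReal (κ ^ d * R ^ (1/2 - (d:ℝ)))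
  have hms : Measurable fun y : Rd d => (ENNReal.ofReal |dist z y - R|) ^ (-(1/2) : ℝ) := by fun_prop
  calc _ ≤ ∑' j, ∫⁻ y in E j, M * (ENNReal.ofReal |dist z y - R|) ^ (-(1/2) : ℝ) := by
        refine ENNReal.tsum_le_tsum fun j => setLIntegral_mono' (hE j) fun y h => ?_
        obtain ⟨a, b, c, e⟩ := hy j y h
        exact shell_pt d hd hκ a (hs j) hR c e
    _ = ∫⁻ y in ⋃ j, E j, M * (ENNReal.ofReal |dist z y - R|) ^ (-(1/2) : ℝ) :=
        (lintegral_iUnion hE hdis _).symm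
    _ ≤ ∫⁻ y in {y | dist z y < 2 * R}, M * (ENNReal.ofReal |dist z y - R|) ^ (-(1/2) : ℝ) :=
        lintegral_mono_set (iUnion_subset fun j y h => (hy j y h).2.1)
    _ = M * ∫⁻ y in {y | dist z y < 2 * R}, (ENNReal.ofReal |dist z y - R|) ^ (-(1/2) : ℝ) :=
        lintegral_const_mul _ hms
    _ ≤ M * (C * ENNReal.ofReal (R ^ ((d:ℝ) - 1/2))) := mul_le_mul' le_rfl (H R hR z)
    _ = _ := by
        simp only [M]
        rw [mul_comm C, ← mul_assoc, ← ENNReal.ofReal_mul (by positivity), mul_assoc (κ ^ d), ← Real.rpow_add hR]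
        norm_num

theorem sum_ann_le {d : ℕ} (z : Rd d) {ε : ℕ → ℝ} (hε : Antitone ε) {F : Set (Rd d)} (hF : MeasurableSet F)
    (g : Rd d → ℝ≥0∞) : ∑' i, ∫⁻ y in ann z ε i ∩ F, g y ≤ ∫⁻ y in F, g y := by
  rw [← lintegral_iUnion (fun i => (ann_meas z ε i).inter hF)]
  · exact lintegral_mono_set (iUnion_subset fun i => inter_subset_right)
  · intro i j hij
    exact (ann_disj z hε hij).mono inter_subset_left inter_subset_left

/-- Dini constant -/
def Cth {d : ℕ} (S : CZO d) : ℝ≥0∞ := (d * volume (Metric.ball (0 : Rd d) 1)) *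
  ∫⁻ t in Ioo (0:ℝ) 1, ENNReal.ofReal (th S t / t)

theorem Cth_ne {d : ℕ} (S : CZO d) : Cth S ≠ ∞ :=
  ENNReal.mul_ne_top (ENNReal.mul_ne_top (by simp) measure_ball_lt_top.ne) (th_dini S)

theorem dini_le {d : ℕ} (hd : 0 < d) (S : CZO d) (z : Rd d) {r : ℝ} (hr : 0 < r) :
    ∫⁻ y in far z r, ENNReal.ofReal (th S (r / dist z y) / dist z y ^ d) ≤ Cth S :=
  dini_radial d hd (th S) (th_mono S).measurable z r hr

/-- integral of the kernel difference -/
theorem diff_int {d : ℕ} (hd : 0 < d) (S : CZO d) : ∃ C : ℝ≥0∞, C ≠ ∞ ∧ ∀ (Q : Cube d) (ξ x : Rd d),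
    ξ ∈ Q.set → x ∈ Q.set → ∫⁻ y in (Q.dilate 3)ᶜ, ‖S.K ξ y - S.K x y‖ₑ ≤ C := by
  set B := volume (Metric.ball (0 : Rd d) 1)
  have hC := S.hCst
  refine ⟨ENNReal.ofReal S.Cst * Cth S + ENNReal.ofReal (2 * S.Cst * (2 * Real.sqrt d) ^ d) * B,
    ENNReal.add_ne_top.2 ⟨ENNReal.mul_ne_top ENNReal.ofReal_ne_top (Cth_ne S),
      ENNReal.mul_ne_top ENNReal.ofReal_ne_top measure_ball_lt_top.ne⟩, ?_⟩
  intro Q ξ x hξ hx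
  have hl := Q.hl
  have hsq : (1:ℝ) ≤ Real.sqrt d := by
    rw [Real.one_le_sqrt]; exact_mod_cast hd
  set δ := Real.sqrt d * Q.l
  have hδ : 0 < δ := by positivity
  have hdist : dist x ξ ≤ δ := cube_dist Q hx hξ
  have hsub : (Q.dilate 3)ᶜ ⊆ far x (2 * δ) ∪ ((Q.dilate 3)ᶜ ∩ Metric.closedBall x (2 * δ)) := by
    intro y hy
    by_cases h : 2 * δ < dist x y
    · exact Or.inl h
    · exact Or.inr ⟨hy, by rw [Metric.mem_closedBall, dist_comm]; linarith⟩
  refine (lintegral_mono_set hsub).trans ((lintegral_union_le _ _ _).trans (add_le_add ?_ ?_))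
  · have hm : Measurable fun y => ENNReal.ofReal (th S (2 * δ / dist x y) / dist x y ^ d) := by
      have := (th_mono S).measurable; fun_prop
    calc _ ≤ ∫⁻ y in far x (2 * δ), ENNReal.ofReal S.Cst * ENNReal.ofReal (th S (2 * δ / dist x y) / dist x y ^ d) := by
          refine setLIntegral_mono' (far_meas _ _) fun y hy => ?_
          have hy' : 2 * δ < dist x y := hy
          have hpos : 0 < dist x y := by linarith
          rw [Real.enorm_eq_ofReal_abs, ← ENNReal.ofReal_mul hC.le, abs_sub_comm]
          refine ENNReal.ofReal_le_ofReal ((K1 S (dist_pos.1 hpos) (by linarith)).trans ?_)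
          rw [mul_div_assoc]
          have := th_mono S (show dist x ξ / dist x y ≤ 2 * δ / dist x y by gcongr; linarith)
          gcongr
      _ = _ := lintegral_const_mul _ hm
      _ ≤ _ := mul_le_mul' le_rfl (dini_le hd S x (by positivity))
  · calc _ ≤ ∫⁻ y in (Q.dilate 3)ᶜ ∩ Metric.closedBall x (2 * δ), ENNReal.ofReal (2 * S.Cst / Q.l ^ d) := by
          refine setLIntegral_mono' ((dil_meas Q 3).compl.inter measurableSet_closedBall) fun y hy => ?_
          have h1 := far_dist Q hξ hy.1
          have h2 := far_dist Q hx hy.1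
          have n1 : ξ ≠ y := dist_pos.1 (by linarith)
          have n2 : x ≠ y := dist_pos.1 (by linarith)
          rw [Real.enorm_eq_ofReal_abs]
          refine ENNReal.ofReal_le_ofReal ((abs_sub _ _).trans ?_)
          have a1 := S.size ξ y n1
          have a2 := S.size x y n2
          have b1 : S.Cst / dist ξ y ^ d ≤ S.Cst / Q.l ^ d := by gcongr
          have b2 : S.Cst / dist x y ^ d ≤ S.Cst / Q.l ^ d := by gcongr
          have : 2 * S.Cst / Q.l ^ d = S.Cst / Q.l ^ d + S.Cst / Q.l ^ d := by ring
          linarith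
      _ = ENNReal.ofReal (2 * S.Cst / Q.l ^ d) * volume ((Q.dilate 3)ᶜ ∩ Metric.closedBall x (2 * δ)) := by simp
      _ ≤ ENNReal.ofReal (2 * S.Cst / Q.l ^ d) * volume (Metric.closedBall x (2 * δ)) :=
          mul_le_mul' le_rfl (measure_mono inter_subset_right)
      _ = _ := by
          rw [Measure.addHaar_closedBall _ _ (by positivity), finrank_euclideanSpace, Fintype.card_fin,
            ← mul_assoc, ← ENNReal.ofReal_mul (by positivity)]
          congr 2
          simp only [δ, mul_pow]
          field_simp

/-- the ℓ² shell bound in a cube complement -/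
theorem shell_cube {d : ℕ} (hd : 0 < d) (S : CZO d) : ∃ C : ℝ≥0∞, C ≠ ∞ ∧ ∀ (Q : Cube d) (ξ x : Rd d),
    ξ ∈ Q.set → x ∈ Q.set → ∀ ε : ℕ → ℝ, Antitone ε → (∀ i, 0 < ε i) → ∀ R : ℕ → ℝ, (∀ i, 0 < R i) →
    ∑' i, (∫⁻ y in {y | ¬ (R i < dist ξ y ↔ R i < dist x y)} ∩ ((ann ξ ε i ∪ ann x ε i) ∩ (Q.dilate 3)ᶜ), kd x y) ^ 2 ≤ C := by
  have hsq : (1:ℝ) ≤ Real.sqrt d := by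
    rw [Real.one_le_sqrt]; exact_mod_cast hd
  obtain ⟨C, hC, H⟩ := shell_sum d hd (κ := 1 + 2 * Real.sqrt d) (by linarith)
  refine ⟨C * (2 * (2 * Cth S)), ENNReal.mul_ne_top hC (ENNReal.mul_ne_top (by simp) (ENNReal.mul_ne_top (by simp) (Cth_ne S))), ?_⟩
  intro Q ξ x hξ hx ε hε hp R hR
  have hl := Q.hl
  set δ := Real.sqrt d * Q.l
  have hδ : 0 < δ := by positivity
  have hdist : dist x ξ ≤ δ := cube_dist Q hx hξ
  set F := (Q.dilate 3)ᶜ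
  have hF : MeasurableSet F := (dil_meas Q 3).compl
  set SR : ℕ → Set (Rd d) := fun i => {y | ¬ (R i < dist ξ y ↔ R i < dist x y)}
  have hSR : ∀ i, MeasurableSet (SR i) := by
    intro i
    have e : SR i = (far ξ (R i) \ far x (R i)) ∪ (far x (R i) \ far ξ (R i)) := by
      ext y; simp only [SR, far, mem_ofPred_eq, mem_union, Set.mem_sdiff]; tauto
    rw [e]
    exact ((far_meas _ _).diff (far_meas _ _)).union ((far_meas _ _).diff (far_meas _ _))
  set U : ℕ → Set (Rd d) := fun i => ann ξ ε i ∪ ann x ε i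
  set a : Rd d → ℝ≥0∞ := fun y => ENNReal.ofReal (Real.sqrt (dist x y / Q.l) / dist x y ^ d)
  set b : Rd d → ℝ≥0∞ := fun y => ENNReal.ofReal (Real.sqrt (Q.l / dist x y) / dist x y ^ d)
  have ham : Measurable a := by fun_prop
  have hbm : Measurable b := by fun_prop
  have hA : ∀ i, ∫⁻ y in SR i ∩ F, a y ≤ C := by
    intro i
    have := H x (R i + δ) (by linarith [hR i]) Unit (fun _ => SR i ∩ F) (fun _ => Q.l)
      (fun _ => (hSR i).inter hF) (by intro i j hij; exact absurd rfl hij) (fun _ => hl) (by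
        rintro - y ⟨h1, h2⟩
        have h3 := far_dist Q hx h2
        have t1 := dist_triangle x ξ y
        have t2 := dist_triangle ξ x y
        rw [dist_comm ξ x] at t2
        have hRi := hR i
        have hab : |dist x y - R i| ≤ δ := by
          simp only [SR, mem_ofPred_eq, _root_.not_iff] at h1
          rw [abs_le]
          by_cases hc : R i < dist x y
          · have := not_lt.1 (fun h => (h1.2 hc) h)
            constructor <;> linarith
          · have h5 : R i < dist ξ y := by by_contra h; exact hc (h1.1 h)
            constructor <;> linarith
        rw [abs_le] at hab
        refine ⟨by linarith, by linarith, ?_, ?_⟩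
        · rw [abs_le, show (1 + 2 * Real.sqrt d) * Q.l = Q.l + 2 * δ by simp only [δ]; ring]
          constructor <;> linarith
        · have : (1 + 2 * Real.sqrt d) * dist x y = dist x y + 2 * (Real.sqrt d * dist x y) := by ring
          have h6 : δ ≤ Real.sqrt d * dist x y := by simp only [δ]; gcongr
          linarith)
    simpa only [tsum_fintype, Finset.univ_unique, Finset.sum_const, Finset.card_singleton, one_smul] using this
  have hkab : ∀ y, ((F.indicator (fun y => kd x y)) y) ^ 2 ≤ (F.indicator a y) * (F.indicator b y) := by
    intro y
    by_cases hy : y ∈ F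
    · rw [indicator_of_mem hy, indicator_of_mem hy, indicator_of_mem hy]
      have h3 := far_dist Q hx hy
      have h4 : 0 < dist x y := by linarith
      simp only [a, b, kd]
      rw [← ENNReal.ofReal_mul (by positivity), ← ENNReal.ofReal_pow (by positivity)]
      refine ENNReal.ofReal_le_ofReal (le_of_eq ?_)
      have : Real.sqrt (dist x y / Q.l) * Real.sqrt (Q.l / dist x y) = 1 := by
        rw [← Real.sqrt_mul (by positivity)]
        rw [show dist x y / Q.l * (Q.l / dist x y) = 1 by field_simp]; simp
      rw [div_mul_div_comm, this, inv_pow, sq, one_div]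
    · rw [indicator_of_notMem hy]; simp
  have hB : ∫⁻ y in F, b y ≤ 2 * Cth S := by
    have hsub : F ⊆ far x (Q.l / 2) := by
      intro y hy
      have h3 := far_dist Q hx hy
      simp only [far, mem_ofPred_eq]; linarith
    have hm : Measurable fun y => ENNReal.ofReal (th S (Q.l / 2 / dist x y) / dist x y ^ d) := by
      have := (th_mono S).measurable; fun_prop
    calc _ ≤ ∫⁻ y in far x (Q.l / 2), b y := lintegral_mono_set hsub
      _ ≤ ∫⁻ y in far x (Q.l / 2), 2 * ENNReal.ofReal (th S (Q.l / 2 / dist x y) / dist x y ^ d) := by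
          refine setLIntegral_mono' (far_meas _ _) fun y hy => ?_
          have h4 : 0 < dist x y := lt_trans (by positivity) (show Q.l / 2 < dist x y from hy)
          have e2 : ∀ t : ℝ, 2 * ENNReal.ofReal t = ENNReal.ofReal (2 * t) := fun t => by
            rw [ENNReal.ofReal_mul (by norm_num)]; simp
          rw [e2]
          refine ENNReal.ofReal_le_ofReal ?_
          rw [← mul_div_assoc]
          refine div_le_div_of_nonneg_right ?_ (by positivity)
          have h5 := th_nmul S 2 (t := Q.l / 2 / dist x y) (by positivity)
          have h6 := sqrt_le_th S (Q.l / dist x y)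
          have h7 : ((2:ℕ):ℝ) * (Q.l / 2 / dist x y) = Q.l / dist x y := by push_cast; field_simp
          rw [h7] at h5
          push_cast at h5
          linarith
      _ = _ := lintegral_const_mul _ hm
      _ ≤ _ := mul_le_mul' le_rfl (dini_le hd S x (by positivity))
  have hterm : ∀ i, (∫⁻ y in SR i ∩ (U i ∩ F), kd x y) ^ 2 ≤ C * (∫⁻ y in ann ξ ε i ∩ F, b y + 0) +
      C * (∫⁻ y in ann x ε i ∩ F, b y) := by
    intro i
    have hUm : MeasurableSet (U i) := (ann_meas _ _ _).union (ann_meas _ _ _)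
    have hmm : MeasurableSet (SR i ∩ (U i ∩ F)) := (hSR i).inter (hUm.inter hF)
    have h1 : ∫⁻ y in SR i ∩ (U i ∩ F), kd x y = ∫⁻ y in SR i ∩ (U i ∩ F), F.indicator (fun y => kd x y) y :=
      setLIntegral_congr_fun hmm fun y hy => (indicator_of_mem hy.2.2 (fun y => kd x y)).symm
    rw [h1]
    refine (cs (ham.indicator hF).aemeasurable (hbm.indicator hF).aemeasurable hkab).trans ?_
    rw [← mul_add]
    refine mul_le_mul' ?_ ?_
    · refine le_trans ?_ (hA i)
      refine (lintegral_mono fun y => indicator_le_self _ _ y).trans (lintegral_mono_set ?_)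
      exact fun y hy => ⟨hy.1, hy.2.2⟩
    · simp only [add_zero]
      refine (lintegral_mono fun y => indicator_le_self _ _ y).trans ?_
      refine (lintegral_mono_set (t := (ann ξ ε i ∩ F) ∪ (ann x ε i ∩ F)) ?_).trans (lintegral_union_le _ _ _)
      rintro y ⟨-, hy | hy, hy'⟩
      · exact Or.inl ⟨hy, hy'⟩
      · exact Or.inr ⟨hy, hy'⟩
  refine (ENNReal.tsum_le_tsum hterm).trans ?_
  rw [ENNReal.tsum_add, ENNReal.tsum_mul_left, ENNReal.tsum_mul_left, ← mul_add]
  refine mul_le_mul' le_rfl ?_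
  rw [two_mul]
  simp only [add_zero]
  exact add_le_add ((sum_ann_le ξ hε hF b).trans hB) ((sum_ann_le x hε hF b).trans hB)

end GM

namespace GM

theorem le_one_add_sq (x : ℝ≥0∞) : x ≤ (1 + x) ^ 2 := by
  calc x ≤ 1 + x := le_add_self
    _ = (1 + x) ^ 1 := (pow_one _).symm
    _ ≤ (1 + x) ^ 2 := pow_le_pow_right₀ (le_add_right le_rfl) (by norm_num)

theorem lemA {d : ℕ} (hd : 0 < d) (S : CZO d) {ρ : ℝ} (hρ : 2 < ρ) : ∃ C : ℝ≥0∞, C ≠ ∞ ∧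
    ∀ (Q : Cube d) (h : Rd d → ℝ) (L : ℝ≥0∞), Good h → (∀ᵐ y, ‖h y‖ₑ ≤ L) → (∀ y ∈ Q.dilate 3, h y = 0) →
    ∀ ξ x : Rd d, ξ ∈ Q.set → x ∈ Q.set → S.var ρ h ξ ≤ S.var ρ h x + C * L := by
  obtain ⟨C1, hC1, H1⟩ := diff_int hd S
  obtain ⟨C2, hC2, H2⟩ := shell_cube hd S
  set c := ENNReal.ofReal S.Cst
  refine ⟨C1 + (c * (1 + C2) + c * (1 + C2)), ?_, ?_⟩
  · have : c * (1 + C2) ≠ ∞ := ENNReal.mul_ne_top ENNReal.ofReal_ne_top (by simp [hC2])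
    simp [hC1, this]
  intro Q h L hh hL h0 ξ x hξ hx
  refine var_le S fun ε hε => ?_
  have hanti := hε.1.antitone
  have hpos := hε.2.1
  set F := (Q.dilate 3)ᶜ
  have hF : MeasurableSet F := (dil_meas Q 3).compl
  set E : (ℕ → ℝ) → ℕ → Set (Rd d) := fun R i =>
    {y | ¬ (R i < dist ξ y ↔ R i < dist x y)} ∩ ((ann ξ ε i ∪ ann x ε i) ∩ F) with hEdef
  have hEm : ∀ R i, MeasurableSet (E R i) := by
    intro R i
    refine MeasurableSet.inter ?_ (((ann_meas _ _ _).union (ann_meas _ _ _)).inter hF)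
    have e : {y | ¬ (R i < dist ξ y ↔ R i < dist x y)} = (far ξ (R i) \ far x (R i)) ∪ (far x (R i) \ far ξ (R i)) := by
      ext y; simp only [far, mem_ofPred_eq, mem_union, Set.mem_sdiff]; tauto
    rw [e]
    exact ((far_meas _ _).diff (far_meas _ _)).union ((far_meas _ _).diff (far_meas _ _))
  set a : ℕ → ℝ≥0∞ := fun i => L * ∫⁻ y in ann ξ ε i ∩ F, ‖S.K ξ y - S.K x y‖ₑ
  set cc : (ℕ → ℝ) → ℕ → ℝ≥0∞ := fun R i => L * (c * ∫⁻ y in E R i, kd x y)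
  have hcc : ∀ R : ℕ → ℝ, (∀ i, 0 < R i) → ∑' i, cc R i ^ 2 ≤ (L * (c * (1 + C2))) ^ 2 := by
    intro R hR
    have := H2 Q ξ x hξ hx ε hanti hpos R hR
    simp only [cc, mul_pow, ENNReal.tsum_mul_left]
    exact mul_le_mul' le_rfl (mul_le_mul' le_rfl (this.trans (le_one_add_sq C2)))
  have hmd : Measurable fun y => ‖S.K ξ y - S.K x y‖ₑ := ((Kmeas S ξ).sub (Kmeas S x)).enorm
  have hstep : ∀ i, inc S h ξ ε i ≤ inc S h x ε i + (a i + (cc (fun i => ε i) i + cc (fun i => ε (i+1)) i)) := by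
    intro i
    simp only [inc]
    rw [incr S hh ξ hanti hpos, incr S hh x hanti hpos]
    have hsubξ : ann ξ ε i ⊆ far ξ (ε (i+1)) := sdiff_subset
    have hsubx : ann x ε i ⊆ far x (ε (i+1)) := sdiff_subset
    have i1 : Integrable ((ann ξ ε i).indicator fun y => S.K ξ y * h y) :=
      (integrable_indicator_iff (ann_meas _ _ _)).2 ((hh.integrableOn S ξ (hpos (i+1))).mono_set hsubξ)
    have i2 : Integrable ((ann x ε i).indicator fun y => S.K x y * h y) :=
      (integrable_indicator_iff (ann_meas _ _ _)).2 ((hh.integrableOn S x (hpos (i+1))).mono_set hsubx)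
    rw [← integral_indicator (ann_meas _ _ _), ← integral_indicator (ann_meas _ _ _)]
    set I1 := ∫ y, (ann ξ ε i).indicator (fun y => S.K ξ y * h y) y
    set I2 := ∫ y, (ann x ε i).indicator (fun y => S.K x y * h y) y
    have e1 : ‖I1‖ₑ ≤ ‖I2‖ₑ + ‖I1 - I2‖ₑ := by
      calc ‖I1‖ₑ = ‖I2 + (I1 - I2)‖ₑ := by congr 1; ring
        _ ≤ _ := enorm_add_le _ _
    refine e1.trans (add_le_add le_rfl ?_)
    simp only [I1, I2]
    rw [← integral_sub i1 i2]
    refine (enorm_integral_le_lintegral_enorm _).trans ?_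
    have hpt : ∀ᵐ y, ‖(ann ξ ε i).indicator (fun y => S.K ξ y * h y) y - (ann x ε i).indicator (fun y => S.K x y * h y) y‖ₑ
        ≤ L * ((ann ξ ε i ∩ F).indicator (fun y => ‖S.K ξ y - S.K x y‖ₑ) y +
          (c * (E (fun i => ε i) i).indicator (kd x) y + c * (E (fun i => ε (i+1)) i).indicator (kd x) y)) := by
      filter_upwards [hL] with y hy
      by_cases hyF : y ∈ F
      swap
      · have : h y = 0 := h0 y (by simpa [F] using hyF)
        have z1 : (ann ξ ε i).indicator (fun y => S.K ξ y * h y) y = 0 := by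
          simp [indicator_apply, this]
        have z2 : (ann x ε i).indicator (fun y => S.K x y * h y) y = 0 := by
          simp [indicator_apply, this]
        rw [z1, z2]; simp
      have hxy : x ≠ y := by
        have := far_dist Q hx hyF
        exact dist_pos.1 (by linarith [Q.hl])
      have hKx := K_le S hxy
      have hmem : ∀ z, y ∈ ann z ε i ↔ (ε (i+1) < dist z y ∧ ¬ (ε i < dist z y)) := by
        intro z; rw [mem_ann, not_lt]
      have hEone : (y ∈ ann ξ ε i ∧ y ∉ ann x ε i) ∨ (y ∉ ann ξ ε i ∧ y ∈ ann x ε i) →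
          kd x y ≤ (E (fun i => ε i) i).indicator (kd x) y + (E (fun i => ε (i+1)) i).indicator (kd x) y := by
        intro hor
        have hU : y ∈ ann ξ ε i ∪ ann x ε i := by
          rcases hor with h | h
          · exact Or.inl h.1
          · exact Or.inr h.2
        have : y ∈ E (fun i => ε i) i ∨ y ∈ E (fun i => ε (i+1)) i := by
          rw [hmem, hmem] at hor
          simp only [hEdef, mem_inter_iff, mem_ofPred_eq]
          have hUF : y ∈ ann ξ ε i ∪ ann x ε i ∧ y ∈ F := ⟨hU, hyF⟩
          by_cases hc : (ε i < dist ξ y ↔ ε i < dist x y)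
          · right; refine ⟨?_, hUF⟩; tauto
          · left; exact ⟨hc, hUF⟩
        rcases this with h | h
        · rw [indicator_of_mem h]; exact le_self_add
        · rw [indicator_of_mem h]; exact le_add_self
      by_cases a1 : y ∈ ann ξ ε i
      · by_cases a2 : y ∈ ann x ε i
        · rw [indicator_of_mem a1, indicator_of_mem a2, indicator_of_mem (show y ∈ ann ξ ε i ∩ F from ⟨a1, hyF⟩),
            ← sub_mul, enorm_mul, mul_comm]
          exact mul_le_mul' hy le_self_add
        · have hk := hEone (Or.inl ⟨a1, a2⟩)
          rw [indicator_of_mem a1, indicator_of_notMem a2, indicator_of_mem (show y ∈ ann ξ ε i ∩ F from ⟨a1, hyF⟩),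
            sub_zero, enorm_mul, mul_comm]
          refine mul_le_mul' hy ?_
          rw [← mul_add]
          calc ‖S.K ξ y‖ₑ = ‖(S.K ξ y - S.K x y) + S.K x y‖ₑ := by congr 1; ring
            _ ≤ _ := enorm_add_le _ _
            _ ≤ _ := add_le_add le_rfl (hKx.trans (mul_le_mul' le_rfl hk))
      · by_cases a2 : y ∈ ann x ε i
        · have hk := hEone (Or.inr ⟨a1, a2⟩)
          rw [indicator_of_notMem a1, indicator_of_mem a2, zero_sub, enorm_neg, enorm_mul, mul_comm]
          refine mul_le_mul' hy ?_
          rw [← mul_add]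
          exact (hKx.trans (mul_le_mul' le_rfl hk)).trans le_add_self
        · rw [indicator_of_notMem a1, indicator_of_notMem a2]; simp
    refine (lintegral_mono_ae hpt).trans (le_of_eq ?_)
    have m1 : Measurable ((ann ξ ε i ∩ F).indicator (fun y => ‖S.K ξ y - S.K x y‖ₑ)) :=
      hmd.indicator ((ann_meas _ _ _).inter hF)
    have m2 : ∀ R, Measurable (fun y => (E R i).indicator (kd x) y) := fun R => (kd_meas x).indicator (hEm R i)
    have m3 : ∀ R, Measurable (fun y => c * (E R i).indicator (kd x) y) := fun R => (m2 R).const_mul c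
    have m4 : Measurable (fun y => c * (E (fun i => ε i) i).indicator (kd x) y +
      c * (E (fun i => ε (i+1)) i).indicator (kd x) y) := (m3 ε).add (m3 (fun i => ε (i+1)))
    have m5 : Measurable (fun y => (ann ξ ε i ∩ F).indicator (fun y => ‖S.K ξ y - S.K x y‖ₑ) y +
      (c * (E (fun i => ε i) i).indicator (kd x) y +
      c * (E (fun i => ε (i+1)) i).indicator (kd x) y)) := m1.add m4
    rw [lintegral_const_mul _ m5,
      lintegral_add_left m1, lintegral_add_left (m3 ε), lintegral_const_mul _ (m2 ε),
      lintegral_const_mul _ (m2 (fun i => ε (i+1))), lintegral_indicator ((ann_meas _ _ _).inter hF),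
      lintegral_indicator (hEm ε i), lintegral_indicator (hEm (fun i => ε (i+1)) i)]
    simp only [a, cc]
    ring
  have hsa : ∑' i, a i ≤ L * C1 := by
    simp only [a, ENNReal.tsum_mul_left]
    exact mul_le_mul' le_rfl ((sum_ann_le ξ hanti hF _).trans (H1 Q ξ x hξ hx))
  have := nrm_split hρ _ _ _ _ _ hstep hsa (hcc _ hpos) (hcc _ fun i => hpos (i+1))
  refine this.trans (add_le_add (nrm_le_var S hε) (le_of_eq ?_))
  ring

end GM


namespace GM

theorem vol_cball {d : ℕ} (x : Rd d) {r : ℝ} (hr : 0 ≤ r) :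
    volume (Metric.closedBall x r) = ENNReal.ofReal (r ^ d) * volume (Metric.ball (0 : Rd d) 1) := by
  have := Measure.addHaar_closedBall (volume : Measure (Rd d)) x hr
  rwa [finrank_euclideanSpace_fin] at this

theorem cover (d : ℕ) (hd : 0 < d) : ∃ C : ℝ≥0∞, C ≠ ∞ ∧ ∀ E : Set (Rd d), MeasurableSet E → volume E ≠ ∞ →
    ∃ U : Set (Rd d), volume U ≤ C * volume E ∧ ∀ x ∉ U, ∀ Q : Cube d, x ∈ Q.set →
      4 * volume (E ∩ Q.set) ≤ volume Q.set := by
  set B := volume (Metric.ball (0 : Rd d) 1)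
  have hB : B ≠ ∞ := measure_ball_lt_top.ne
  have hsd : 0 < Real.sqrt d := Real.sqrt_pos.2 (by exact_mod_cast hd)
  refine ⟨ENNReal.ofReal ((4 * Real.sqrt d) ^ d) * B * 4, by finiteness, ?_⟩
  intro E hE hEf
  set t : Set (Cube d) := {Q | volume Q.set < 4 * volume (E ∩ Q.set)}
  set cc : Cube d → Rd d := fun Q => WithLp.toLp 2 Q.c
  have hcc : ∀ Q : Cube d, cc Q ∈ Q.set := by
    intro Q i
    simp only [cc]
    constructor <;> linarith [Q.hl]
  have hsub : ∀ Q : Cube d, Q.set ⊆ Metric.closedBall (cc Q) (Real.sqrt d * Q.l) := by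
    intro Q y hy
    exact cube_dist Q hy (hcc Q)
  have hbd : ∀ Q ∈ t, Real.sqrt d * Q.l ≤ Real.sqrt d * max 1 (4 * volume E).toReal := by
    intro Q hQ
    refine mul_le_mul_of_nonneg_left ?_ hsd.le
    by_contra hc
    push Not at hc
    have h1 : 1 < Q.l := lt_of_le_of_lt (le_max_left _ _) hc
    have h2 : (4 * volume E).toReal < Q.l := lt_of_le_of_lt (le_max_right _ _) hc
    have h3 : Q.l ≤ Q.l ^ d := le_self_pow₀ h1.le hd.ne'
    have h4 : volume Q.set < 4 * volume E := lt_of_lt_of_le hQ (mul_le_mul' le_rfl (measure_mono inter_subset_left))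
    rw [cube_vol] at h4
    have h5 := (ENNReal.ofReal_lt_iff_lt_toReal (by positivity [Q.hl]) (by finiteness)).1 h4
    linarith
  obtain ⟨u, hut, hdisj, hcov⟩ := Vitali.exists_disjoint_subfamily_covering_enlargement_closedBall t cc
    (fun Q => Real.sqrt d * Q.l) _ hbd 4 (by norm_num)
  have hucount : u.Countable := by
    refine hdisj.countable_of_nonempty_interior fun Q hQ => ?_
    refine ⟨cc Q, ?_⟩
    refine Metric.ball_subset_interior_closedBall (Metric.mem_ball_self ?_)
    have := Q.hl
    positivity
  have : Countable u := hucount.to_subtype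
  refine ⟨⋃ Q : u, Metric.closedBall (cc Q) (4 * (Real.sqrt d * Q.1.l)), ?_, ?_⟩
  · refine (measure_iUnion_le _).trans ?_
    have h1 : ∀ Q : u, volume (Metric.closedBall (cc Q) (4 * (Real.sqrt d * Q.1.l))) ≤
        ENNReal.ofReal ((4 * Real.sqrt d) ^ d) * B * 4 * volume (E ∩ Q.1.set) := by
      intro Q
      have hl := Q.1.hl
      rw [vol_cball _ (by positivity), ← mul_assoc, mul_pow, ENNReal.ofReal_mul (by positivity), ← cube_vol]
      calc ENNReal.ofReal ((4 * Real.sqrt d) ^ d) * volume Q.1.set * B ≤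
          ENNReal.ofReal ((4 * Real.sqrt d) ^ d) * (4 * volume (E ∩ Q.1.set)) * B :=
            mul_le_mul' (mul_le_mul' le_rfl (le_of_lt (hut Q.2))) le_rfl
        _ = _ := by ring
    refine (ENNReal.tsum_le_tsum h1).trans ?_
    rw [ENNReal.tsum_mul_left]
    refine mul_le_mul' le_rfl ?_
    rw [← measure_iUnion]
    · exact measure_mono (iUnion_subset fun Q => inter_subset_left)
    · intro Q Q' hne
      have := hdisj Q.2 Q'.2 (fun h => hne (Subtype.ext h))
      exact this.mono (inter_subset_right.trans (hsub _)) (inter_subset_right.trans (hsub _))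
    · exact fun Q => hE.inter (cube_meas _)
  · intro x hx Q hxQ
    by_contra hc
    push Not at hc
    obtain ⟨b, hb, hbs⟩ := hcov Q hc
    exact hx (mem_iUnion.2 ⟨⟨b, hb⟩, hbs (hsub Q hxQ)⟩)

theorem lemA' {d : ℕ} (hd : 0 < d) (S : CZO d) {ρ q : ℝ} (hρ : 2 < ρ) (hq : 1 < q) (hb : S.VarBdd ρ q) :
    ∃ C : ℝ≥0∞, C ≠ ∞ ∧ ∀ (κ : ℝ≥0∞) (g : Rd d → ℝ) (L : ℝ), Good g → 0 < L →
      (∀ᵐ y, ‖g y‖ₑ ≤ ENNReal.ofReal L) → volume {x | κ * ENNReal.ofReal L < S.var ρ g x} ≠ ∞ →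
      ∃ U : Set (Rd d), volume U ≤ C * volume {x | κ * ENNReal.ofReal L < S.var ρ g x} ∧
        ∀ x ∉ U, ∀ Q : Cube d, x ∈ Q.set → ∀ ξ ∈ Q.set,
          S.var ρ (((Q.dilate 3)ᶜ).indicator g) ξ ≤ (C + κ) * ENNReal.ofReal L := by
  obtain ⟨C1, hC1, H1⟩ := lemA hd S hρ
  obtain ⟨C2, hC2, H2⟩ := cover d hd
  obtain ⟨A, hA, HA⟩ := hb
  set N : ℝ := 4 * (A * 3 ^ d) + 1
  refine ⟨C2 + (ENNReal.ofReal N + C1), by finiteness, ?_⟩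
  intro κ g L hg hL hgL hfin
  set E := {x | κ * ENNReal.ofReal L < S.var ρ g x}
  have hEm : MeasurableSet E := measurableSet_lt measurable_const (var_meas S hd (by linarith) hg)
  obtain ⟨U, hU, HU⟩ := H2 E hEm hfin
  refine ⟨U, hU.trans (mul_le_mul' le_self_add le_rfl), ?_⟩
  intro x hx Q hxQ ξ hξ
  have hl := Q.hl
  set g1 := (Q.dilate 3).indicator g
  set g2 := ((Q.dilate 3)ᶜ).indicator g
  have hg1 : Good g1 := hg.ind (dil_meas Q 3)
  have hg2 : Good g2 := hg.ind (dil_meas Q 3).compl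
  set LL := ENNReal.ofReal L
  have hLL0 : LL ≠ 0 := by simpa [LL] using hL
  have hLLt : LL ≠ ∞ := ENNReal.ofReal_ne_top
  have hI : ∫⁻ y, ENNReal.ofReal |g1 y| ^ q ≤ LL ^ q * volume (Q.dilate 3) := by
    rw [← setLIntegral_const, ← lintegral_indicator (dil_meas Q 3)]
    refine lintegral_mono_ae ?_
    filter_upwards [hgL] with y hy
    by_cases hyQ : y ∈ Q.dilate 3
    · simp only [g1, indicator_of_mem hyQ]
      rw [← Real.enorm_eq_ofReal_abs]
      exact ENNReal.rpow_le_rpow hy (by linarith)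
    · simp only [g1, indicator_of_notMem hyQ]
      simp [show q ≠ 0 by linarith, show 0 < q by linarith]
  set Bd := {x | ENNReal.ofReal N * LL ≤ S.var ρ g1 x}
  have hNq : ENNReal.ofReal N ≤ ENNReal.ofReal N ^ q := by
    have h1 : (1 : ℝ≥0∞) ≤ ENNReal.ofReal N := by
      rw [ENNReal.one_le_ofReal]; simp only [N]
      have : 0 < A * 3 ^ d := by positivity
      linarith
    calc ENNReal.ofReal N = ENNReal.ofReal N ^ (1 : ℝ) := (ENNReal.rpow_one _).symm
      _ ≤ _ := ENNReal.rpow_le_rpow_of_exponent_le h1 hq.le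
  have hCh : ENNReal.ofReal N * LL ^ q * volume Bd ≤ ENNReal.ofReal A * (LL ^ q * volume (Q.dilate 3)) := by
    refine le_trans ?_ ((HA g1 hg1.meas).trans (mul_le_mul' le_rfl hI))
    have hvm : Measurable (fun x => S.var ρ g1 x ^ q) := (var_meas S hd (by linarith) hg1).pow_const q
    refine le_trans ?_ (mul_meas_ge_le_lintegral hvm ((ENNReal.ofReal N * LL) ^ q))
    rw [ENNReal.mul_rpow_of_nonneg _ _ (by linarith)]
    refine mul_le_mul' (mul_le_mul' hNq le_rfl) (measure_mono ?_)
    intro y hy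
    simp only [mem_ofPred_eq]
    rw [← ENNReal.mul_rpow_of_nonneg _ _ (by linarith)]
    exact ENNReal.rpow_le_rpow hy (by linarith)
  have hBd : 4 * volume Bd ≤ volume Q.set := by
    have hLq0 : LL ^ q ≠ 0 := by simp [ENNReal.rpow_eq_zero_iff, hLL0, hLLt]
    have hLqt : LL ^ q ≠ ∞ := ENNReal.rpow_ne_top_of_nonneg (by linarith) hLLt
    have ha : 0 < A * 3 ^ d := by positivity
    have h1 : ENNReal.ofReal (A * 3 ^ d) * LL ^ q * (4 * volume Bd) ≤
        ENNReal.ofReal (A * 3 ^ d) * LL ^ q * volume Q.set := by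
      calc ENNReal.ofReal (A * 3 ^ d) * LL ^ q * (4 * volume Bd)
          = ENNReal.ofReal (4 * (A * 3 ^ d)) * LL ^ q * volume Bd := by
            rw [ENNReal.ofReal_mul (p := 4) (by norm_num)]; simp; ring
        _ ≤ ENNReal.ofReal N * LL ^ q * volume Bd :=
            mul_le_mul' (mul_le_mul' (ENNReal.ofReal_le_ofReal (by simp [N])) le_rfl) le_rfl
        _ ≤ _ := hCh
        _ = _ := by
            rw [dil_vol, mul_pow, ENNReal.ofReal_mul (by positivity), cube_vol, ENNReal.ofReal_mul hA.le]; ring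
    refine (ENNReal.mul_le_mul_iff_right ?_ ?_).1 h1
    · exact mul_ne_zero (by simpa using ha) hLq0
    · finiteness
  have hQpos : volume Q.set ≠ 0 := by rw [cube_vol]; simp; positivity
  have hQfin : volume Q.set ≠ ∞ := by rw [cube_vol]; simp
  have hex : ∃ x' ∈ Q.set, x' ∉ E ∧ x' ∉ Bd := by
    by_contra hc
    push Not at hc
    have hsub : Q.set ⊆ (E ∩ Q.set) ∪ Bd := by
      intro y hy
      by_cases hyE : y ∈ E
      · exact Or.inl ⟨hyE, hy⟩
      · exact Or.inr (hc y hy hyE)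
    have h1 : volume Q.set ≤ volume (E ∩ Q.set) + volume Bd := (measure_mono hsub).trans (measure_union_le _ _)
    have h2 : 4 * volume Q.set ≤ volume Q.set + volume Q.set := by
      calc 4 * volume Q.set ≤ 4 * (volume (E ∩ Q.set) + volume Bd) := mul_le_mul' le_rfl h1
        _ = 4 * volume (E ∩ Q.set) + 4 * volume Bd := by ring
        _ ≤ _ := add_le_add (HU x hx Q hxQ) hBd
    have h3 := ENNReal.toReal_mono (by finiteness) h2
    rw [ENNReal.toReal_mul, ENNReal.toReal_add hQfin hQfin] at h3
    have h4 := ENNReal.toReal_pos hQpos hQfin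
    simp at h3
    linarith
  obtain ⟨x', hx', hx'E, hx'B⟩ := hex
  have k1 : S.var ρ g x' ≤ κ * LL := not_lt.1 hx'E
  have k2 : S.var ρ g1 x' ≤ ENNReal.ofReal N * LL := (not_le.1 hx'B).le
  have e : g2 = fun y => g y - g1 y := by
    funext y
    simp only [g1, g2, indicator_apply, mem_compl_iff]
    split_ifs <;> simp_all
  have k3 : S.var ρ g2 x' ≤ κ * LL + ENNReal.ofReal N * LL := by
    rw [e]
    exact (var_sub S (by linarith) hg hg1 x').trans (add_le_add k1 k2)
  have k4 := H1 Q g2 LL hg2 ?_ ?_ ξ x' hξ hx'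
  · refine k4.trans ((add_le_add k3 le_rfl).trans ?_)
    calc κ * LL + ENNReal.ofReal N * LL + C1 * LL = (ENNReal.ofReal N + C1 + κ) * LL := by ring
      _ ≤ _ := mul_le_mul' (add_le_add le_add_self le_rfl) le_rfl
  · filter_upwards [hgL] with y hy
    exact (enorm_indicator_le_enorm_self _ _).trans hy
  · intro y hy
    simp [g2, hy]

end GM


namespace GM

structure BD {d : ℕ} (b : Rd d → ℝ) (L : ℝ≥0∞) where
  ι : Type
  cnt : Countable ι
  Q : ι → Set (Rd d)
  c : ι → Rd d
  r : ι → ℝ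
  rpos : ∀ j, 0 < r j
  meas : ∀ j, MeasurableSet (Q j)
  disj : Pairwise (Function.onFun Disjoint Q)
  sub : ∀ j, Q j ⊆ Metric.closedBall (c j) (r j)
  bm : Measurable b
  bint : ∫⁻ y, ‖b y‖ₑ ≠ ∞
  off : ∀ y, (∀ j, y ∉ Q j) → b y = 0
  canc : ∀ j, ∫ y in Q j, b y = 0
  ub : ∀ j, ∫⁻ y in Q j, ‖b y‖ₑ ≤ L * volume (Q j)

section
variable {d : ℕ} {b : Rd d → ℝ} {L : ℝ≥0∞} (D : BD b L)

def BD.m (j : D.ι) : ℝ≥0∞ := ∫⁻ y in D.Q j, ‖b y‖ₑ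

def uu (S : CZO d) (z : Rd d) (j : D.ι) : ℝ≥0∞ :=
  ENNReal.ofReal (th S (D.r j / dist z (D.c j)) / dist z (D.c j) ^ d)

def kk (z : Rd d) (j : D.ι) : ℝ≥0∞ := ENNReal.ofReal (2 ^ d / dist z (D.c j) ^ d)

def BD.G (S : CZO d) (x : Rd d) : ℝ≥0∞ := ∑' j, uu D S x j * D.m j

def NN (d : ℕ) : ℝ := 100 * (1 + Real.sqrt d) + Real.sqrt d

theorem BD.near {z : Rd d} {j : D.ι} {y : Rd d} (hy : y ∈ D.Q j) :
    |dist z y - dist z (D.c j)| ≤ D.r j := by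
  have h := D.sub j hy
  rw [Metric.mem_closedBall] at h
  rw [abs_le]
  have h1 := dist_triangle z (D.c j) y
  have h2 := dist_triangle z y (D.c j)
  rw [dist_comm (D.c j) y] at h1
  constructor <;> linarith

theorem geom1 (Q : Cube d) {x ξ : Rd d} (hx : x ∈ Q.set) (hξ : ξ ∈ Q.set) {j : D.ι}
    (hN : NN d * D.r j < dist x (D.c j)) (hJ : (D.Q j \ Q.dilate 3).Nonempty) :
    100 * D.r j < dist ξ (D.c j) ∧ Q.l ≤ 2 * dist ξ (D.c j) ∧
      dist x (D.c j) ≤ (2 + 2 * Real.sqrt d) * dist ξ (D.c j) := by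
  obtain ⟨y, hy, hyF⟩ := hJ
  have h1 := far_dist Q hξ hyF
  have h2 := abs_le.1 (D.near (z := ξ) hy)
  have h3 := cube_dist Q hx hξ
  have h4 := dist_triangle x ξ (D.c j)
  have hr := D.rpos j
  have hs := Real.sqrt_nonneg (d : ℝ)
  set s := Real.sqrt (d : ℝ)
  set R := dist ξ (D.c j)
  have h5 : Q.l ≤ R + D.r j := by linarith
  have h6 : s * Q.l ≤ s * (R + D.r j) := mul_le_mul_of_nonneg_left h5 hs
  have h7 : 100 * D.r j < R := by
    by_contra hc
    push Not at hc
    unfold NN at hN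
    have : (1 + s) * R ≤ (1 + s) * (100 * D.r j) := mul_le_mul_of_nonneg_left hc (by linarith)
    nlinarith
  refine ⟨h7, by linarith, ?_⟩
  have h8 : s * Q.l ≤ s * (2 * R) := mul_le_mul_of_nonneg_left (by linarith) hs
  nlinarith

theorem uu_cmp (S : CZO d) (d0 : 0 < d) {x ξ : Rd d} {j : D.ι} (hx : 0 < dist x (D.c j))
    (h : 100 * D.r j < dist ξ (D.c j))
    (h' : dist x (D.c j) ≤ (2 + 2 * Real.sqrt d) * dist ξ (D.c j)) :
    uu D S ξ j ≤ ENNReal.ofReal (⌈2 + 2 * Real.sqrt d⌉₊ * (2 + 2 * Real.sqrt d) ^ d) * uu D S x j := by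
  have hr := D.rpos j
  have hs := Real.sqrt_nonneg (d : ℝ)
  set E := 2 + 2 * Real.sqrt (d : ℝ)
  have hE : 0 < E := by simp only [E]; linarith
  set R := dist ξ (D.c j)
  set X := dist x (D.c j)
  have hR : 0 < R := by linarith
  unfold uu
  rw [← ENNReal.ofReal_mul (by positivity)]
  refine ENNReal.ofReal_le_ofReal ?_
  have h1 : th S (D.r j / R) ≤ ⌈E⌉₊ * th S (D.r j / X) := by
    refine (th_mono S ?_).trans (th_mul S (D := E) (by positivity))
    rw [div_le_iff₀ hR, mul_comm E, div_mul_eq_mul_div, div_mul_eq_mul_div, le_div_iff₀ hx]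
    nlinarith
  have h2 : (R ^ d)⁻¹ ≤ E ^ d * (X ^ d)⁻¹ := by
    rw [← div_eq_mul_inv, inv_le_comm₀ (by positivity) (by positivity), inv_div, div_le_iff₀ (by positivity), mul_comm, ← mul_pow]
    exact pow_le_pow_left₀ hx.le h' d
  rw [div_eq_mul_inv, div_eq_mul_inv]
  calc th S (D.r j / R) * (R ^ d)⁻¹ ≤ (⌈E⌉₊ * th S (D.r j / X)) * (E ^ d * (X ^ d)⁻¹) :=
        mul_le_mul h1 h2 (by positivity) (mul_nonneg (by positivity) (th_nonneg S _))
    _ = _ := by ring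

theorem shellR (d : ℕ) (hd : 0 < d) : ∃ C : ℝ≥0∞, C ≠ ∞ ∧ ∀ (b : Rd d → ℝ) (L : ℝ≥0∞) (D : BD b L) (ξ : Rd d)
    (R : ℝ), 0 < R → ∀ (P : D.ι → Prop), (∀ j, P j → 100 * D.r j < dist ξ (D.c j) ∧
      ∃ y ∈ D.Q j, ∃ y' ∈ D.Q j, dist ξ y ≤ R ∧ R < dist ξ y') →
    ∑' j, (if P j then ENNReal.ofReal (Real.sqrt (dist ξ (D.c j) / D.r j)) * kk D ξ j * D.m j else 0) ≤ C * L := by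
  obtain ⟨C, hC, H⟩ := shell_sum d hd (κ := 2) (by norm_num)
  set M := ENNReal.ofReal (2 * (2 ^ d * 2 ^ d)) with hMdef
  refine ⟨M * C, by finiteness, ?_⟩
  intro b L D ξ R hR P hP
  have := D.cnt
  have key := H ξ R hR {j // P j} (fun j => D.Q j.1) (fun j => D.r j.1) (fun j => D.meas _)
    (fun i j hij => D.disj (fun h => hij (Subtype.ext h))) (fun j => D.rpos _) (by
      rintro ⟨j, hj⟩ z hz
      obtain ⟨h1, y, hy, y', hy', h2, h3⟩ := hP j hj
      have a1 := abs_le.1 (D.near (z := ξ) hy)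
      have a2 := abs_le.1 (D.near (z := ξ) hy')
      have a3 := abs_le.1 (D.near (z := ξ) hz)
      have hr := D.rpos j
      refine ⟨by linarith, by linarith, abs_le.2 ⟨by simp only []; linarith, by simp only []; linarith⟩, by linarith⟩)
  have e : ∑' j, (if P j then ENNReal.ofReal (Real.sqrt (dist ξ (D.c j) / D.r j)) * kk D ξ j * D.m j else 0) =
      ∑' j : {j // P j}, ENNReal.ofReal (Real.sqrt (dist ξ (D.c j) / D.r j)) * kk D ξ j * D.m j := by
    rw [← tsum_subtype_eq_of_support_subset (s := {j | P j})]
    · refine tsum_congr fun j => ?_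
      exact if_pos j.2
    · intro j hj
      by_contra hc
      exact hj (if_neg hc)
  rw [e]
  refine le_trans ?_ (mul_le_mul' (mul_le_mul' le_rfl key) le_rfl)
  rw [mul_comm, ← mul_assoc, ← ENNReal.tsum_mul_left]
  refine ENNReal.tsum_le_tsum fun ⟨j, hj⟩ => ?_
  have h1 := (hP j hj).1
  have hr := D.rpos j
  set X := dist ξ (D.c j)
  have hX : 0 < X := by linarith
  calc ENNReal.ofReal (Real.sqrt (X / D.r j)) * kk D ξ j * D.m j
      ≤ ENNReal.ofReal (Real.sqrt (X / D.r j)) * kk D ξ j * (L * volume (D.Q j)) := mul_le_mul' le_rfl (D.ub j)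
    _ = L * ∫⁻ y in D.Q j, ENNReal.ofReal (Real.sqrt (X / D.r j)) * kk D ξ j := by
      rw [setLIntegral_const]; ring
    _ ≤ L * ∫⁻ y in D.Q j, M * ENNReal.ofReal (Real.sqrt (dist ξ y / D.r j) / dist ξ y ^ d) := by
      refine mul_le_mul' le_rfl (setLIntegral_mono' (D.meas j) fun y hy => ?_)
      unfold kk
      rw [← ENNReal.ofReal_mul (by positivity), ← ENNReal.ofReal_mul (by positivity)]
      refine ENNReal.ofReal_le_ofReal ?_
      have a3 := abs_le.1 (D.near (z := ξ) hy)
      change -D.r j ≤ dist ξ y - X ∧ dist ξ y - X ≤ D.r j at a3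
      set Y := dist ξ y
      have hY : 0 < Y := by linarith
      have hYX : Y ≤ 2 * X := by linarith
      have hXY : X ≤ 2 * Y := by linarith
      have b1 : Real.sqrt (X / D.r j) ≤ 2 * Real.sqrt (Y / D.r j) := by
        rw [show (2:ℝ) = Real.sqrt 4 by rw [show (4:ℝ) = 2 ^ 2 by norm_num]; simp, ← Real.sqrt_mul (by norm_num)]
        refine Real.sqrt_le_sqrt ?_
        rw [← mul_div_assoc]
        gcongr
        linarith
      have b2 : 2 ^ d / X ^ d ≤ 2 ^ d * 2 ^ d / Y ^ d := by
        rw [div_le_div_iff₀ (by positivity) (by positivity), mul_assoc, ← mul_pow 2 X]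
        gcongr
      calc Real.sqrt (X / D.r j) * (2 ^ d / X ^ d) ≤ (2 * Real.sqrt (Y / D.r j)) * (2 ^ d * 2 ^ d / Y ^ d) := by gcongr
        _ = _ := by ring
    _ = _ := by
      rw [lintegral_const_mul _ (by fun_prop)]; ring

theorem meetR (d : ℕ) (hd : 0 < d) : ∃ C : ℝ≥0∞, C ≠ ∞ ∧ ∀ (b : Rd d → ℝ) (L : ℝ≥0∞) (D : BD b L) (ξ : Rd d)
    (l : ℝ), 0 < l → ∀ (P : D.ι → Prop), (∀ j, P j → l ≤ 2 * dist ξ (D.c j) ∧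
      D.Q j ⊆ Metric.closedBall ξ (4 * Real.sqrt d * l)) →
    ∑' j, (if P j then kk D ξ j * D.m j else 0) ≤ C * L := by
  set B := volume (Metric.ball (0 : Rd d) 1)
  have hB : B ≠ ∞ := measure_ball_lt_top.ne
  refine ⟨ENNReal.ofReal (4 ^ d) * (ENNReal.ofReal ((4 * Real.sqrt d) ^ d) * B), by finiteness, ?_⟩
  intro b L D ξ l hl P hP
  have := D.cnt
  have e : ∑' j, (if P j then kk D ξ j * D.m j else 0) =
      ∑' j : {j // P j}, kk D ξ j * D.m j := by
    rw [← tsum_subtype_eq_of_support_subset (s := {j | P j})]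
    · refine tsum_congr fun j => ?_
      exact if_pos j.2
    · intro j hj
      by_contra hc
      exact hj (if_neg hc)
  rw [e]
  have h1 : ∀ j : {j // P j}, kk D ξ j * D.m j ≤ ENNReal.ofReal (4 ^ d / l ^ d) * L * volume (D.Q j) := by
    rintro ⟨j, hj⟩
    rw [mul_assoc]
    refine mul_le_mul' (ENNReal.ofReal_le_ofReal ?_) (D.ub j)
    have h2 := (hP j hj).1
    have h3 : 0 < dist ξ (D.c j) := by linarith
    rw [div_le_div_iff₀ (by positivity) (by positivity), ← mul_pow, ← mul_pow]
    exact pow_le_pow_left₀ (by positivity) (by linarith) d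
  refine (ENNReal.tsum_le_tsum h1).trans ?_
  rw [ENNReal.tsum_mul_left, ← measure_iUnion]
  · calc _ ≤ ENNReal.ofReal (4 ^ d / l ^ d) * L * volume (Metric.closedBall ξ (4 * Real.sqrt d * l)) :=
          mul_le_mul' le_rfl (measure_mono (iUnion_subset fun j : {j // P j} => (hP j.1 j.2).2))
      _ = (ENNReal.ofReal (4 ^ d / l ^ d) * ENNReal.ofReal (l ^ d)) * (ENNReal.ofReal ((4 * Real.sqrt d) ^ d) * B) * L := by
        rw [vol_cball _ (by positivity), mul_pow _ l, ENNReal.ofReal_mul (by positivity)]; ring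
      _ = _ := by
        rw [← ENNReal.ofReal_mul (by positivity), div_mul_cancel₀ _ (by positivity)]
  · exact fun i j hij => D.disj (fun h => hij (Subtype.ext h))
  · exact fun j => D.meas _

theorem BD.good {d : ℕ} {b : Rd d → ℝ} {L : ℝ≥0∞} (D : BD b L) : Good b := good_of_L1 D.bm D.bint

theorem tij (S : CZO d) (Q : Cube d) (ξ : Rd d) (ε : ℕ → ℝ) (i : ℕ) (j : D.ι)
    (hJ : (D.Q j \ Q.dilate 3).Nonempty → 100 * D.r j < dist ξ (D.c j)) :
    ‖∫ y in ann ξ ε i ∩ D.Q j, S.K ξ y * ((Q.dilate 3)ᶜ).indicator b y‖ₑ ≤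
      ENNReal.ofReal S.Cst * ((((if (D.Q j \ Q.dilate 3).Nonempty then uu D S ξ j else 0) +
        (if (D.Q j \ Q.dilate 3).Nonempty ∧ (D.Q j ∩ Q.dilate 3).Nonempty then kk D ξ j else 0)) +
        ((if (D.Q j \ Q.dilate 3).Nonempty ∧ ∃ y ∈ D.Q j, ∃ y' ∈ D.Q j, dist ξ y ≤ ε i ∧ ε i < dist ξ y' then kk D ξ j else 0) +
        (if (D.Q j \ Q.dilate 3).Nonempty ∧ ∃ y ∈ D.Q j, ∃ y' ∈ D.Q j, dist ξ y ≤ ε (i+1) ∧ ε (i+1) < dist ξ y' then kk D ξ j else 0))) *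
        ∫⁻ y in ann ξ ε i ∩ D.Q j, ‖b y‖ₑ) := by
  have hAm : MeasurableSet (ann ξ ε i ∩ D.Q j) := (ann_meas _ _ _).inter (D.meas j)
  set mij := ∫⁻ y in ann ξ ε i ∩ D.Q j, ‖b y‖ₑ with hmij
  have hr := D.rpos j
  by_cases hJj : (D.Q j \ Q.dilate 3).Nonempty
  swap
  · have : ∫ y in ann ξ ε i ∩ D.Q j, S.K ξ y * ((Q.dilate 3)ᶜ).indicator b y = 0 := by
      refine setIntegral_eq_zero_of_forall_eq_zero fun y hy => ?_
      have : y ∈ Q.dilate 3 := by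
        by_contra hc
        exact hJj ⟨y, hy.2, hc⟩
      simp [this]
    rw [this]; simp
  have h1 := hJ hJj
  set X := dist ξ (D.c j) with hXdef
  have hX : 0 < X := by linarith
  have crude : ‖∫ y in ann ξ ε i ∩ D.Q j, S.K ξ y * ((Q.dilate 3)ᶜ).indicator b y‖ₑ ≤
      ENNReal.ofReal S.Cst * (kk D ξ j * mij) := by
    refine (enorm_integral_le_lintegral_enorm _).trans ?_
    rw [← mul_assoc, hmij, ← lintegral_const_mul _ D.bm.enorm]
    refine setLIntegral_mono' hAm fun y hy => ?_
    rw [enorm_mul]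
    refine mul_le_mul' ?_ (enorm_indicator_le_enorm_self _ _)
    have a3 := abs_le.1 (D.near (z := ξ) hy.2)
    have hY : 0 < dist ξ y := by linarith
    refine (K_le S (dist_pos.1 hY)).trans (mul_le_mul' le_rfl ?_)
    unfold kd kk
    refine ENNReal.ofReal_le_ofReal ?_
    rw [inv_eq_one_div, div_le_div_iff₀ (by positivity) (by positivity), one_mul, ← mul_pow]
    gcongr
    linarith
  rw [if_pos hJj]
  by_cases hm : (D.Q j ∩ Q.dilate 3).Nonempty
  · rw [if_pos (⟨hJj, hm⟩ : _ ∧ _)]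
    refine crude.trans (mul_le_mul' le_rfl (mul_le_mul' ?_ le_rfl))
    exact le_add_right le_add_self
  by_cases hs1 : ∃ y ∈ D.Q j, ∃ y' ∈ D.Q j, dist ξ y ≤ ε i ∧ ε i < dist ξ y'
  · rw [if_pos (⟨hJj, hs1⟩ : _ ∧ _)]
    refine crude.trans (mul_le_mul' le_rfl (mul_le_mul' ?_ le_rfl))
    exact le_add_left le_self_add
  by_cases hs2 : ∃ y ∈ D.Q j, ∃ y' ∈ D.Q j, dist ξ y ≤ ε (i+1) ∧ ε (i+1) < dist ξ y'
  · rw [if_pos (⟨hJj, hs2⟩ : _ ∧ _)]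
    refine crude.trans (mul_le_mul' le_rfl (mul_le_mul' ?_ le_rfl))
    exact le_add_left le_add_self
  by_cases hemp : (ann ξ ε i ∩ D.Q j).Nonempty
  swap
  · rw [not_nonempty_iff_eq_empty.1 hemp]; simp
  obtain ⟨y0, hy0, hy0Q⟩ := hemp
  rw [mem_ann] at hy0
  have hsubA : D.Q j ⊆ ann ξ ε i := by
    intro y hy
    push Not at hs1 hs2
    rw [mem_ann]
    constructor
    · by_contra hc
      push Not at hc
      have := hs2 y hy y0 hy0Q hc
      linarith
    · exact hs1 y0 hy0Q y hy hy0.2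
  have eA : ann ξ ε i ∩ D.Q j = D.Q j := inter_eq_right.2 hsubA
  have hbi : IntegrableOn b (D.Q j) :=
    ⟨D.bm.aestronglyMeasurable, lt_of_le_of_lt (setLIntegral_le_lintegral _ _) (lt_top_iff_ne_top.2 D.bint)⟩
  have hptK : ∀ y ∈ D.Q j, ‖S.K ξ y - S.K ξ (D.c j)‖ₑ ≤ ENNReal.ofReal S.Cst * uu D S ξ j := by
    intro y hy
    have hsub := D.sub j hy
    rw [Metric.mem_closedBall, dist_comm] at hsub
    have hne : D.c j ≠ ξ := by
      intro h; rw [hXdef, h, dist_self] at hX; exact lt_irrefl _ hX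
    have := K2 S (x := D.c j) (x' := y) (y := ξ) hne (by rw [dist_comm _ ξ]; linarith)
    rw [dist_comm _ ξ, ← hXdef] at this
    rw [enorm_sub_rev, Real.enorm_eq_ofReal_abs, uu, ← ENNReal.ofReal_mul S.hCst.le]
    refine ENNReal.ofReal_le_ofReal (this.trans ?_)
    rw [← hXdef, mul_div_assoc]
    have hc := S.hCst
    gcongr
    exact th_mono S (by gcongr)
  have e2 : ∫ y in ann ξ ε i ∩ D.Q j, S.K ξ y * ((Q.dilate 3)ᶜ).indicator b y =
      ∫ y in D.Q j, (S.K ξ y - S.K ξ (D.c j)) * b y := by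
    rw [eA]
    have e3 : ∫ y in D.Q j, S.K ξ y * ((Q.dilate 3)ᶜ).indicator b y = ∫ y in D.Q j, S.K ξ y * b y := by
      refine setIntegral_congr_fun (D.meas j) fun y hy => ?_
      have : y ∈ (Q.dilate 3)ᶜ := fun hc => hm ⟨y, hy, hc⟩
      simp only [indicator_of_mem this]
    rw [e3]
    have hi2 : IntegrableOn (fun y => S.K ξ (D.c j) * b y) (D.Q j) := hbi.const_mul _
    have hi3 : IntegrableOn (fun y => (S.K ξ y - S.K ξ (D.c j)) * b y) (D.Q j) := by
      refine ⟨(((Kmeas S ξ).sub_const _).mul D.bm).aestronglyMeasurable, ?_⟩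
      have : ∫⁻ y in D.Q j, ‖(S.K ξ y - S.K ξ (D.c j)) * b y‖ₑ ≤ ENNReal.ofReal S.Cst * uu D S ξ j * ∫⁻ y in D.Q j, ‖b y‖ₑ := by
        rw [← lintegral_const_mul _ D.bm.enorm]
        refine setLIntegral_mono' (D.meas j) fun y hy => ?_
        rw [enorm_mul]
        exact mul_le_mul' (hptK y hy) le_rfl
      refine lt_of_le_of_lt this ?_
      have h5 : ∫⁻ y in D.Q j, ‖b y‖ₑ ≠ ∞ := ne_top_of_le_ne_top D.bint (setLIntegral_le_lintegral _ _)
      refine lt_top_iff_ne_top.2 (ENNReal.mul_ne_top (ENNReal.mul_ne_top ENNReal.ofReal_ne_top ENNReal.ofReal_ne_top) h5)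
    have := integral_add hi3 hi2
    rw [integral_const_mul, D.canc j, mul_zero, add_zero] at this
    rw [← this]
    refine setIntegral_congr_fun (D.meas j) fun y hy => ?_
    ring
  rw [e2]
  refine (enorm_integral_le_lintegral_enorm _).trans ?_
  calc ∫⁻ y in D.Q j, ‖(S.K ξ y - S.K ξ (D.c j)) * b y‖ₑ ≤ ENNReal.ofReal S.Cst * uu D S ξ j * ∫⁻ y in D.Q j, ‖b y‖ₑ := by
        rw [← lintegral_const_mul _ D.bm.enorm]
        refine setLIntegral_mono' (D.meas j) fun y hy => ?_
        rw [enorm_mul]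
        exact mul_le_mul' (hptK y hy) le_rfl
    _ = ENNReal.ofReal S.Cst * (uu D S ξ j * mij) := by rw [hmij, eA, mul_assoc]
    _ ≤ _ := mul_le_mul' le_rfl (mul_le_mul' (le_add_right le_self_add) le_rfl)
end

end GM


namespace GM

theorem prod_le_sq (A B L G : ℝ≥0∞) : (A * L) * (B * G) ≤ ((A + B) * (L + G)) ^ 2 := by
  rw [sq]
  exact mul_le_mul' (mul_le_mul' le_self_add le_self_add) (mul_le_mul' le_add_self le_add_self)

theorem lemB {d : ℕ} (hd : 0 < d) (S : CZO d) {ρ : ℝ} (hρ : 2 < ρ) : ∃ C : ℝ≥0∞, C ≠ ∞ ∧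
    ∀ (b : Rd d → ℝ) (L : ℝ≥0∞) (D : BD b L) (x : Rd d), (∀ j, NN d * D.r j < dist x (D.c j)) →
    ∀ Q : Cube d, x ∈ Q.set → ∀ ξ ∈ Q.set,
      S.var ρ (((Q.dilate 3)ᶜ).indicator b) ξ ≤ C * (L + D.G S x) := by
  obtain ⟨C1, hC1, H1⟩ := shellR d hd
  obtain ⟨C2, hC2, H2⟩ := meetR d hd
  set c := ENNReal.ofReal S.Cst
  set Cu := ENNReal.ofReal (⌈2 + 2 * Real.sqrt d⌉₊ * (2 + 2 * Real.sqrt d) ^ d)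
  set T := ENNReal.ofReal (2 ^ d)
  set Y := c * (C1 + T * Cu)
  refine ⟨c * (Cu + C2) + (Y + Y), by finiteness, ?_⟩
  intro b L D x hx Q hxQ ξ hξ
  have := D.cnt
  set h := ((Q.dilate 3)ᶜ).indicator b
  have hh : Good h := D.good.ind (dil_meas Q 3).compl
  set J : D.ι → Prop := fun j => (D.Q j \ Q.dilate 3).Nonempty with hJdef
  have hgeo : ∀ j, J j → _ := fun j hj => geom1 D Q hxQ hξ (hx j) hj
  set G := D.G S x
  set cu : D.ι → ℝ≥0∞ := fun j => if J j then uu D S ξ j else 0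
  set ck : D.ι → ℝ≥0∞ := fun j => if J j ∧ (D.Q j ∩ Q.dilate 3).Nonempty then kk D ξ j else 0
  set st : ℝ → D.ι → ℝ≥0∞ := fun R j => if J j ∧ ∃ y ∈ D.Q j, ∃ y' ∈ D.Q j, dist ξ y ≤ R ∧ R < dist ξ y' then kk D ξ j else 0
  have hxpos : ∀ j, 0 < dist x (D.c j) := by
    intro j
    have h1 : 0 ≤ NN d := by unfold NN; positivity
    have := mul_nonneg h1 (D.rpos j).le
    linarith [hx j]
  have hcu : ∑' j, cu j * D.m j ≤ Cu * G := by
    rw [show G = ∑' j, uu D S x j * D.m j from rfl, ← ENNReal.tsum_mul_left]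
    refine ENNReal.tsum_le_tsum fun j => ?_
    rw [← mul_assoc]
    refine mul_le_mul' ?_ le_rfl
    simp only [cu]
    split_ifs with hj
    · exact uu_cmp D S hd (hxpos j) (hgeo j hj).1 (hgeo j hj).2.2
    · exact zero_le
  have hck : ∑' j, ck j * D.m j ≤ C2 * L := by
    have := H2 b L D ξ Q.l Q.hl (fun j => J j ∧ (D.Q j ∩ Q.dilate 3).Nonempty) ?_
    · refine le_trans (le_of_eq (tsum_congr fun j => ?_)) this
      simp only [ck]
      split_ifs <;> simp
    rintro j ⟨hj, y, hy, hyQ⟩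
    have h1 := hgeo j hj
    refine ⟨h1.2.1, fun z hz => ?_⟩
    have h2 := dil_dist Q hξ hyQ
    have a1 := abs_le.1 (D.near (z := ξ) hy)
    have a2 := abs_le.1 (D.near (z := ξ) hz)
    rw [Metric.mem_closedBall, dist_comm]
    have hr := D.rpos j
    linarith
  refine var_le S fun ε hε => ?_
  have hanti := hε.1.antitone
  have hpos := hε.2.1
  set m : ℕ → D.ι → ℝ≥0∞ := fun i j => ∫⁻ y in ann ξ ε i ∩ D.Q j, ‖b y‖ₑ
  have hmj : ∀ i j, m i j ≤ D.m j := fun i j => lintegral_mono_set inter_subset_right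
  have hms : ∀ j, ∑' i, m i j ≤ D.m j := fun j => sum_ann_le ξ hanti (D.meas j) _
  have hsw : ∀ w : D.ι → ℝ≥0∞, ∑' i, ∑' j, w j * m i j ≤ ∑' j, w j * D.m j := by
    intro w
    rw [ENNReal.tsum_comm]
    refine ENNReal.tsum_le_tsum fun j => ?_
    rw [ENNReal.tsum_mul_left]
    exact mul_le_mul' le_rfl (hms j)
  have hstep : ∀ i, inc S h ξ ε i ≤ 0 + (c * ∑' j, (cu j + ck j) * m i j +
      (c * ∑' j, st (ε i) j * m i j + c * ∑' j, st (ε (i+1)) j * m i j)) := by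
    intro i
    rw [zero_add, ← mul_add, ← mul_add, ← ENNReal.tsum_add, ← ENNReal.tsum_add, ← ENNReal.tsum_mul_left]
    simp only [inc]
    rw [incr S hh ξ hanti hpos]
    have hsubξ : ann ξ ε i ⊆ far ξ (ε (i+1)) := sdiff_subset
    have hinteg := (hh.integrableOn S ξ (hpos (i+1))).mono_set hsubξ
    have e1 : ∫ y in ann ξ ε i, S.K ξ y * h y = ∫ y in ⋃ j, ann ξ ε i ∩ D.Q j, S.K ξ y * h y := by
      rw [← inter_iUnion]
      refine (setIntegral_eq_of_subset_of_forall_sdiff_eq_zero (ann_meas _ _ _) inter_subset_left ?_)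
      intro y hy
      have : b y = 0 := by
        refine D.off y fun j hj => hy.2 ⟨hy.1, mem_iUnion.2 ⟨j, hj⟩⟩
      simp [h, indicator_apply, this]
    have hsum := hasSum_integral_iUnion (f := fun y => S.K ξ y * h y) (μ := volume)
      (s := fun j => ann ξ ε i ∩ D.Q j) (fun j => (ann_meas _ _ _).inter (D.meas j))
      (fun j j' hjj => (D.disj hjj).mono inter_subset_right inter_subset_right)
      (hinteg.mono_set (iUnion_subset fun j => inter_subset_left))
    rw [e1, ← hsum.tsum_eq]
    refine enorm_tsum_le_tsum_enorm.trans ?_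
    refine ENNReal.tsum_le_tsum fun j => ?_
    refine (tij D S Q ξ ε i j fun hj => (hgeo j hj).1).trans (le_of_eq ?_)
    simp only [c, cu, ck, st, m, J]
    ring
  have ha : ∑' i, c * ∑' j, (cu j + ck j) * m i j ≤ c * (Cu * G + C2 * L) := by
    rw [ENNReal.tsum_mul_left]
    refine mul_le_mul' le_rfl ((hsw _).trans ?_)
    simp only [add_mul, ENNReal.tsum_add]
    exact add_le_add hcu hck
  have hc : ∀ R : ℕ → ℝ, (∀ i, 0 < R i) → ∑' i, (c * ∑' j, st (R i) j * m i j) ^ 2 ≤ (Y * (L + G)) ^ 2 := by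
    intro R hR
    set w : D.ι → ℝ≥0∞ := fun j => if J j then ENNReal.ofReal (Real.sqrt (D.r j / dist ξ (D.c j))) * kk D ξ j else 0
    have hw : ∑' j, w j * D.m j ≤ T * Cu * G := by
      rw [mul_assoc]
      refine le_trans ?_ (mul_le_mul' le_rfl hcu)
      rw [← ENNReal.tsum_mul_left]
      refine ENNReal.tsum_le_tsum fun j => ?_
      rw [← mul_assoc]
      refine mul_le_mul' ?_ le_rfl
      simp only [w, cu]
      split_ifs with hj
      · unfold kk uu
        rw [← ENNReal.ofReal_mul (by positivity), ← ENNReal.ofReal_mul (by positivity)]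
        refine ENNReal.ofReal_le_ofReal ?_
        calc _ ≤ th S (D.r j / dist ξ (D.c j)) * (2 ^ d / dist ξ (D.c j) ^ d) := by
              gcongr
              exact sqrt_le_th S _
          _ = _ := by ring
      · simp
    have hi : ∀ i, (∑' j, st (R i) j * m i j) ^ 2 ≤ (C1 * L) * ∑' j, w j * m i j := by
      intro i
      have h1 := H1 b L D ξ (R i) (hR i) (fun j => J j ∧ ∃ y ∈ D.Q j, ∃ y' ∈ D.Q j, dist ξ y ≤ R i ∧ R i < dist ξ y')
        (fun j hj => ⟨(hgeo j hj.1).1, hj.2⟩)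
      refine le_trans (cs_sum (b := fun j => w j * m i j) ?_) (mul_le_mul' h1 le_rfl)
      intro j
      simp only [st, w]
      split_ifs with hj hj'
      · have hg := (hgeo j hj').1
        have hr := D.rpos j
        have hone : ENNReal.ofReal (Real.sqrt (dist ξ (D.c j) / D.r j)) * ENNReal.ofReal (Real.sqrt (D.r j / dist ξ (D.c j))) = 1 := by
          rw [← ENNReal.ofReal_mul (by positivity), ← Real.sqrt_mul (by positivity)]
          have : dist ξ (D.c j) / D.r j * (D.r j / dist ξ (D.c j)) = 1 := by
            have : 0 < dist ξ (D.c j) := by linarith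
            field_simp
          rw [this]; simp
        calc (kk D ξ j * m i j) ^ 2 = (ENNReal.ofReal (Real.sqrt (dist ξ (D.c j) / D.r j)) * ENNReal.ofReal (Real.sqrt (D.r j / dist ξ (D.c j)))) * (kk D ξ j * kk D ξ j * (m i j * m i j)) := by
              rw [hone]; ring
          _ ≤ (ENNReal.ofReal (Real.sqrt (dist ξ (D.c j) / D.r j)) * ENNReal.ofReal (Real.sqrt (D.r j / dist ξ (D.c j)))) * (kk D ξ j * kk D ξ j * (D.m j * m i j)) := by
              refine mul_le_mul' le_rfl (mul_le_mul' le_rfl (mul_le_mul' (hmj i j) le_rfl))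
          _ = _ := by ring
      · exact absurd hj.1 hj'
      · simp
      · simp
    calc ∑' i, (c * ∑' j, st (R i) j * m i j) ^ 2 ≤ ∑' i, c ^ 2 * ((C1 * L) * ∑' j, w j * m i j) := by
          refine ENNReal.tsum_le_tsum fun i => ?_
          rw [mul_pow]
          exact mul_le_mul' le_rfl (hi i)
      _ = c ^ 2 * ((C1 * L) * ∑' i, ∑' j, w j * m i j) := by rw [ENNReal.tsum_mul_left, ENNReal.tsum_mul_left]
      _ ≤ c ^ 2 * ((C1 * L) * (T * Cu * G)) := mul_le_mul' le_rfl (mul_le_mul' le_rfl ((hsw w).trans hw))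
      _ ≤ c ^ 2 * ((C1 + T * Cu) * (L + G)) ^ 2 := mul_le_mul' le_rfl (prod_le_sq _ _ _ _)
      _ = _ := by simp only [Y]; ring
  have := nrm_split hρ _ (fun _ => 0) _ _ _ hstep ha (hc _ hpos) (hc _ fun i => hpos (i+1))
  refine this.trans ?_
  have hz : nrm ρ (fun _ => 0) = 0 := by
    unfold nrm
    have h0 : 0 < ρ := by linarith
    simp [h0]
  rw [hz, zero_add]
  calc c * (Cu * G + C2 * L) + (Y * (L + G) + Y * (L + G)) ≤ c * (Cu * (L + G) + C2 * (L + G)) + (Y * (L + G) + Y * (L + G)) := by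
        refine add_le_add (mul_le_mul' le_rfl (add_le_add (mul_le_mul' le_rfl le_add_self) (mul_le_mul' le_rfl le_self_add))) le_rfl
    _ = _ := by ring

end GM


namespace GM

section
variable {d : ℕ} {b : Rd d → ℝ} {L : ℝ≥0∞} (D : BD b L)

theorem uu_meas (S : CZO d) (j : D.ι) : Measurable (fun x => uu D S x j) := by
  unfold uu
  have h1 : Measurable (fun x : Rd d => dist x (D.c j)) := by fun_prop
  have h2 : Measurable (fun x : Rd d => th S (D.r j / dist x (D.c j))) :=
    (th_mono S).measurable.comp (measurable_const.div h1)
  exact (h2.div (h1.pow_const d)).ennreal_ofReal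

theorem G_meas (S : CZO d) : Measurable (D.G S) := by
  have := D.cnt
  unfold BD.G
  exact Measurable.ennreal_tsum fun j => (uu_meas D S j).mul_const _

theorem Gint (hd : 0 < d) (S : CZO d) :
    ∫⁻ x in {x | ∀ j, NN d * D.r j < dist x (D.c j)}, D.G S x ≤ Cth S * ∑' j, D.m j := by
  have := D.cnt
  unfold BD.G
  rw [lintegral_tsum fun j => ((uu_meas D S j).mul_const _).aemeasurable, ← ENNReal.tsum_mul_left]
  refine ENNReal.tsum_le_tsum fun j => ?_
  rw [lintegral_mul_const _ (uu_meas D S j)]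
  refine mul_le_mul' ?_ le_rfl
  refine le_trans ?_ (dini_le hd S (D.c j) (D.rpos j))
  simp only [uu, dist_comm (D.c j)]
  refine lintegral_mono_set fun x hx => ?_
  have h1 := hx j
  have h2 : 1 ≤ NN d := by
    unfold NN
    have := Real.sqrt_nonneg (d : ℝ)
    linarith
  have h3 := D.rpos j
  change D.r j < dist (D.c j) x
  rw [dist_comm]
  nlinarith

theorem Vb {C : ℝ≥0∞} (S : CZO d) {ρ : ℝ} (hρ : 2 < ρ) (x : Rd d)
    (H : ∀ Q : Cube d, x ∈ Q.set → ∀ ξ ∈ Q.set, S.var ρ (((Q.dilate 3)ᶜ).indicator b) ξ ≤ C) :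
    S.var ρ b x ≤ C := by
  refine var_le S fun ε hε => ?_
  have hanti := hε.1.antitone
  have hpos := hε.2.1
  have hρ0 : 0 < ρ := by linarith
  unfold nrm
  rw [one_div, ENNReal.rpow_inv_le_iff hρ0]
  rw [ENNReal.tsum_eq_iSup_nat]
  refine iSup_le fun n => ?_
  set l : ℝ := ε n / (2 * (Real.sqrt d + 1))
  have hs := Real.sqrt_nonneg (d : ℝ)
  have hl : 0 < l := div_pos (hpos n) (by linarith)
  set Q : Cube d := ⟨fun i => x i, l, hl⟩
  have hxQ : x ∈ Q.set := by
    intro i; simp only [Q]; constructor <;> linarith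
  have hQ := H Q hxQ x hxQ
  have e : ∀ i ≤ n, S.trunc (ε i) b x = S.trunc (ε i) (((Q.dilate 3)ᶜ).indicator b) x := by
    intro i hi
    unfold CZO.trunc
    refine setIntegral_congr_fun (far_meas x (ε i)) fun y hy => ?_
    have hy1 : ε n < dist x y := lt_of_le_of_lt (hanti hi) hy
    have : y ∈ (Q.dilate 3)ᶜ := by
      intro hc
      have h1 := dil_dist Q hxQ hc
      have h2 : Real.sqrt d * (2 * l) ≤ ε n := by
        simp only [l]
        rw [show Real.sqrt d * (2 * (ε n / (2 * (Real.sqrt d + 1)))) = ε n * (Real.sqrt d / (Real.sqrt d + 1)) by field_simp]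
        have : Real.sqrt d / (Real.sqrt d + 1) ≤ 1 := by rw [div_le_one (by linarith)]; linarith
        have h4 := hpos n
        nlinarith
      have h3 : Q.l = l := rfl
      rw [h3] at h1
      linarith
    simp only [indicator_of_mem this]
  calc ∑ i ∈ Finset.range n, inc S b x ε i ^ ρ
      = ∑ i ∈ Finset.range n, inc S (((Q.dilate 3)ᶜ).indicator b) x ε i ^ ρ := by
        refine Finset.sum_congr rfl fun i hi => ?_
        rw [Finset.mem_range] at hi
        unfold inc
        rw [e i hi.le, e (i+1) hi]
    _ ≤ ∑' i, inc S (((Q.dilate 3)ᶜ).indicator b) x ε i ^ ρ := ENNReal.sum_le_tsum _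
    _ ≤ C ^ ρ := by
        rw [← ENNReal.rpow_inv_le_iff hρ0, ← one_div]
        exact (nrm_le_var S hε).trans hQ
end

theorem decomp (d : ℕ) (hd : 0 < d) {q : ℝ} (hq : 1 < q) : ∃ C0 : ℝ, 1 ≤ C0 ∧ ∀ f : Rd d → ℝ, Measurable f → ∀ lam : ℝ, 0 < lam →
    ∫⁻ y in {y | ENNReal.ofReal lam < ‖f y‖ₑ}, ‖f y‖ₑ ≠ ∞ →
    ∃ (b : Rd d → ℝ) (D : BD b (ENNReal.ofReal (C0 * lam))),
      ∑' j, volume (Metric.closedBall (D.c j) (NN d * D.r j)) ≤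
        ENNReal.ofReal C0 * ((ENNReal.ofReal lam)⁻¹ * ∫⁻ y in {y | ENNReal.ofReal lam < ‖f y‖ₑ}, ‖f y‖ₑ) ∧
      (∀ᵐ y, ‖f y - b y‖ₑ ≤ ENNReal.ofReal (C0 * lam)) ∧
      ∫⁻ y, ‖f y - b y‖ₑ ^ q ≤ ENNReal.ofReal C0 * ((∫⁻ y in {y | ‖f y‖ₑ ≤ ENNReal.ofReal lam}, ‖f y‖ₑ ^ q) +
        ENNReal.ofReal lam ^ q * ((ENNReal.ofReal lam)⁻¹ * ∫⁻ y in {y | ENNReal.ofReal lam < ‖f y‖ₑ}, ‖f y‖ₑ)) ∧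
      ∑' j, D.m j ≤ ENNReal.ofReal C0 * ∫⁻ y in {y | ENNReal.ofReal lam < ‖f y‖ₑ}, ‖f y‖ₑ := by
  obtain ⟨C, hC, HC⟩ := CZ_exists d hd
  set B := volume (Metric.ball (0 : Rd d) 1) with hBdef
  have hB : B ≠ ∞ := measure_ball_lt_top.ne
  have hNN : 0 ≤ NN d := by unfold NN; positivity
  set C1 : ℝ := NN d ^ d * C * B.toReal
  set C2 : ℝ := 2 ^ q * (2 * C) ^ q
  have hC1 : 0 ≤ C1 := by positivity
  have hC2 : 0 ≤ C2 := by positivity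
  have hC2' : 2 ^ q ≤ C2 := by
    simp only [C2]
    have : 1 ≤ (2 * C) ^ q := Real.one_le_rpow (by linarith) (by linarith)
    have h2 : (0:ℝ) ≤ 2 ^ q := by positivity
    nlinarith
  refine ⟨2 * C + C1 + C2, by linarith, ?_⟩
  intro f hf lam hlam hI
  set C0 := 2 * C + C1 + C2
  set la := ENNReal.ofReal lam with hla
  have hla0 : la ≠ 0 := by simpa [la] using hlam
  have hlat : la ≠ ∞ := ENNReal.ofReal_ne_top
  set A := {y | la < ‖f y‖ₑ} with hA
  have hAm : MeasurableSet A := measurableSet_lt measurable_const hf.enorm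
  set I := ∫⁻ y in A, ‖f y‖ₑ with hIdef
  set f1 := A.indicator f with hf1
  have hf1m : Measurable f1 := hf.indicator hAm
  have hI1 : ∫⁻ y, ‖f1 y‖ₑ = I := by
    simp only [hf1, enorm_indicator_eq_indicator_enorm, hIdef]
    rw [lintegral_indicator hAm]
  obtain ⟨Z⟩ := HC f1 hf1m (by rw [hI1]; exact hI) lam hlam
  have := Z.cnt
  have hf1i : ∀ j, IntegrableOn f1 (Z.Q j) := fun j =>
    ⟨hf1m.aestronglyMeasurable, lt_of_le_of_lt (setLIntegral_le_lintegral _ _) (by rw [hI1]; exact lt_top_iff_ne_top.2 hI)⟩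
  have hvpos : ∀ j, volume (Z.Q j) ≠ 0 := by
    intro j h0
    have h1 := Z.vol j
    rw [h0, mul_zero, nonpos_iff_eq_zero, ENNReal.ofReal_eq_zero] at h1
    have := pow_pos (Z.rpos j) d
    linarith
  have hvfin : ∀ j, volume (Z.Q j) ≠ ∞ := fun j =>
    ne_top_of_le_ne_top measure_closedBall_lt_top.ne (measure_mono (Z.sub j))
  set av : Z.ι → ℝ := fun j => (∫ y in Z.Q j, f1 y) / (volume (Z.Q j)).toReal with hav
  have havb : ∀ j, ‖av j‖ₑ ≤ ENNReal.ofReal (C * lam) := by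
    intro j
    have h0 := ENNReal.toReal_pos (hvpos j) (hvfin j)
    have h1 : ‖∫ y in Z.Q j, f1 y‖ₑ ≤ ENNReal.ofReal (C * lam) * volume (Z.Q j) :=
      (enorm_integral_le_lintegral_enorm _).trans (Z.upper j)
    have h2 : ∫ y in Z.Q j, f1 y = av j * (volume (Z.Q j)).toReal := by
      simp only [hav]; field_simp
    rw [h2, enorm_mul] at h1
    have h3 : ‖(volume (Z.Q j)).toReal‖ₑ = volume (Z.Q j) := by
      rw [Real.enorm_eq_ofReal h0.le, ENNReal.ofReal_toReal (hvfin j)]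
    rw [h3] at h1
    exact (ENNReal.mul_le_mul_iff_left (hvpos j) (hvfin j)).1 h1
  set Om := ⋃ j, Z.Q j with hOm
  have hOmm : MeasurableSet Om := MeasurableSet.iUnion Z.meas
  have hgm : ∀ o : Option Z.ι, Measurable (o.elim (fun _ : Rd d => (0:ℝ)) (fun j y => f1 y - av j)) := by
    rintro (_ | j)
    · exact measurable_const
    · exact hf1m.sub_const _
  obtain ⟨b, hbm, hb⟩ := exists_measurable_piecewise (ι := Option Z.ι)
    (fun o => o.elim Omᶜ Z.Q) (by rintro (_ | j); exacts [hOmm.compl, Z.meas j])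
    (fun o => o.elim (fun _ : Rd d => (0:ℝ)) (fun j y => f1 y - av j)) hgm
    (by
      rintro (_ | i) (_ | j) hij y hy
      · rfl
      · exact absurd (mem_iUnion.2 ⟨j, hy.2⟩) hy.1
      · exact absurd (mem_iUnion.2 ⟨i, hy.1⟩) hy.2
      · exact absurd hy.2 (Set.disjoint_left.1 (Z.disj (fun h => hij (by rw [h]))) hy.1))
  have hb0 : ∀ y, y ∉ Om → b y = 0 := fun y hy => hb none hy
  have hbj : ∀ j, ∀ y ∈ Z.Q j, b y = f1 y - av j := fun j y hy => hb (some j) hy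
  have hbL : ∀ j, ∫⁻ y in Z.Q j, ‖b y‖ₑ ≤ ENNReal.ofReal (2 * C * lam) * volume (Z.Q j) := by
    intro j
    calc ∫⁻ y in Z.Q j, ‖b y‖ₑ ≤ ∫⁻ y in Z.Q j, (‖f1 y‖ₑ + ENNReal.ofReal (C * lam)) := by
          refine setLIntegral_mono' (Z.meas j) fun y hy => ?_
          rw [hbj j y hy]
          exact (enorm_sub_le).trans (add_le_add le_rfl (havb j))
      _ = (∫⁻ y in Z.Q j, ‖f1 y‖ₑ) + ENNReal.ofReal (C * lam) * volume (Z.Q j) := by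
          rw [lintegral_add_left hf1m.enorm, setLIntegral_const]
      _ ≤ ENNReal.ofReal (C * lam) * volume (Z.Q j) + ENNReal.ofReal (C * lam) * volume (Z.Q j) :=
          add_le_add (Z.upper j) le_rfl
      _ = _ := by
          rw [← add_mul, ← ENNReal.ofReal_add (by positivity) (by positivity)]
          congr 2; ring
  have hsumv : ∑' j, volume (Z.Q j) ≤ la⁻¹ * I := by
    have e : ∑' j, volume (Z.Q j) = la⁻¹ * (la * ∑' j, volume (Z.Q j)) := by
      rw [← mul_assoc, ENNReal.inv_mul_cancel hla0 hlat, one_mul]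
    rw [e]
    refine mul_le_mul' le_rfl ?_
    rw [← ENNReal.tsum_mul_left]
    refine (ENNReal.tsum_le_tsum fun j => Z.lower j).trans ?_
    rw [← lintegral_iUnion Z.meas Z.disj, ← hI1]
    exact setLIntegral_le_lintegral _ _
  have hOmv : volume Om = ∑' j, volume (Z.Q j) := measure_iUnion Z.disj Z.meas
  have hWfin : la⁻¹ * I ≠ ∞ := ENNReal.mul_ne_top (by simpa using hla0) hI
  have hbint : ∫⁻ y, ‖b y‖ₑ ≤ ENNReal.ofReal (2 * C * lam) * ∑' j, volume (Z.Q j) := by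
    have : ∫⁻ y, ‖b y‖ₑ = ∫⁻ y in Om, ‖b y‖ₑ := by
      rw [← lintegral_indicator hOmm]
      refine lintegral_congr fun y => ?_
      by_cases hy : y ∈ Om
      · rw [indicator_of_mem hy]
      · rw [indicator_of_notMem hy, hb0 y hy]; simp
    rw [this, lintegral_iUnion Z.meas Z.disj, ← ENNReal.tsum_mul_left]
    exact ENNReal.tsum_le_tsum hbL
  have hle : ENNReal.ofReal (2 * C * lam) ≤ ENNReal.ofReal (C0 * lam) := by
    refine ENNReal.ofReal_le_ofReal ?_
    gcongr
    simp only [C0]; linarith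
  let D : BD b (ENNReal.ofReal (C0 * lam)) :=
    { ι := Z.ι, cnt := Z.cnt, Q := Z.Q, c := Z.c, r := Z.r, rpos := Z.rpos, meas := Z.meas, disj := Z.disj,
      sub := Z.sub, bm := hbm
      bint := ne_top_of_le_ne_top (ENNReal.mul_ne_top ENNReal.ofReal_ne_top (ne_top_of_le_ne_top hWfin hsumv)) hbint
      off := fun y hy => hb0 y (by simpa [hOm] using hy)
      canc := by
        intro j
        have h0 := ENNReal.toReal_pos (hvpos j) (hvfin j)
        rw [setIntegral_congr_fun (Z.meas j) (fun y hy => hbj j y hy)]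
        rw [integral_sub (hf1i j) (integrableOn_const (hvfin j)), setIntegral_const]
        simp only [hav, Measure.real, smul_eq_mul]
        field_simp
        ring
      ub := fun j => (hbL j).trans (mul_le_mul' hle le_rfl) }
  have hgae : ∀ᵐ y, ‖f y - b y‖ₑ ≤ A.compl.indicator (fun y => ‖f y‖ₑ) y + Om.indicator (fun _ => ENNReal.ofReal (C * lam)) y := by
    filter_upwards [Z.off] with y hy
    by_cases hyO : y ∈ Om
    · obtain ⟨j, hj⟩ := mem_iUnion.1 hyO
      rw [hbj j y hj, indicator_of_mem hyO]
      have : f y - (f1 y - av j) = (f y - f1 y) + av j := by ring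
      rw [this]
      refine (enorm_add_le _ _).trans (add_le_add ?_ (havb j))
      by_cases hyA : y ∈ A
      · simp [hf1, hyA]
      · rw [indicator_of_mem (show y ∈ A.compl from hyA)]; simp [hf1, hyA]
    · rw [hb0 y hyO, sub_zero]
      have h1 := hy (by simpa [hOm] using hyO)
      have hyA : y ∉ A := by
        intro hyA
        simp only [hf1, indicator_of_mem hyA] at h1
        exact absurd hyA (not_lt.2 h1)
      rw [indicator_of_mem (show y ∈ A.compl from hyA)]
      exact le_self_add
  have hAc : A.compl = {y | ‖f y‖ₑ ≤ la} := by
    ext y; change ¬ (la < ‖f y‖ₑ) ↔ ‖f y‖ₑ ≤ la; exact not_lt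
  refine ⟨b, D, ?_, ?_, ?_, ?_⟩
  · have h1 : ∀ j, volume (Metric.closedBall (Z.c j) (NN d * Z.r j)) ≤ ENNReal.ofReal C1 * volume (Z.Q j) := by
      intro j
      have hr := Z.rpos j
      rw [vol_cball _ (by positivity), mul_pow, ENNReal.ofReal_mul (by positivity)]
      calc _ ≤ ENNReal.ofReal (NN d ^ d) * (ENNReal.ofReal C * volume (Z.Q j)) * B :=
            mul_le_mul' (mul_le_mul' le_rfl (Z.vol j)) le_rfl
        _ = _ := by
          simp only [C1]
          rw [ENNReal.ofReal_mul (by positivity), ENNReal.ofReal_mul (by positivity), ENNReal.ofReal_toReal hB]; ring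
    refine (ENNReal.tsum_le_tsum h1).trans ?_
    rw [ENNReal.tsum_mul_left]
    exact mul_le_mul' (ENNReal.ofReal_le_ofReal (by simp only [C0]; linarith)) hsumv
  · filter_upwards [hgae] with y hy
    refine hy.trans (le_trans ?_ hle)
    have e1 : A.compl.indicator (fun y => ‖f y‖ₑ) y ≤ la := by
      by_cases h : y ∈ A.compl
      · rw [indicator_of_mem h]; rw [hAc] at h; exact h
      · rw [indicator_of_notMem h]; exact zero_le
    have e2 : Om.indicator (fun _ => ENNReal.ofReal (C * lam)) y ≤ ENNReal.ofReal (C * lam) :=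
      indicator_le_self _ _ _
    refine (add_le_add e1 e2).trans ?_
    rw [hla, ← ENNReal.ofReal_add hlam.le (by positivity)]
    refine ENNReal.ofReal_le_ofReal ?_
    nlinarith
  · have hq0 : 0 < q := by linarith
    have hind : ∀ (X : Set (Rd d)) (u : Rd d → ℝ≥0∞) (y : Rd d), (X.indicator u y) ^ q = X.indicator (fun y => u y ^ q) y := by
      intro X u y
      by_cases h : y ∈ X
      · rw [indicator_of_mem h, indicator_of_mem h]
      · rw [indicator_of_notMem h, indicator_of_notMem h, ENNReal.zero_rpow_of_pos hq0]
    have hAcm : MeasurableSet A.compl := hAm.compl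
    have mq : Measurable fun y => ‖f y‖ₑ ^ q := hf.enorm.pow_const q
    have m1 : Measurable (fun y => A.compl.indicator (fun y => ‖f y‖ₑ ^ q) y) := mq.indicator hAcm
    have m2 : Measurable (fun y => Om.indicator (fun _ => ENNReal.ofReal (C * lam) ^ q) y) := measurable_const.indicator hOmm
    have m3 : Measurable (fun y => A.compl.indicator (fun y => ‖f y‖ₑ ^ q) y + Om.indicator (fun _ => ENNReal.ofReal (C * lam) ^ q) y) := m1.add m2
    calc ∫⁻ y, ‖f y - b y‖ₑ ^ q ≤ ∫⁻ y, (2:ℝ≥0∞) ^ q * (A.compl.indicator (fun y => ‖f y‖ₑ ^ q) y + Om.indicator (fun _ => ENNReal.ofReal (C * lam) ^ q) y) := by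
          refine lintegral_mono_ae ?_
          filter_upwards [hgae] with y hy
          refine (ENNReal.rpow_le_rpow hy hq0.le).trans ?_
          rw [← hind, ← hind]
          set s := A.compl.indicator (fun y => ‖f y‖ₑ) y
          set t := Om.indicator (fun _ => ENNReal.ofReal (C * lam)) y
          have hst : s + t ≤ 2 * max s t := by
            rw [two_mul]; exact add_le_add (le_max_left _ _) (le_max_right _ _)
          refine (ENNReal.rpow_le_rpow hst hq0.le).trans ?_
          rw [ENNReal.mul_rpow_of_nonneg _ _ hq0.le]
          refine mul_le_mul' le_rfl ?_
          rcases max_cases s t with h | h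
          · rw [h.1]; exact le_self_add
          · rw [h.1]; exact le_add_self
      _ = (2:ℝ≥0∞) ^ q * ((∫⁻ y in A.compl, ‖f y‖ₑ ^ q) + ENNReal.ofReal (C * lam) ^ q * volume Om) := by
          rw [lintegral_const_mul _ m3, lintegral_add_left m1, lintegral_indicator hAcm, lintegral_indicator hOmm, setLIntegral_const]
      _ ≤ ENNReal.ofReal C0 * (∫⁻ y in A.compl, ‖f y‖ₑ ^ q) + ENNReal.ofReal C0 * (la ^ q * (la⁻¹ * I)) := by
          have h2q : (2:ℝ≥0∞) ^ q = ENNReal.ofReal (2 ^ q) := by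
            rw [← ENNReal.ofReal_rpow_of_pos (by norm_num)]; simp
          rw [mul_add]
          refine add_le_add (mul_le_mul' ?_ le_rfl) ?_
          · rw [h2q]; exact ENNReal.ofReal_le_ofReal (by simp only [C0]; linarith)
          · rw [← mul_assoc, ← mul_assoc]
            refine mul_le_mul' ?_ (hOmv.le.trans hsumv)
            rw [ENNReal.ofReal_mul (by linarith), ENNReal.mul_rpow_of_nonneg _ _ hq0.le, ← mul_assoc]
            refine mul_le_mul' ?_ le_rfl
            rw [h2q, ENNReal.ofReal_rpow_of_pos (by linarith), ← ENNReal.ofReal_mul (by positivity)]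
            refine ENNReal.ofReal_le_ofReal ?_
            have : C ^ q ≤ (2 * C) ^ q := Real.rpow_le_rpow (by linarith) (by linarith) hq0.le
            have h3 : (2:ℝ) ^ q * C ^ q ≤ C2 := by simp only [C2]; gcongr
            simp only [C0]; linarith
      _ = _ := by rw [hAc]; ring
  · have h1 : ∑' j, D.m j ≤ ENNReal.ofReal (2 * C * lam) * ∑' j, volume (Z.Q j) := by
      rw [← ENNReal.tsum_mul_left]
      exact ENNReal.tsum_le_tsum hbL
    refine h1.trans ((mul_le_mul' le_rfl hsumv).trans ?_)
    rw [ENNReal.ofReal_mul (by linarith), ← hla, mul_assoc, ← mul_assoc la, ENNReal.mul_inv_cancel hla0 hlat, one_mul]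
    exact mul_le_mul' (ENNReal.ofReal_le_ofReal (by simp only [C0]; linarith)) le_rfl

end GM

namespace GM
section
variable {d : ℕ} {ρ q : ℝ}

theorem core (hd : 0 < d) (S : CZO d) (hρ : 2 < ρ) (hq : 1 < q) :
    ∃ C0 : ℝ, 1 ≤ C0 ∧ ∃ C : ℝ≥0∞, C ≠ ∞ ∧ ∀ f : Rd d → ℝ, Measurable f → Good f → ∀ lam : ℝ, 0 < lam →
    ∫⁻ y in {y | ENNReal.ofReal lam < ‖f y‖ₑ}, ‖f y‖ₑ ≠ ∞ →
    ∃ (b : Rd d → ℝ) (U : Set (Rd d)), Good b ∧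
      volume U ≤ C * ((ENNReal.ofReal lam)⁻¹ * ∫⁻ y in {y | ENNReal.ofReal lam < ‖f y‖ₑ}, ‖f y‖ₑ) ∧
      (∀ x ∉ U, ∀ Q : Cube d, x ∈ Q.set → ∀ ξ ∈ Q.set,
        S.var ρ ((Q.dilate 3)ᶜ.indicator b) ξ ≤ C * ENNReal.ofReal (C0 * lam)) ∧
      (∀ᵐ y, ‖f y - b y‖ₑ ≤ ENNReal.ofReal (C0 * lam)) ∧
      ∫⁻ y, ‖f y - b y‖ₑ ^ q ≤ ENNReal.ofReal C0 * ((∫⁻ y in {y | ‖f y‖ₑ ≤ ENNReal.ofReal lam}, ‖f y‖ₑ ^ q) +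
        ENNReal.ofReal lam ^ q * ((ENNReal.ofReal lam)⁻¹ * ∫⁻ y in {y | ENNReal.ofReal lam < ‖f y‖ₑ}, ‖f y‖ₑ)) := by
  obtain ⟨C0, hC0, H0⟩ := decomp d hd hq
  obtain ⟨CB, hCB, HB⟩ := lemB hd S hρ
  have hCt := Cth_ne S
  refine ⟨C0, hC0, 2 * CB + ENNReal.ofReal C0 + Cth S * ENNReal.ofReal C0, by finiteness, ?_⟩
  intro f hf hG lam hlam hI
  have hH := H0 f hf lam hlam hI
  set I := ∫⁻ y in {y | ENNReal.ofReal lam < ‖f y‖ₑ}, ‖f y‖ₑ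
  set la := ENNReal.ofReal lam with hla
  set L := ENNReal.ofReal (C0 * lam) with hL
  obtain ⟨b, D, h1, h2, h3, h4⟩ := hH
  have := D.cnt
  have hLpos : 0 < C0 * lam := by positivity
  have hL0 : L ≠ 0 := by simpa [hL] using hLpos
  have hLt : L ≠ ∞ := ENNReal.ofReal_ne_top
  have hlaL : la ≤ L := ENNReal.ofReal_le_ofReal (by nlinarith)
  set U0 : Set (Rd d) := ⋃ j, Metric.closedBall (D.c j) (NN d * D.r j) with hU0
  set F : Set (Rd d) := {x | ∀ j, NN d * D.r j < dist x (D.c j)} with hF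
  have hU0F : ∀ x, x ∉ U0 → x ∈ F := by
    intro x hx j
    by_contra hc
    exact hx (mem_iUnion.2 ⟨j, by rw [Metric.mem_closedBall]; exact not_lt.1 hc⟩)
  have hGm := G_meas D S
  set U1 : Set (Rd d) := {x | L ≤ D.G S x} ∩ F with hU1
  refine ⟨b, U0 ∪ U1, D.good, ?_, ?_, h2, h3⟩
  · have e0 : volume U0 ≤ ENNReal.ofReal C0 * (la⁻¹ * I) := (measure_iUnion_le _).trans h1
    have e1 : volume U1 ≤ Cth S * ENNReal.ofReal C0 * (la⁻¹ * I) := by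
      have hms : MeasurableSet {x | L ≤ D.G S x} := measurableSet_le measurable_const hGm
      have c1 : L * (volume.restrict F) {x | L ≤ D.G S x} ≤ ∫⁻ x in F, D.G S x :=
        mul_meas_ge_le_lintegral₀ hGm.aemeasurable L
      rw [Measure.restrict_apply hms] at c1
      calc volume U1 = L⁻¹ * (L * volume U1) := by
            rw [← mul_assoc, ENNReal.inv_mul_cancel hL0 hLt, one_mul]
        _ ≤ la⁻¹ * (Cth S * (ENNReal.ofReal C0 * I)) :=
            mul_le_mul' (ENNReal.inv_le_inv.2 hlaL) (c1.trans ((Gint D hd S).trans (mul_le_mul' le_rfl h4)))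
        _ = _ := by ring
    calc volume (U0 ∪ U1) ≤ ENNReal.ofReal C0 * (la⁻¹ * I) + Cth S * ENNReal.ofReal C0 * (la⁻¹ * I) :=
          (measure_union_le _ _).trans (add_le_add e0 e1)
      _ = (ENNReal.ofReal C0 + Cth S * ENNReal.ofReal C0) * (la⁻¹ * I) := by ring
      _ ≤ _ := mul_le_mul' (by rw [add_assoc]; exact le_add_self) le_rfl
  · intro x hx Q hxQ ξ hξ
    have hxF : x ∈ F := hU0F x fun h => hx (Or.inl h)
    have hxG : D.G S x ≤ L := by
      by_contra hc
      exact hx (Or.inr ⟨(not_le.1 hc).le, hxF⟩)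
    calc _ ≤ CB * (L + D.G S x) := HB b L D x hxF Q hxQ ξ hξ
      _ ≤ CB * (L + L) := mul_le_mul' le_rfl (add_le_add le_rfl hxG)
      _ = 2 * CB * L := by ring
      _ ≤ _ := mul_le_mul' (by rw [add_assoc]; exact le_self_add) le_rfl

theorem level (hd : 0 < d) (S : CZO d) (hρ : 2 < ρ) (hq : 1 < q) (hb : S.VarBdd ρ q) :
    ∃ C : ℝ, 1 ≤ C ∧ ∀ f : Rd d → ℝ, Measurable f → Good f → ∀ lam : ℝ, 0 < lam →
      volume {x | ENNReal.ofReal (C * lam) < S.grandMax ρ f x} ≤ ENNReal.ofReal C *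
        ((ENNReal.ofReal lam ^ q)⁻¹ * (∫⁻ y in {y | ‖f y‖ₑ ≤ ENNReal.ofReal lam}, ‖f y‖ₑ ^ q) +
          (ENNReal.ofReal lam)⁻¹ * ∫⁻ y in {y | ENNReal.ofReal lam < ‖f y‖ₑ}, ‖f y‖ₑ) ∧
      volume {x | ENNReal.ofReal (C * lam) < S.grandMax ρ f x} ≤ ENNReal.ofReal C *
        (volume {x | ENNReal.ofReal lam < S.var ρ f x} +
          (ENNReal.ofReal lam)⁻¹ * ∫⁻ y in {y | ENNReal.ofReal lam < ‖f y‖ₑ}, ‖f y‖ₑ) := by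
  obtain ⟨C0, hC0, C, hC, H⟩ := core (q := q) hd S hρ hq
  obtain ⟨CA, hCA, HA⟩ := lemA' hd S hρ hq hb
  obtain ⟨A, hA, HV⟩ := hb
  have hρ1 : 1 ≤ ρ := by linarith
  have hρ0 : 0 < ρ := by linarith
  have hq0 : 0 < q := by linarith
  -- constants
  set K : ℝ≥0∞ := (CA + (C + 1) + C) * ENNReal.ofReal C0 + (C + (CA + 1) * (C + 1)) +
    (CA + 1) * (ENNReal.ofReal A * ENNReal.ofReal C0) with hK
  have hKt : K ≠ ∞ := by finiteness
  have hK' : ENNReal.ofReal (K.toReal + 1) = K + 1 := by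
    rw [ENNReal.ofReal_add ENNReal.toReal_nonneg zero_le_one, ENNReal.ofReal_toReal hKt, ENNReal.ofReal_one]
  refine ⟨K.toReal + 1, by linarith [ENNReal.toReal_nonneg (a := K)], ?_⟩
  intro f hf hG lam hlam
  set la := ENNReal.ofReal lam with hla
  have hla0 : la ≠ 0 := by simpa [hla] using hlam
  have hlat : la ≠ ∞ := ENNReal.ofReal_ne_top
  rw [ENNReal.ofReal_mul (by linarith [ENNReal.toReal_nonneg (a := K)]), hK', ← hla]
  by_cases hI : ∫⁻ y in {y | la < ‖f y‖ₑ}, ‖f y‖ₑ = ∞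
  · have hi : la⁻¹ ≠ 0 := by simpa using hlat
    have hk1 : K + 1 ≠ 0 := by simp
    constructor <;> (rw [hI, ENNReal.mul_top hi, add_top, ENNReal.mul_top hk1]; exact le_top)
  obtain ⟨b, U, hbG, hU, hbU, hgb, hgq⟩ := H f hf hG lam hlam hI
  set W := la⁻¹ * ∫⁻ y in {y | la < ‖f y‖ₑ}, ‖f y‖ₑ with hW
  set X := ∫⁻ y in {y | ‖f y‖ₑ ≤ la}, ‖f y‖ₑ ^ q with hX
  set L := ENNReal.ofReal (C0 * lam) with hL
  have hLpos : 0 < C0 * lam := by positivity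
  have hL0 : L ≠ 0 := by simpa [hL] using hLpos
  have hLt : L ≠ ∞ := ENNReal.ofReal_ne_top
  have hlaL : la ≤ L := ENNReal.ofReal_le_ofReal (by nlinarith)
  have hLeq : L = ENNReal.ofReal C0 * la := by rw [hL, ENNReal.ofReal_mul (by linarith)]
  have hgG : Good (fun y => f y - b y) := hG.sub hbG
  set V := S.var ρ (fun y => f y - b y) with hVdef
  -- common bound
  have main : ∀ κ : ℝ≥0∞, κ ≤ C + 1 → volume {x | (K + 1) * la < S.grandMax ρ f x} ≤
      C * W + (CA + 1) * volume {x | κ * L < V x} := by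
    intro κ hκ
    by_cases hE : volume {x | κ * L < V x} = ∞
    · rw [hE, ENNReal.mul_top (by simp), add_top]; exact le_top
    obtain ⟨U2, hU2, hgU⟩ := HA κ (fun y => f y - b y) (C0 * lam) hgG hLpos hgb hE
    have hsub : {x | (K + 1) * la < S.grandMax ρ f x} ⊆ U ∪ U2 := by
      intro x hx
      by_contra hc
      have hxU : x ∉ U := fun h => hc (Or.inl h)
      have hxU2 : x ∉ U2 := fun h => hc (Or.inr h)
      refine absurd (show (K + 1) * la < S.grandMax ρ f x from hx) (not_lt.2 ?_)
      unfold CZO.grandMax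
      refine iSup₂_le fun Q hxQ => ?_
      refine essSup_le_of_ae_le _ ?_
      filter_upwards [ae_restrict_mem (cube_meas Q)] with ξ hξ
      have hm := (dil_meas Q 3).compl
      have e : (Q.dilate 3)ᶜ.indicator f = fun y => (Q.dilate 3)ᶜ.indicator (fun y => f y - b y) y + (Q.dilate 3)ᶜ.indicator b y := by
        funext y
        by_cases hy : y ∈ (Q.dilate 3)ᶜ
        · simp only [indicator_of_mem hy]; ring
        · simp only [indicator_of_notMem hy]; ring
      rw [e]
      calc _ ≤ (CA + κ) * L + C * L :=
            (var_add S hρ1 (hgG.ind hm) (hbG.ind hm) ξ).trans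
              (add_le_add (hgU x hxU2 Q hxQ ξ hξ) (hbU x hxU Q hxQ ξ hξ))
        _ ≤ (CA + (C + 1)) * L + C * L := by gcongr
        _ = (CA + (C + 1) + C) * ENNReal.ofReal C0 * la := by rw [hLeq]; ring
        _ ≤ (K + 1) * la := by
            refine mul_le_mul' ?_ le_rfl
            rw [hK]
            exact le_trans le_self_add (le_trans le_self_add le_self_add)
    calc _ ≤ volume U + volume U2 := (measure_mono hsub).trans (measure_union_le _ _)
      _ ≤ C * W + CA * volume {x | κ * L < V x} := add_le_add hU hU2
      _ ≤ _ := add_le_add le_rfl (mul_le_mul' le_self_add le_rfl)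
  constructor
  · have hVm : Measurable V := var_meas S hd hρ0 hgG
    have hLq0 : L ^ q ≠ 0 := by simp [hL0, hq0.le, hLt, ENNReal.rpow_eq_zero_iff]
    have hLqt : L ^ q ≠ ∞ := ENNReal.rpow_ne_top_of_nonneg hq0.le hLt
    have hlq0 : la ^ q ≠ 0 := by simp [hla0, hq0.le, hlat, ENNReal.rpow_eq_zero_iff]
    have hlqt : la ^ q ≠ ∞ := ENNReal.rpow_ne_top_of_nonneg hq0.le hlat
    have hE : volume {x | (1:ℝ≥0∞) * L < V x} ≤ ENNReal.ofReal A * ENNReal.ofReal C0 * ((la ^ q)⁻¹ * X + W) := by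
      have c0 : {x | (1:ℝ≥0∞) * L < V x} ⊆ {x | L ^ q ≤ V x ^ q} := by
        intro x hx
        have hx' : 1 * L < V x := hx
        rw [one_mul] at hx'
        exact ENNReal.rpow_le_rpow hx'.le hq0.le
      have c1 : L ^ q * volume {x | L ^ q ≤ V x ^ q} ≤ ∫⁻ x, V x ^ q :=
        mul_meas_ge_le_lintegral₀ (hVm.pow_const q).aemeasurable _
      have hgm : Measurable fun y => f y - b y := by
        have := hgG; exact this.1
      have c2 := HV (fun y => f y - b y) hgm
      simp only [← Real.enorm_eq_ofReal_abs] at c2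
      calc volume {x | (1:ℝ≥0∞) * L < V x} ≤ volume {x | L ^ q ≤ V x ^ q} := measure_mono c0
        _ = (L ^ q)⁻¹ * (L ^ q * volume {x | L ^ q ≤ V x ^ q}) := by
            rw [← mul_assoc, ENNReal.inv_mul_cancel hLq0 hLqt, one_mul]
        _ ≤ (la ^ q)⁻¹ * (ENNReal.ofReal A * (ENNReal.ofReal C0 * (X + la ^ q * W))) := by
            refine mul_le_mul' (ENNReal.inv_le_inv.2 (ENNReal.rpow_le_rpow hlaL hq0.le)) ?_
            exact c1.trans (c2.trans (mul_le_mul' le_rfl hgq))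
        _ = ENNReal.ofReal A * ENNReal.ofReal C0 * ((la ^ q)⁻¹ * X + (la ^ q)⁻¹ * la ^ q * W) := by ring
        _ = _ := by rw [ENNReal.inv_mul_cancel hlq0 hlqt, one_mul]
    refine (main 1 le_add_self).trans ?_
    calc _ ≤ C * W + (CA + 1) * (ENNReal.ofReal A * ENNReal.ofReal C0 * ((la ^ q)⁻¹ * X + W)) := by gcongr
      _ ≤ C * ((la ^ q)⁻¹ * X + W) + (CA + 1) * (ENNReal.ofReal A * ENNReal.ofReal C0 * ((la ^ q)⁻¹ * X + W)) := by
          gcongr; exact le_add_self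
      _ = (C + (CA + 1) * (ENNReal.ofReal A * ENNReal.ofReal C0)) * ((la ^ q)⁻¹ * X + W) := by ring
      _ ≤ _ := by
          refine mul_le_mul' ?_ le_rfl
          refine le_trans ?_ le_self_add
          rw [hK]
          refine add_le_add ?_ le_rfl
          refine le_trans ?_ le_add_self
          exact le_self_add
  · have hE : volume {x | (C + 1) * L < V x} ≤ C * W + volume {x | la < S.var ρ f x} := by
      have : {x | (C + 1) * L < V x} ⊆ U ∪ {x | la < S.var ρ f x} := by
        intro x hx
        by_contra hc
        have hxU : x ∉ U := fun h => hc (Or.inl h)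
        have hxV : S.var ρ f x ≤ la := not_lt.1 fun h => hc (Or.inr h)
        refine absurd (show (C + 1) * L < V x from hx) (not_lt.2 ?_)
        calc V x ≤ S.var ρ f x + S.var ρ b x := var_sub S hρ1 hG hbG x
          _ ≤ L + C * L := add_le_add (hxV.trans hlaL) (Vb S hρ x (hbU x hxU))
          _ = _ := by ring
      exact (measure_mono this).trans ((measure_union_le _ _).trans (add_le_add hU le_rfl))
    refine (main (C + 1) le_rfl).trans ?_
    set Y := volume {x | la < S.var ρ f x}
    calc _ ≤ C * W + (CA + 1) * (C * W + Y) := by gcongr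
      _ ≤ C * (Y + W) + (CA + 1) * (C * (Y + W) + (Y + W)) := by
          gcongr
          · exact le_add_self
          · exact le_add_self
          · exact le_self_add
      _ = (C + (CA + 1) * (C + 1)) * (Y + W) := by ring
      _ ≤ _ := by
          refine mul_le_mul' ?_ le_rfl
          refine le_trans ?_ le_self_add
          rw [hK]
          refine le_trans ?_ le_self_add
          exact le_add_self
end
end GM

namespace GM
/-- dyadic levels -/
def ww (n : ℤ) : ℝ≥0∞ := (2:ℝ≥0∞) ^ (n:ℝ)
/-- geometric constant -/
def Cg (s : ℝ) : ℝ≥0∞ := (1 - (2:ℝ≥0∞) ^ (-s))⁻¹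

theorem ww_rpow (n : ℤ) (s : ℝ) : ww n ^ s = (2:ℝ≥0∞) ^ ((n:ℝ) * s) := by
  unfold ww; rw [ENNReal.rpow_mul]

theorem ww_ne_zero (n : ℤ) : ww n ≠ 0 := by
  unfold ww; rw [Ne, ENNReal.rpow_eq_zero_iff]; simp

theorem ww_ne_top (n : ℤ) : ww n ≠ ∞ := by
  unfold ww; rw [Ne, ENNReal.rpow_eq_top_iff]; simp

theorem ww_ofReal (n : ℤ) : ENNReal.ofReal ((2:ℝ) ^ (n:ℝ)) = ww n := by
  unfold ww
  rw [← ENNReal.ofReal_rpow_of_pos (by norm_num)]; simp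

theorem ww_mono {m n : ℤ} (h : m ≤ n) : ww m ≤ ww n := by
  unfold ww
  exact ENNReal.rpow_le_rpow_of_exponent_le (by norm_num) (by exact_mod_cast h)

theorem ww_exists {a : ℝ≥0∞} (h0 : a ≠ 0) (ht : a ≠ ∞) : ∃ m : ℤ, ww m < a ∧ a ≤ ww (m + 1) := by
  obtain ⟨m, h1, h2⟩ := ENNReal.exists_mem_Ioc_zpow h0 ht (y := 2) (by norm_num) (by norm_num)
  refine ⟨m, ?_, ?_⟩
  · unfold ww; rw [ENNReal.rpow_intCast]; exact h1
  · unfold ww; rw [ENNReal.rpow_intCast]; exact h2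

theorem Cg_ne_zero (s : ℝ) : Cg s ≠ 0 := by
  unfold Cg
  rw [ENNReal.inv_ne_zero]
  exact ne_top_of_le_ne_top ENNReal.one_ne_top tsub_le_self

theorem Cg_ne_top {s : ℝ} (hs : 0 < s) : Cg s ≠ ∞ := by
  unfold Cg
  rw [ENNReal.inv_ne_top]
  have : (2:ℝ≥0∞) ^ (-s) < 1 := ENNReal.rpow_lt_one_of_one_lt_of_neg (by norm_num) (by linarith)
  exact (tsub_pos_of_lt this).ne'

theorem geo_aux (s : ℝ) (m : ℤ) (k : ℕ) : ww (m - k) ^ s = ww m ^ s * ((2:ℝ≥0∞) ^ (-s)) ^ k := by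
  rw [ww_rpow, ww_rpow, ← ENNReal.rpow_natCast, ← ENNReal.rpow_mul, ← ENNReal.rpow_add _ _ (by norm_num) (by norm_num)]
  congr 1
  push_cast
  ring

theorem geo_aux' (s : ℝ) (m : ℤ) (k : ℕ) : (ww (m + k) ^ s)⁻¹ = (ww m ^ s)⁻¹ * ((2:ℝ≥0∞) ^ (-s)) ^ k := by
  rw [ww_rpow, ww_rpow, ← ENNReal.rpow_natCast, ← ENNReal.rpow_mul, ← ENNReal.rpow_neg, ← ENNReal.rpow_neg,
    ← ENNReal.rpow_add _ _ (by norm_num) (by norm_num)]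
  congr 1
  push_cast
  ring

theorem geoA {s : ℝ} (hs : 0 < s) (a : ℝ≥0∞) : ∑' n : ℤ, (if ww n < a then ww n ^ s else 0) ≤ Cg s * a ^ s := by
  by_cases ht : a = ∞
  · rw [ht, ENNReal.top_rpow_of_pos hs, ENNReal.mul_top (Cg_ne_zero s)]; exact le_top
  by_cases h0 : a = 0
  · subst h0; simp
  obtain ⟨m, h1, h2⟩ := ww_exists h0 ht
  have hinj : Function.Injective (fun k : ℕ => m - (k:ℤ)) := by
    intro i j h; simpa using h
  rw [← hinj.tsum_eq]
  · calc ∑' k : ℕ, (if ww (m - k) < a then ww (m - k) ^ s else 0) ≤ ∑' k : ℕ, ww m ^ s * ((2:ℝ≥0∞) ^ (-s)) ^ k := by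
          refine ENNReal.tsum_le_tsum fun k => ?_
          rw [← geo_aux]
          split_ifs
          · exact le_rfl
          · exact zero_le
      _ = ww m ^ s * Cg s := by rw [ENNReal.tsum_mul_left, ENNReal.tsum_geometric]; rfl
      _ ≤ a ^ s * Cg s := mul_le_mul' (ENNReal.rpow_le_rpow h1.le hs.le) le_rfl
      _ = _ := mul_comm _ _
  · intro n hn
    have hn' : ww n < a := by
      by_contra hc; simp [hc] at hn
    have : n ≤ m := by
      by_contra hc
      exact absurd (lt_of_lt_of_le hn' h2) (not_lt.2 (ww_mono (by omega)))
    exact ⟨(m - n).toNat, by simp only []; omega⟩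

theorem geoB {s : ℝ} (hs : 0 < s) {a : ℝ≥0∞} (h0 : a ≠ 0) (ht : a ≠ ∞) :
    ∑' n : ℤ, (if a ≤ ww n then (ww n ^ s)⁻¹ else 0) ≤ Cg s * (a ^ s)⁻¹ := by
  obtain ⟨m, h1, h2⟩ := ww_exists h0 ht
  have hinj : Function.Injective (fun k : ℕ => (m + 1) + (k:ℤ)) := by
    intro i j h; simpa using h
  rw [← hinj.tsum_eq]
  · calc ∑' k : ℕ, (if a ≤ ww (m + 1 + k) then (ww (m + 1 + k) ^ s)⁻¹ else 0) ≤ ∑' k : ℕ, (ww (m + 1) ^ s)⁻¹ * ((2:ℝ≥0∞) ^ (-s)) ^ k := by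
          refine ENNReal.tsum_le_tsum fun k => ?_
          rw [← geo_aux']
          split_ifs
          · exact le_rfl
          · exact zero_le
      _ = (ww (m + 1) ^ s)⁻¹ * Cg s := by rw [ENNReal.tsum_mul_left, ENNReal.tsum_geometric]; rfl
      _ ≤ (a ^ s)⁻¹ * Cg s := mul_le_mul' (ENNReal.inv_le_inv.2 (ENNReal.rpow_le_rpow h2 hs.le)) le_rfl
      _ = _ := mul_comm _ _
  · intro n hn
    have hn' : a ≤ ww n := by
      by_contra hc; simp [hc] at hn
    have : m + 1 ≤ n := by
      by_contra hc
      exact absurd (lt_of_lt_of_le h1 hn') (not_lt.2 (ww_mono (by omega)))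
    exact ⟨(n - (m + 1)).toNat, by simp only []; omega⟩

section
variable {α : Type*} [MeasurableSpace α] {μ : Measure α}

theorem swap_sum {a h : α → ℝ≥0∞} (hh : Measurable h) (c : ℤ → ℝ≥0∞) (E : ℤ → Set α)
    (hE : ∀ n, MeasurableSet (E n)) :
    ∑' n : ℤ, c n * ∫⁻ y in E n, h y ∂μ = ∫⁻ y, (∑' n : ℤ, (E n).indicator (fun _ => c n) y) * h y ∂μ := by
  have e : ∀ y, (∑' n : ℤ, (E n).indicator (fun _ => c n) y) * h y = ∑' n : ℤ, c n * (E n).indicator h y := by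
    intro y
    rw [← ENNReal.tsum_mul_right]
    refine tsum_congr fun n => ?_
    by_cases hy : y ∈ E n
    · rw [indicator_of_mem hy, indicator_of_mem hy]
    · rw [indicator_of_notMem hy, indicator_of_notMem hy, zero_mul, mul_zero]
  simp only [e]
  rw [lintegral_tsum]
  · refine tsum_congr fun n => ?_
    rw [lintegral_const_mul (c n) (hh.indicator (hE n)), lintegral_indicator (hE n)]
  · intro n
    have : Measurable fun y => c n * (E n).indicator h y := (hh.indicator (hE n)).const_mul (c n)
    exact this.aemeasurable

theorem swapA {s : ℝ} (hs : 0 < s) {a h : α → ℝ≥0∞} (ha : Measurable a) (hh : Measurable h) :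
    ∑' n : ℤ, ww n ^ s * ∫⁻ y in {y | ww n < a y}, h y ∂μ ≤ Cg s * ∫⁻ y, a y ^ s * h y ∂μ := by
  rw [swap_sum (a := a) hh _ _ fun n => measurableSet_lt measurable_const ha]
  have hm : Measurable fun y => a y ^ s * h y := (ha.pow_const s).mul hh
  rw [← lintegral_const_mul (Cg s) hm]
  refine lintegral_mono fun y => ?_
  change _ ≤ Cg s * (a y ^ s * h y)
  rw [← mul_assoc]
  refine mul_le_mul' (le_trans (le_of_eq ?_) (geoA hs (a y))) le_rfl
  refine tsum_congr fun n => ?_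
  by_cases hy : ww n < a y
  · rw [if_pos hy]; exact indicator_of_mem (show y ∈ {y | ww n < a y} from hy) _
  · rw [if_neg hy]; exact indicator_of_notMem (show y ∉ {y | ww n < a y} from hy) _

theorem swapB {s q : ℝ} (hs : 0 < s) (hsq : s < q) {a : α → ℝ≥0∞} (ha : Measurable a) (hat : ∀ y, a y ≠ ∞) :
    ∑' n : ℤ, (ww n ^ s)⁻¹ * ∫⁻ y in {y | a y ≤ ww n}, a y ^ q ∂μ ≤ Cg s * ∫⁻ y, a y ^ (q - s) ∂μ := by
  have hm0 : Measurable fun y => a y ^ q := ha.pow_const q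
  rw [swap_sum (a := a) hm0 _ _ fun n => measurableSet_le ha measurable_const]
  have hm : Measurable fun y => a y ^ (q - s) := ha.pow_const _
  rw [← lintegral_const_mul (Cg s) hm]
  refine lintegral_mono fun y => ?_
  change _ * a y ^ q ≤ Cg s * a y ^ (q - s)
  by_cases h0 : a y = 0
  · rw [h0, ENNReal.zero_rpow_of_pos (by linarith), mul_zero]; exact zero_le
  rw [ENNReal.rpow_sub _ _ h0 (hat y), div_eq_mul_inv, mul_comm (a y ^ q), ← mul_assoc]
  refine mul_le_mul' (le_trans (le_of_eq ?_) (geoB hs h0 (hat y))) le_rfl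
  refine tsum_congr fun n => ?_
  by_cases hy : a y ≤ ww n
  · rw [if_pos hy]; exact indicator_of_mem (show y ∈ {y | a y ≤ ww n} from hy) _
  · rw [if_neg hy]; exact indicator_of_notMem (show y ∉ {y | a y ≤ ww n} from hy) _

theorem layer {p : ℝ} (hp : 0 < p) {c : ℝ≥0∞} (hc0 : c ≠ 0) (hct : c ≠ ∞) (F : α → ℝ≥0∞) :
    ∫⁻ x, F x ^ p ∂μ ≤ (c * 2) ^ p * ∑' n : ℤ, ww n ^ p * μ {x | c * ww n < F x} := by
  set E : ℤ → Set α := fun n => toMeasurable μ {x | c * ww n < F x} with hE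
  have hEm : ∀ n, MeasurableSet (E n) := fun n => measurableSet_toMeasurable _ _
  have hEs : ∀ n, {x | c * ww n < F x} ⊆ E n := fun n => subset_toMeasurable _ _
  have e1 : ∑' n : ℤ, ww n ^ p * μ {x | c * ww n < F x} = ∑' n : ℤ, ww n ^ p * ∫⁻ y in E n, 1 ∂μ := by
    refine tsum_congr fun n => ?_
    rw [setLIntegral_const, one_mul, measure_toMeasurable]
  rw [e1, swap_sum (a := F) measurable_const _ _ hEm]
  have hm : Measurable fun y => (∑' n : ℤ, (E n).indicator (fun _ => ww n ^ p) y) * 1 := by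
    have : Measurable fun y => (∑' n : ℤ, (E n).indicator (fun _ => ww n ^ p) y) :=
      Measurable.tsum fun n => measurable_const.indicator (hEm n)
    exact this.mul measurable_const
  rw [← lintegral_const_mul _ hm]
  refine lintegral_mono fun x => ?_
  change F x ^ p ≤ (c * 2) ^ p * ((∑' n : ℤ, (E n).indicator (fun _ => ww n ^ p) x) * 1)
  rw [mul_one]
  have hc2 : (c * 2) ^ p ≠ 0 := by
    have : c * 2 ≠ ∞ := by finiteness
    simp [ENNReal.rpow_eq_zero_iff, hc0, this, hp.le]
  by_cases h0 : F x = 0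
  · rw [h0, ENNReal.zero_rpow_of_pos hp]; exact zero_le
  by_cases ht : F x = ∞
  · have : ∑' n : ℤ, (E n).indicator (fun _ => ww n ^ p) x = ∞ := by
      rw [eq_top_iff]
      calc ∞ = ∑' _ : ℕ, (1:ℝ≥0∞) := (ENNReal.tsum_const_eq_top_of_ne_zero one_ne_zero).symm
        _ ≤ ∑' k : ℕ, (E (k:ℤ)).indicator (fun _ => ww (k:ℤ) ^ p) x := by
            refine ENNReal.tsum_le_tsum fun k => ?_
            have hk : x ∈ E (k:ℤ) := hEs _ (by
              change c * ww (k:ℤ) < F x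
              rw [ht]
              exact lt_top_iff_ne_top.2 (ENNReal.mul_ne_top hct (ww_ne_top _)))
            rw [indicator_of_mem hk]
            have : (1:ℝ≥0∞) ≤ ww (k:ℤ) := by
              have h1 : ww 0 = 1 := by simp [ww]
              rw [← h1]; exact ww_mono (by omega)
            exact ENNReal.one_le_rpow this hp
        _ ≤ _ := ENNReal.tsum_comp_le_tsum_of_injective Nat.cast_injective
            (fun n : ℤ => (E n).indicator (fun _ => ww n ^ p) x)
    rw [this, ENNReal.mul_top hc2]; exact le_top
  · obtain ⟨m, h1, h2⟩ := ww_exists (a := F x / c) (by simp [ENNReal.div_eq_zero_iff, h0, hct]) (ENNReal.div_ne_top ht hc0)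
    have h1' : c * ww m < F x := by
      rw [ENNReal.lt_div_iff_mul_lt (Or.inl hc0) (Or.inl hct)] at h1
      rwa [mul_comm]
    have h2' : F x ≤ c * 2 * ww m := by
      rw [ENNReal.div_le_iff hc0 hct] at h2
      refine h2.trans (le_of_eq ?_)
      have : ww (m + 1) = ww m * 2 := by
        unfold ww
        push_cast
        rw [ENNReal.rpow_add _ _ (by norm_num) (by norm_num), ENNReal.rpow_one]
      rw [this]; ring
    calc F x ^ p ≤ (c * 2 * ww m) ^ p := ENNReal.rpow_le_rpow h2' hp.le
      _ = (c * 2) ^ p * ww m ^ p := ENNReal.mul_rpow_of_nonneg _ _ hp.le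
      _ = (c * 2) ^ p * (E m).indicator (fun _ => ww m ^ p) x := by
          rw [indicator_of_mem (hEs m h1')]
      _ ≤ _ := mul_le_mul' le_rfl (ENNReal.le_tsum (f := fun n : ℤ => (E n).indicator (fun _ => ww n ^ p) x) m)
end
end GM

namespace GM
section
variable {d : ℕ} {ρ q : ℝ}

theorem ww_pq {p q : ℝ} (n : ℤ) : ww n ^ p * (ww n ^ q)⁻¹ = (ww n ^ (q - p))⁻¹ := by
  rw [← ENNReal.rpow_neg, ← ENNReal.rpow_neg, ← ENNReal.rpow_add _ _ (ww_ne_zero n) (ww_ne_top n)]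
  congr 1; ring

theorem ww_p1 {p : ℝ} (n : ℤ) : ww n ^ p * (ww n)⁻¹ = ww n ^ (p - 1) := by
  rw [← ENNReal.rpow_neg_one, ← ENNReal.rpow_add _ _ (ww_ne_zero n) (ww_ne_top n)]
  congr 1

theorem sumI {p : ℝ} (hp : 1 < p) {f : Rd d → ℝ} (hf : Measurable f) :
    ∑' n : ℤ, ww n ^ (p - 1) * ∫⁻ y in {y | ww n < ‖f y‖ₑ}, ‖f y‖ₑ ≤ Cg (p - 1) * ∫⁻ y, ‖f y‖ₑ ^ p := by
  refine (swapA (s := p - 1) (by linarith) hf.enorm hf.enorm).trans (le_of_eq ?_)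
  congr 1
  refine lintegral_congr fun y => ?_
  have : ‖f y‖ₑ ^ (p - 1 + 1) = ‖f y‖ₑ ^ (p - 1) * ‖f y‖ₑ ^ (1:ℝ) :=
    ENNReal.rpow_add_of_nonneg _ _ (by linarith) (by norm_num)
  rw [ENNReal.rpow_one] at this
  rw [← this]; congr 1; ring

theorem strong_lt (hd : 0 < d) (S : CZO d) (hρ : 2 < ρ) (hq : 1 < q) (hb : S.VarBdd ρ q) {p : ℝ} (hp : 1 < p)
    (hpq : p < q) : ∃ C : ℝ≥0∞, C ≠ ∞ ∧ ∀ f : Rd d → ℝ, Measurable f → Good f →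
      ∫⁻ x, S.grandMax ρ f x ^ p ≤ C * ∫⁻ x, ‖f x‖ₑ ^ p := by
  obtain ⟨C, hC, H⟩ := level hd S hρ hq hb
  set c := ENNReal.ofReal C with hc
  have hc0 : c ≠ 0 := by
    have : 0 < C := by linarith
    simpa [hc] using this
  have hct : c ≠ ∞ := ENNReal.ofReal_ne_top
  have hg1 := Cg_ne_top (s := q - p) (by linarith)
  have hg2 := Cg_ne_top (s := p - 1) (by linarith)
  have hp0 : 0 ≤ p := by linarith
  refine ⟨(c * 2) ^ p * (c * (Cg (q - p) + Cg (p - 1))), ?_, ?_⟩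
  · have : (c * 2) ^ p ≠ ∞ := ENNReal.rpow_ne_top_of_nonneg hp0 (by finiteness)
    finiteness
  intro f hf hG
  refine (layer (p := p) (by linarith) hc0 hct _).trans ?_
  rw [mul_assoc, mul_assoc]
  refine mul_le_mul' le_rfl ?_
  set X : ℤ → ℝ≥0∞ := fun n => ∫⁻ y in {y | ‖f y‖ₑ ≤ ww n}, ‖f y‖ₑ ^ q with hX
  set I : ℤ → ℝ≥0∞ := fun n => ∫⁻ y in {y | ww n < ‖f y‖ₑ}, ‖f y‖ₑ with hI
  have key : ∀ n : ℤ, ww n ^ p * volume {x | c * ww n < S.grandMax ρ f x} ≤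
      c * ((ww n ^ (q - p))⁻¹ * X n + ww n ^ (p - 1) * I n) := by
    intro n
    have h := (H f hf hG ((2:ℝ) ^ (n:ℝ)) (by positivity)).1
    rw [ENNReal.ofReal_mul (by linarith), ww_ofReal, ← hc] at h
    calc _ ≤ ww n ^ p * (c * ((ww n ^ q)⁻¹ * X n + (ww n)⁻¹ * I n)) := mul_le_mul' le_rfl h
      _ = c * ((ww n ^ p * (ww n ^ q)⁻¹) * X n + (ww n ^ p * (ww n)⁻¹) * I n) := by ring
      _ = _ := by rw [ww_pq, ww_p1]
  refine (ENNReal.tsum_le_tsum key).trans ?_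
  rw [ENNReal.tsum_mul_left, ENNReal.tsum_add]
  refine mul_le_mul' le_rfl ?_
  rw [add_mul]
  refine add_le_add ?_ (sumI hp hf)
  have := swapB (μ := (volume : Measure (Rd d))) (s := q - p) (q := q) (by linarith) (by linarith) hf.enorm (fun y => enorm_ne_top)
  rw [show q - (q - p) = p by ring] at this
  exact this

theorem strong_eq (hd : 0 < d) (S : CZO d) (hρ : 2 < ρ) (hq : 1 < q) (hb : S.VarBdd ρ q) :
    ∃ C : ℝ≥0∞, C ≠ ∞ ∧ ∀ f : Rd d → ℝ, Measurable f → Good f →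
      ∫⁻ x, S.grandMax ρ f x ^ q ≤ C * ∫⁻ x, ‖f x‖ₑ ^ q := by
  obtain ⟨C, hC, H⟩ := level hd S hρ hq hb
  obtain ⟨A, hA, HV⟩ := hb
  set c := ENNReal.ofReal C with hc
  have hc0 : c ≠ 0 := by
    have : 0 < C := by linarith
    simpa [hc] using this
  have hct : c ≠ ∞ := ENNReal.ofReal_ne_top
  have hg1 := Cg_ne_top (s := q) (by linarith)
  have hg2 := Cg_ne_top (s := q - 1) (by linarith)
  have hp0 : 0 ≤ q := by linarith
  refine ⟨(c * 2) ^ q * (c * (Cg q * ENNReal.ofReal A + Cg (q - 1))), ?_, ?_⟩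
  · have : (c * 2) ^ q ≠ ∞ := ENNReal.rpow_ne_top_of_nonneg hp0 (by finiteness)
    finiteness
  intro f hf hG
  refine (layer (p := q) (by linarith) hc0 hct _).trans ?_
  rw [mul_assoc, mul_assoc]
  refine mul_le_mul' le_rfl ?_
  have hVm : Measurable (S.var ρ f) := var_meas S hd (by linarith) hG
  set X : ℤ → ℝ≥0∞ := fun n => ∫⁻ y in {y | ww n < S.var ρ f y}, 1 with hX
  set I : ℤ → ℝ≥0∞ := fun n => ∫⁻ y in {y | ww n < ‖f y‖ₑ}, ‖f y‖ₑ with hI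
  have key : ∀ n : ℤ, ww n ^ q * volume {x | c * ww n < S.grandMax ρ f x} ≤
      c * (ww n ^ q * X n + ww n ^ (q - 1) * I n) := by
    intro n
    have h := (H f hf hG ((2:ℝ) ^ (n:ℝ)) (by positivity)).2
    rw [ENNReal.ofReal_mul (by linarith), ww_ofReal, ← hc] at h
    have hXn : volume {x | ww n < S.var ρ f x} = X n := by
      simp only [hX]; rw [setLIntegral_const, one_mul]
    rw [hXn] at h
    calc _ ≤ ww n ^ q * (c * (X n + (ww n)⁻¹ * I n)) := mul_le_mul' le_rfl h
      _ = c * (ww n ^ q * X n + (ww n ^ q * (ww n)⁻¹) * I n) := by ring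
      _ = _ := by rw [ww_p1]
  refine (ENNReal.tsum_le_tsum key).trans ?_
  rw [ENNReal.tsum_mul_left, ENNReal.tsum_add]
  refine mul_le_mul' le_rfl ?_
  rw [add_mul]
  refine add_le_add ?_ (sumI hq hf)
  have h1 := swapA (μ := (volume : Measure (Rd d))) (s := q) (by linarith) hVm (h := fun _ => 1) measurable_const
  simp only [mul_one] at h1
  refine h1.trans ?_
  rw [mul_assoc]
  refine mul_le_mul' le_rfl ?_
  have h2 := HV f hf
  simp only [← Real.enorm_eq_ofReal_abs] at h2
  exact h2

theorem weak (hd : 0 < d) (S : CZO d) (hρ : 2 < ρ) (hq : 1 < q) (hb : S.VarBdd ρ q) :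
    ∃ C : ℝ≥0∞, C ≠ ∞ ∧ ∀ f : Rd d → ℝ, Measurable f → Good f → ∀ t : ℝ, 0 < t →
      ENNReal.ofReal t * volume {x | ENNReal.ofReal t < S.grandMax ρ f x} ≤ C * ∫⁻ x, ‖f x‖ₑ := by
  obtain ⟨C, hC, H⟩ := level hd S hρ hq hb
  have hC0 : 0 < C := by linarith
  set c := ENNReal.ofReal C with hc
  refine ⟨c * c * 2, by finiteness, ?_⟩
  intro f hf hG t ht
  have hlam : 0 < t / C := by positivity
  have h := (H f hf hG (t / C) hlam).1
  rw [show C * (t / C) = t by field_simp] at h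
  set la := ENNReal.ofReal (t / C) with hla
  have hla0 : la ≠ 0 := by simpa only [hla, ne_eq, ENNReal.ofReal_eq_zero, not_le] using hlam
  have hlat : la ≠ ∞ := ENNReal.ofReal_ne_top
  have htl : ENNReal.ofReal t = c * la := by
    rw [hc, hla, ← ENNReal.ofReal_mul hC0.le]; congr 1; field_simp
  have hX : ∫⁻ y in {y | ‖f y‖ₑ ≤ la}, ‖f y‖ₑ ^ q ≤ la ^ (q - 1) * ∫⁻ y, ‖f y‖ₑ := by
    calc _ ≤ ∫⁻ y in {y | ‖f y‖ₑ ≤ la}, la ^ (q - 1) * ‖f y‖ₑ := by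
          refine setLIntegral_mono' (measurableSet_le hf.enorm measurable_const) fun y hy => ?_
          have : ‖f y‖ₑ ^ (q - 1 + 1) = ‖f y‖ₑ ^ (q - 1) * ‖f y‖ₑ ^ (1:ℝ) :=
            ENNReal.rpow_add_of_nonneg _ _ (by linarith) (by norm_num)
          rw [ENNReal.rpow_one, sub_add_cancel] at this
          rw [this]
          exact mul_le_mul' (ENNReal.rpow_le_rpow hy (by linarith)) le_rfl
      _ = la ^ (q - 1) * ∫⁻ y in {y | ‖f y‖ₑ ≤ la}, ‖f y‖ₑ := lintegral_const_mul _ hf.enorm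
      _ ≤ _ := mul_le_mul' le_rfl (setLIntegral_le_lintegral _ _)
  have hlq : la * ((la ^ q)⁻¹ * la ^ (q - 1)) = 1 := by
    rw [← ENNReal.rpow_neg, ← ENNReal.rpow_add _ _ hla0 hlat]
    nth_rewrite 1 [← ENNReal.rpow_one la]
    rw [← ENNReal.rpow_add _ _ hla0 hlat]
    rw [show (1:ℝ) + (-q + (q - 1)) = 0 by ring, ENNReal.rpow_zero]
  set N := ∫⁻ y, ‖f y‖ₑ with hN
  calc _ ≤ ENNReal.ofReal t * (c * ((la ^ q)⁻¹ * (la ^ (q - 1) * N) + la⁻¹ * N)) := by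
        refine mul_le_mul' le_rfl (h.trans ?_)
        refine mul_le_mul' le_rfl (add_le_add (mul_le_mul' le_rfl hX) (mul_le_mul' le_rfl ?_))
        exact setLIntegral_le_lintegral _ _
    _ = c * c * (la * ((la ^ q)⁻¹ * la ^ (q - 1)) * N + la * la⁻¹ * N) := by rw [htl]; ring
    _ = c * c * 2 * N := by rw [hlq, ENNReal.mul_inv_cancel hla0 hlat]; ring

end
end GM

/-- The global grand maximal truncated operator `M_{V_ρ(T_*)}` is bounded
on `L^p(ℝ^d)` for every `p ∈ (1,q]` and is of weak type `(1,1)`. -/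
theorem grandMax_bounded
    (d : ℕ) (hd : 0 < d) (S : CZO d) (ρ q : ℝ) (hρ : 2 < ρ) (hq : 1 < q)
    (hbdd : S.VarBdd ρ q) :
    (∀ p : ℝ, 1 < p → p ≤ q → ∃ C : ℝ, 0 < C ∧ ∀ f : Rd d → ℝ, Measurable f →
        ∫⁻ x, S.grandMax ρ f x ^ p ∂volume ≤
          ENNReal.ofReal C * ∫⁻ x, ENNReal.ofReal |f x| ^ p ∂volume) ∧
    (∃ C : ℝ, 0 < C ∧ ∀ f : Rd d → ℝ, Measurable f → ∀ t : ℝ, 0 < t →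
        ENNReal.ofReal t * volume {x | ENNReal.ofReal t < S.grandMax ρ f x} ≤
          ENNReal.ofReal C * ∫⁻ x, ENNReal.ofReal |f x| ∂volume) := by
  have hcst : ∀ K : ℝ≥0∞, K ≠ ∞ → 0 < K.toReal + 1 ∧ K ≤ ENNReal.ofReal (K.toReal + 1) := by
    intro K hK
    refine ⟨by linarith [ENNReal.toReal_nonneg (a := K)], ?_⟩
    rw [ENNReal.ofReal_add ENNReal.toReal_nonneg zero_le_one, ENNReal.ofReal_toReal hK]
    exact le_self_add
  simp only [← Real.enorm_eq_ofReal_abs]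
  constructor
  · intro p hp hpq
    obtain ⟨K, hK, H⟩ : ∃ K : ℝ≥0∞, K ≠ ∞ ∧ ∀ f : Rd d → ℝ, Measurable f → GM.Good f →
        ∫⁻ x, S.grandMax ρ f x ^ p ≤ K * ∫⁻ x, ‖f x‖ₑ ^ p := by
      rcases hpq.lt_or_eq with h | h
      · exact GM.strong_lt hd S hρ hq hbdd hp h
      · subst h
        exact GM.strong_eq hd S hρ hq hbdd
    obtain ⟨hpos, hle⟩ := hcst K hK
    refine ⟨K.toReal + 1, hpos, fun f hf => ?_⟩
    by_cases hi : ∫⁻ x, ‖f x‖ₑ ^ p = ∞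
    · rw [hi, ENNReal.mul_top (by simpa only [ne_eq, ENNReal.ofReal_eq_zero, not_le] using hpos)]
      exact le_top
    · exact (H f hf (GM.good_of_Lp hd hp hf hi)).trans (mul_le_mul' hle le_rfl)
  · obtain ⟨K, hK, H⟩ := GM.weak hd S hρ hq hbdd
    obtain ⟨hpos, hle⟩ := hcst K hK
    refine ⟨K.toReal + 1, hpos, fun f hf t ht => ?_⟩
    by_cases hi : ∫⁻ x, ‖f x‖ₑ = ∞
    · rw [hi, ENNReal.mul_top (by simpa only [ne_eq, ENNReal.ofReal_eq_zero, not_le] using hpos)]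
      exact le_top
    · exact (H f hf (GM.good_of_L1 hf hi) t ht).trans (mul_le_mul' hle le_rfl)
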